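/- arXiv:2102.04994 — 2 statements merged into one kernel-verified Lean document; each statement's English description precedes it below -/
import Mathlib

section
/- For every graph H and every real ε > 0, there exists a real δ > 0 such that for every H-free graph G, there exists X ⊆ V(G) with |X| ≥ δ|G| such that one of G[X], Ḡ[X] has maximum degree at most εδ|G| (where Ḡ denotes the complement of G). -/
open SimpleGraph

/-- The independence (stable set) number of a graph: the clique number of the complement. -/
noncomputable def alphaNum {V : Type*} (G : SimpleGraph V) : ℕ := Gᶜ.cliqueNum

/-- The clique number of a graph. -/
noncomputable def omegaNum {V : Type*} (G : SimpleGraph V) : ℕ := G.cliqueNum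

/-- κ(G) = α(G)·ω(G). -/
noncomputable def kappaNum {V : Type*} (G : SimpleGraph V) : ℕ := alphaNum G * omegaNum G

/-!
Call a set sparse if it induces small maximum degree. Embedding the vertices of `H` greedily into
disjoint parts of a large set `S` can only fail because of two disjoint subsets of `S`, of linear
size, with very few edges or very few non-edges between them. In the first case, find in each of
the two subsets either a set that is almost sparse enough or a cosparse set of the desired size.
Two almost sparse sets, after deleting a few vertices of large cross degree, have a union that is
larger by a factor `3 / 2` while its maximum degree grows only by a factor `6 / 5`. So each step
gains a factor `5 / 4` in the ratio of degree to size, on the sparse or on the cosparse side, and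
after boundedly many steps one of the two requirements is trivial.
-/

section Degrees

open Finset

variable {V : Type*} {G : SimpleGraph V} {A B X Y : Finset V} {v : V} {d e : ℝ}

open Classical in
/-- The number of neighbours of `v` in `Y`. -/
noncomputable def degreeIn (G : SimpleGraph V) (Y : Finset V) (v : V) : ℕ :=
  #{w ∈ Y | G.Adj v w}

/-- `A` is `d`-sparse to `B`: every vertex of `A` has at most `d` neighbours in `B`. In particular
`IsSparseTo G X X d` says that `G[X]` has maximum degree at most `d`. -/
def IsSparseTo (G : SimpleGraph V) (A B : Finset V) (d : ℝ) : Prop :=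
  ∀ v ∈ A, (degreeIn G B v : ℝ) ≤ d

lemma degreeIn_eq_card_filter (G : SimpleGraph V) (Y : Finset V) (v : V)
    [DecidablePred (G.Adj v)] : degreeIn G Y v = #{w ∈ Y | G.Adj v w} := by
  unfold degreeIn
  congr!

lemma degreeIn_mono (h : X ⊆ Y) : degreeIn G X v ≤ degreeIn G Y v := by
  classical
  simp only [degreeIn_eq_card_filter]
  exact card_le_card (filter_subset_filter _ h)

lemma degreeIn_union_le [DecidableEq V] :
    degreeIn G (X ∪ Y) v ≤ degreeIn G X v + degreeIn G Y v := by
  classical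
  simp only [degreeIn_eq_card_filter, filter_union]
  exact card_union_le _ _

lemma degreeIn_lt_card (hv : v ∈ X) : degreeIn G X v < #X := by
  classical
  rw [degreeIn_eq_card_filter]
  exact card_lt_card (filter_ssubset.2 ⟨v, hv, G.irrefl⟩)

lemma sum_degreeIn_comm (G : SimpleGraph V) (A B : Finset V) :
    ∑ v ∈ A, degreeIn G B v = ∑ v ∈ B, degreeIn G A v := by
  classical
  simpa only [degreeIn_eq_card_filter, bipartiteAbove, bipartiteBelow, G.adj_comm]
    using sum_card_bipartiteAbove_eq_sum_card_bipartiteBelow (s := A) (t := B) G.Adj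

lemma card_le_two_mul_card_filter_le {ι : Type*} {s : Finset ι} {f : ι → ℝ}
    (hf : ∀ i ∈ s, 0 ≤ f i) (hd : 0 ≤ d) (hsum : ∑ i ∈ s, f i ≤ #s * d) :
    (#s : ℝ) ≤ 2 * #{i ∈ s | f i ≤ 2 * d} := by
  by_contra! hlt
  have hsplit : (#{i ∈ s | f i ≤ 2 * d} : ℝ) + #{i ∈ s | ¬ f i ≤ 2 * d} = #s :=
    mod_cast card_filter_add_card_filter_not _
  have hne : {i ∈ s | ¬ f i ≤ 2 * d}.Nonempty :=
    card_pos.1 (mod_cast (by linarith : (0 : ℝ) < #{i ∈ s | ¬ f i ≤ 2 * d}))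
  have hlarge : (#{i ∈ s | ¬ f i ≤ 2 * d} : ℝ) * (2 * d) < ∑ i ∈ s, f i :=
    calc (#{i ∈ s | ¬ f i ≤ 2 * d} : ℝ) * (2 * d)
        = ∑ i ∈ s with ¬ f i ≤ 2 * d, 2 * d := by rw [sum_const, nsmul_eq_mul]
      _ < ∑ i ∈ s with ¬ f i ≤ 2 * d, f i :=
        sum_lt_sum_of_nonempty hne fun i hi => not_le.1 (mem_filter.1 hi).2
      _ ≤ ∑ i ∈ s, f i :=
        sum_le_sum_of_subset_of_nonneg (filter_subset _ _) fun i hi _ => hf i hi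
  nlinarith

namespace IsSparseTo

lemma mono (h : IsSparseTo G A B d) (hde : d ≤ e) : IsSparseTo G A B e := fun v hv =>
  (h v hv).trans hde

lemma subset (h : IsSparseTo G X Y d) (hA : A ⊆ X) (hB : B ⊆ Y) : IsSparseTo G A B d :=
  fun v hv => (Nat.cast_le.2 (degreeIn_mono hB)).trans (h v (hA hv))

lemma union_left [DecidableEq V] (hX : IsSparseTo G X A d) (hY : IsSparseTo G Y A d) :
    IsSparseTo G (X ∪ Y) A d := fun v hv =>
  (mem_union.1 hv).elim (hX v) (hY v)

lemma union_right [DecidableEq V] (hX : IsSparseTo G A X d) (hY : IsSparseTo G A Y e) :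
    IsSparseTo G A (X ∪ Y) (d + e) := fun v hv =>
  calc (degreeIn G (X ∪ Y) v : ℝ) ≤ degreeIn G X v + degreeIn G Y v :=
        mod_cast degreeIn_union_le
    _ ≤ d + e := add_le_add (hX v hv) (hY v hv)

lemma exists_half_isSparseTo {η : ℝ} (hη : 0 ≤ η) (h : IsSparseTo G A B (η * #B)) :
    ∃ B' ⊆ B, (#B : ℝ) ≤ 2 * #B' ∧ IsSparseTo G B' A (2 * η * #A) := by
  have hsum : ∑ v ∈ B, (degreeIn G A v : ℝ) ≤ #B * (η * #A) :=
    calc ∑ v ∈ B, (degreeIn G A v : ℝ) = ∑ v ∈ A, (degreeIn G B v : ℝ) :=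
          mod_cast sum_degreeIn_comm G B A
      _ ≤ #A • (η * #B) := sum_le_card_nsmul _ _ _ h
      _ = #B * (η * #A) := by rw [nsmul_eq_mul]; ring
  refine ⟨{v ∈ B | (degreeIn G A v : ℝ) ≤ 2 * (η * #A)}, filter_subset _ _,
    card_le_two_mul_card_filter_le (fun _ _ => Nat.cast_nonneg _) (by positivity) hsum,
    fun v hv => ?_⟩
  rw [mul_assoc]
  exact (mem_filter.1 hv).2

end IsSparseTo

lemma exists_subset_card_ge_degreeIn_lt (G : SimpleGraph V) {S : Finset V} {t : ℝ}
    (ht : t ≤ #S) : ∃ X ⊆ S, t ≤ #X ∧ ∀ v ∈ X, (degreeIn G X v : ℝ) < t := by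
  obtain ⟨X, hXS, hX⟩ := exists_subset_card_eq (Nat.ceil_le.2 ht)
  exact ⟨X, hXS, hX ▸ Nat.le_ceil t, fun v hv => Nat.lt_ceil.1 (hX ▸ degreeIn_lt_card hv)⟩

end Degrees

section GreedyEmbedding

open Finset

variable {V W ι : Type*}

lemma exists_mem_forall_lt_degreeIn {Γ : ι → SimpleGraph V} {A : Finset V} {U : ι → Finset V}
    {d : ι → ℝ} {m : ℝ} (R : Finset ι) (hA : #R * m < #A)
    (hΓ : ∀ j ∈ R, ∀ A' ⊆ A, m ≤ #A' → ¬ IsSparseTo (Γ j) A' (U j) (d j)) :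
    ∃ v ∈ A, ∀ j ∈ R, d j < degreeIn (Γ j) (U j) v := by
  classical
  let bad (j : ι) : Finset V := {v ∈ A | (degreeIn (Γ j) (U j) v : ℝ) ≤ d j}
  have hbad : ∀ j ∈ R, (#(bad j) : ℝ) ≤ m := fun j hj => by
    by_contra! hlt
    exact hΓ j hj (bad j) (filter_subset _ _) hlt.le fun v hv => (mem_filter.1 hv).2
  have hcard : (#(R.biUnion bad) : ℝ) < #A :=
    calc (#(R.biUnion bad) : ℝ) ≤ ∑ j ∈ R, (#(bad j) : ℝ) := mod_cast card_biUnion_le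
      _ ≤ #R • m := sum_le_card_nsmul _ _ _ hbad
      _ < #A := by rwa [nsmul_eq_mul]
  obtain ⟨v, hvA, hv⟩ := exists_mem_notMem_of_card_lt_card (Nat.cast_lt.1 hcard)
  refine ⟨v, hvA, fun j hj => ?_⟩
  by_contra! hle
  exact hv (mem_biUnion.2 ⟨j, hj, mem_filter.2 ⟨hvA, hle⟩⟩)

lemma exists_transversal_of_forall_not_isSparseTo [Nonempty V] {Γ : Sym2 W → SimpleGraph V}
    {η m : ℝ} (hη : 0 ≤ η) (hη1 : η ≤ 1) (hm : 0 < m) (R : Finset W) (U : W → Finset V)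
    (hU : ∀ i ∈ R, #R * m ≤ η ^ #R * #(U i))
    (hΓ : ∀ i ∈ R, ∀ j ∈ R, i ≠ j → ∀ A ⊆ U i, ∀ B ⊆ U j, m ≤ #A → m ≤ #B →
      ¬ IsSparseTo (Γ s(i, j)) A B (η * #B)) :
    ∃ f : W → V, (∀ i ∈ R, f i ∈ U i) ∧
      ∀ i ∈ R, ∀ j ∈ R, i ≠ j → (Γ s(i, j)).Adj (f i) (f j) := by
  classical
  induction R using Finset.induction_on generalizing U with
  | empty => exact ⟨fun _ => Classical.arbitrary V, by simp, by simp⟩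
  | insert i R hi ih =>
    simp only [card_insert_of_notMem hi, Nat.cast_succ] at hU
    simp only [forall_mem_insert] at hU hΓ
    have hne : ∀ j ∈ R, i ≠ j := fun j hj h => hi (h ▸ hj)
    have hlarge {Y : Finset V} (hY : (#R + 1) * m ≤ η ^ (#R + 1) * #Y) : #R * m + m ≤ #Y :=
      calc #R * m + m = (#R + 1) * m := by ring
        _ ≤ η ^ (#R + 1) * #Y := hY
        _ ≤ #Y := mul_le_of_le_one_left (Nat.cast_nonneg _) (pow_le_one₀ hη hη1)
    have hRm : 0 ≤ #R * m := by positivity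
    obtain ⟨v, hvU, hv⟩ : ∃ v ∈ U i, ∀ j ∈ R, η * #(U j) < degreeIn (Γ s(i, j)) (U j) v :=
      exists_mem_forall_lt_degreeIn R (by linarith [hlarge hU.1]) fun j hj A hA hmA =>
        hΓ.1.2 j hj (hne j hj) A hA (U j) Subset.rfl hmA (by linarith [hlarge (hU.2 j hj)])
    let U' (j : W) : Finset V := {w ∈ U j | (Γ s(i, j)).Adj v w}
    have hU'U (j : W) : U' j ⊆ U j := filter_subset _ _
    have hU' : ∀ j ∈ R, #R * m ≤ η ^ #R * #(U' j) := fun j hj =>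
      calc #R * m ≤ (#R + 1) * m := by linarith
        _ ≤ η ^ (#R + 1) * #(U j) := hU.2 j hj
        _ = η ^ #R * (η * #(U j)) := by ring
        _ ≤ η ^ #R * #(U' j) := by
          have := (hv j hj).le
          rw [degreeIn_eq_card_filter] at this
          gcongr
    obtain ⟨f, hfU', hf⟩ := ih U' hU' fun j hj k hk hjk A hA B hB =>
      (hΓ.2 j hj).2 k hk hjk A (hA.trans (hU'U j)) B (hB.trans (hU'U k))
    have hvf : ∀ j ∈ R, (Γ s(i, j)).Adj v (f j) := fun j hj => (mem_filter.1 (hfU' j hj)).2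
    have hupdate : ∀ j ∈ R, Function.update f i v j = f j := fun j hj =>
      Function.update_of_ne (hne j hj).symm _ _
    refine ⟨Function.update f i v, ?_, ?_⟩
    · simp +contextual only [forall_mem_insert, Function.update_self, hupdate]
      exact ⟨hvU, fun j hj => hU'U j (hfU' j hj)⟩
    · simp +contextual only [forall_mem_insert, Function.update_self, hupdate]
      exact ⟨⟨fun h => absurd rfl h, fun j hj _ => hvf j hj⟩, fun j hj =>
        ⟨fun _ => Sym2.eq_swap ▸ (hvf j hj).symm, fun k hk => hf j hj k hk⟩⟩

lemma exists_pairwise_disjoint_subsets_card_eq [Fintype ι] {S : Finset V} {q : ℕ}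
    (h : Fintype.card ι * q ≤ #S) :
    ∃ U : ι → Finset V, (∀ i, U i ⊆ S) ∧ (∀ i, #(U i) = q) ∧
      ∀ i j, i ≠ j → Disjoint (U i) (U j) := by
  obtain ⟨g⟩ : Nonempty (ι × Fin q ↪ S) :=
    Function.Embedding.nonempty_of_card_le (by simpa using h)
  refine ⟨fun i => univ.map ((Function.Embedding.sectR i (Fin q)).trans
    (g.trans (Function.Embedding.subtype _))), fun i v hv => ?_, by simp, fun i j hij => ?_⟩
  · obtain ⟨x, -, rfl⟩ := mem_map.1 hv
    exact (g (i, x)).2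
  · simp only [Finset.disjoint_left, mem_map]
    rintro v ⟨x, -, rfl⟩ ⟨y, -, hxy⟩
    exact hij (Prod.ext_iff.1 (g.injective (Subtype.ext hxy))).1.symm

/-- Every set of at least `κ * t` vertices contains disjoint sets `A`, `B` of size at least `t`
such that `A` is `η * |B|`-sparse to `B`, in `G` or in its complement. The bound `1 ≤ t` excludes
sets too small to contain two nonempty disjoint ones. -/
def HasSparsePairs (G : SimpleGraph V) (η κ : ℝ) : Prop :=
  ∀ (S : Finset V) (t : ℝ), 1 ≤ t → κ * t ≤ #S → ∃ A ⊆ S, ∃ B ⊆ S, Disjoint A B ∧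
    t ≤ #A ∧ t ≤ #B ∧ (IsSparseTo G A B (η * #B) ∨ IsSparseTo Gᶜ A B (η * #B))

open Classical in
lemma nonempty_embedding_of_adj {H : SimpleGraph W} {G : SimpleGraph V} {f : W → V}
    (hf : ∀ i j, i ≠ j → (if s(i, j) ∈ H.edgeSet then G else Gᶜ).Adj (f i) (f j)) :
    Nonempty (H ↪g G) := by
  refine ⟨⟨⟨f, fun i j hij => ?_⟩, fun {i j} => ?_⟩⟩
  · by_contra hne
    exact (hf i j hne).ne hij
  · obtain rfl | hne := eq_or_ne i j
    · simp
    · have hadj := hf i j hne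
      simp only [mem_edgeSet] at hadj
      split_ifs at hadj with hH
      · exact iff_of_true hadj hH
      · exact iff_of_false ((G.compl_adj _ _).1 hadj).2 hH

lemma hasSparsePairs_of_free [Fintype W] {H : SimpleGraph W} {G : SimpleGraph V}
    (hfree : ¬ Nonempty (H ↪g G)) {η : ℝ} (hη : 0 < η) (hη1 : η ≤ 1) :
    HasSparsePairs G η ((Fintype.card W + 1) ^ 2 / η ^ Fintype.card W) := by
  classical
  intro S t ht hS
  by_contra! hno
  set n := Fintype.card W
  have hpow : 0 < η ^ n := by positivity
  have hpow1 : η ^ n ≤ 1 := pow_le_one₀ hη.le hη1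
  have hS' : ((n : ℝ) + 1) ^ 2 * t ≤ η ^ n * #S := by
    rwa [div_mul_eq_mul_div, div_le_iff₀' hpow] at hS
  set q := ⌈n * t / η ^ n⌉₊
  have hnq : n * q ≤ #S := by
    have hq : η ^ n * q ≤ n * t + η ^ n :=
      calc η ^ n * q ≤ η ^ n * (n * t / η ^ n + 1) := by
            gcongr
            exact (Nat.ceil_lt_add_one (by positivity)).le
        _ = n * t + η ^ n := by field_simp
    have : η ^ n * (n * q) ≤ η ^ n * #S := by nlinarith [Nat.cast_nonneg (α := ℝ) n]
    exact_mod_cast le_of_mul_le_mul_left this hpow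
  obtain ⟨U, hUS, hUq, hU⟩ := exists_pairwise_disjoint_subsets_card_eq (ι := W) hnq
  have hSpos : (0 : ℝ) < #S := by
    by_contra! hle
    nlinarith [Nat.cast_nonneg (α := ℝ) n]
  obtain ⟨s, -⟩ := card_pos.1 (Nat.cast_pos.1 hSpos)
  have : Nonempty V := ⟨s⟩
  obtain ⟨f, -, hf⟩ := exists_transversal_of_forall_not_isSparseTo
    (Γ := fun e => if e ∈ H.edgeSet then G else Gᶜ) hη.le hη1 (by linarith : 0 < t) univ U
    (fun i _ => by
      rw [hUq, card_univ, ← div_le_iff₀' hpow]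
      exact Nat.le_ceil _)
    (fun i _ j _ hij A hA B hB htA htB hAB => by
      obtain ⟨hG, hGc⟩ := hno A (hA.trans (hUS i)) B (hB.trans (hUS j))
        ((hU i j hij).mono hA hB) htA htB
      split_ifs at hAB
      exacts [hG hAB, hGc hAB])
  exact hfree (nonempty_embedding_of_adj fun i j => hf i (mem_univ i) j (mem_univ j))

end GreedyEmbedding

section Iteration

open Finset

variable {V : Type*} {G : SimpleGraph V} {A B : Finset V} {η κ M N p a q b : ℝ}

/-- Every set of at least `N` vertices contains a set of size at least `p` inducing maximum degree
at most `a` in `G`, or a set of size at least `q` inducing maximum degree at most `b` in the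
complement. -/
def SparseDichotomy (G : SimpleGraph V) (N p a q b : ℝ) : Prop :=
  ∀ S : Finset V, N ≤ #S → ∃ X ⊆ S,
    (p ≤ #X ∧ IsSparseTo G X X a) ∨ (q ≤ #X ∧ IsSparseTo Gᶜ X X b)

lemma SparseDichotomy.compl (h : SparseDichotomy G N p a q b) :
    SparseDichotomy Gᶜ N q b p a := fun S hS => by
  simpa only [compl_compl, or_comm] using h S hS

lemma sparseDichotomy_of_le (hpN : p ≤ N) (hpa : p ≤ a) : SparseDichotomy G N p a q b :=
  fun _ hS =>
    let ⟨X, hXS, hpX, hX⟩ := exists_subset_card_ge_degreeIn_lt G (hpN.trans hS)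
    ⟨X, hXS, .inl ⟨hpX, fun v hv => (hX v hv).le.trans hpa⟩⟩

lemma IsSparseTo.exists_subset_union [DecidableEq V] (hAB : Disjoint A B)
    (h : IsSparseTo G A B (η * #B)) (hη : 0 ≤ η) (hp : 0 ≤ p) (hηa : 24 * (η * p) ≤ a)
    (hA : M ≤ #A) (hB : 2 * M ≤ #B)
    (hfind : ∀ T ⊆ A ∪ B, M ≤ #T → ∃ X ⊆ T, 2 / 3 * p ≤ #X ∧ IsSparseTo G X X (5 / 6 * a)) :
    ∃ X ⊆ A ∪ B, p ≤ #X ∧ IsSparseTo G X X a := by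
  have hηp : 0 ≤ η * p := by positivity
  obtain ⟨X, hXA, hXcard, hX⟩ := hfind A subset_union_left hA
  obtain hpX | hXp := le_or_gt p #X
  · exact ⟨X, hXA.trans subset_union_left, hpX, hX.mono (by linarith)⟩
  obtain ⟨B', hB'B, hB', hB'X⟩ := (h.subset hXA subset_rfl).exists_half_isSparseTo hη
  obtain ⟨Y, hYB', hYcard, hY⟩ := hfind B' (hB'B.trans subset_union_right) (by linarith)
  have hYB : Y ⊆ B := hYB'.trans hB'B
  obtain hpY | hYp := le_or_gt p #Y
  · exact ⟨Y, hYB.trans subset_union_right, hpY, hY.mono (by linarith)⟩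
  have hYX : IsSparseTo G Y X (2 * η * #X) := hB'X.subset hYB' subset_rfl
  obtain ⟨X', hX'X, hX'card, hX'Y⟩ := hYX.exists_half_isSparseTo (by positivity)
  have hηX : η * #X ≤ η * p := by gcongr
  have hηY : η * #Y ≤ η * p := by gcongr
  have hX'deg : IsSparseTo G X' (X' ∪ Y) a :=
    ((hX.subset hX'X hX'X).union_right hX'Y).mono (by linarith)
  have hYdeg : IsSparseTo G Y (X' ∪ Y) a :=
    ((hYX.subset subset_rfl hX'X).union_right hY).mono (by linarith)
  refine ⟨X' ∪ Y, union_subset_union (hX'X.trans hXA) hYB, ?_, hX'deg.union_left hYdeg⟩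
  rw [card_union_of_disjoint (hAB.mono (hX'X.trans hXA) hYB), Nat.cast_add]
  linarith

lemma SparseDichotomy.exists_subset_union [DecidableEq V]
    (hG : SparseDichotomy G M (2 / 3 * p) (5 / 6 * a) q b) (hAB : Disjoint A B)
    (h : IsSparseTo G A B (η * #B)) (hη : 0 ≤ η) (hp : 0 ≤ p) (hηa : 24 * (η * p) ≤ a)
    (hA : M ≤ #A) (hB : 2 * M ≤ #B) :
    ∃ X ⊆ A ∪ B, (p ≤ #X ∧ IsSparseTo G X X a) ∨ (q ≤ #X ∧ IsSparseTo Gᶜ X X b) := by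
  by_cases hco : ∃ X ⊆ A ∪ B, q ≤ #X ∧ IsSparseTo Gᶜ X X b
  · obtain ⟨X, hXAB, hX⟩ := hco
    exact ⟨X, hXAB, .inr hX⟩
  · obtain ⟨X, hXAB, hX⟩ := h.exists_subset_union hAB hη hp hηa hA hB fun T hT hMT => by
      obtain ⟨X, hXT, hX | hX⟩ := hG T hMT
      exacts [⟨X, hXT, hX⟩, absurd ⟨X, hXT.trans hT, hX⟩ hco]
    exact ⟨X, hXAB, .inl hX⟩

lemma HasSparsePairs.sparseDichotomy_step (hG : HasSparsePairs G η κ) (hη : 0 ≤ η) (hM : 1 ≤ M)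
    (hp : 0 ≤ p) (hq : 0 ≤ q) (hηa : 24 * (η * p) ≤ a) (hηb : 24 * (η * q) ≤ b)
    (hsparse : SparseDichotomy G M (2 / 3 * p) (5 / 6 * a) q b)
    (hcosparse : SparseDichotomy G M p a (2 / 3 * q) (5 / 6 * b)) :
    SparseDichotomy G (2 * κ * M) p a q b := by
  classical
  intro S hS
  obtain ⟨A, hAS, B, hBS, hAB, hA, hB, h | h⟩ := hG S (2 * M) (by linarith) (by linarith)
  · obtain ⟨X, hX, hX'⟩ :=
      hsparse.exists_subset_union hAB h hη hp hηa (by linarith) (by linarith)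
    exact ⟨X, hX.trans (union_subset hAS hBS), hX'⟩
  · obtain ⟨X, hX, hX'⟩ :=
      hcosparse.compl.exists_subset_union hAB h hη hq hηb (by linarith) (by linarith)
    rw [compl_compl] at hX'
    exact ⟨X, hX.trans (union_subset hAS hBS), hX'.symm⟩

lemma HasSparsePairs.sparseDichotomy (hG : HasSparsePairs G η κ) (hη : 0 ≤ η) (hκ : 1 ≤ κ)
    (hN : 1 ≤ N) (n : ℕ) (hp : 0 ≤ p) (hq : 0 ≤ q) (hpN : p ≤ N) (hqN : q ≤ N)
    (hηa : 24 * (η * p) ≤ a) (hηb : 24 * (η * q) ≤ b) (hpq : p * q ≤ a * b * (5 / 4) ^ n) :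
    SparseDichotomy G ((2 * κ) ^ n * N) p a q b := by
  have ha : 0 ≤ a := (by positivity : 0 ≤ 24 * (η * p)).trans hηa
  have hb : 0 ≤ b := (by positivity : 0 ≤ 24 * (η * q)).trans hηb
  induction n generalizing p a q b with
  | zero =>
    rw [pow_zero, mul_one] at hpq
    rw [pow_zero, one_mul]
    obtain hpa | hap := le_or_gt p a
    · exact sparseDichotomy_of_le hpN hpa
    · have hqb : q ≤ b := by
        by_contra! hbq
        exact (mul_lt_mul'' hap hbq ha hb).not_ge hpq
      simpa only [compl_compl] using
        (sparseDichotomy_of_le (G := Gᶜ) (q := p) (b := a) hqN hqb).compl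
  | succ n ih =>
    rw [pow_succ'] at hpq
    rw [pow_succ', mul_assoc]
    have hM : 1 ≤ (2 * κ) ^ n * N :=
      one_le_mul_of_one_le_of_one_le (one_le_pow₀ (by linarith)) hN
    refine hG.sparseDichotomy_step hη hM hp hq hηa hηb
      (ih (by positivity) hq (by linarith) hqN ?_ hηb ?_ (by positivity) hb)
      (ih hp (by positivity) hpN (by linarith) hηa ?_ ?_ ha (by positivity)) <;> linarith

lemma exists_sparseDichotomy_of_free.{u} {W : Type*} [Finite W] (H : SimpleGraph W) {ε : ℝ}
    (hε : 0 < ε) : ∃ c : ℝ, 1 ≤ c ∧ ∀ {V : Type u} {G : SimpleGraph V}, ¬ Nonempty (H ↪g G) →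
      ∀ t : ℝ, 1 ≤ t → SparseDichotomy G (c * t) t (ε * t) t (ε * t) := by
  have := Fintype.ofFinite W
  obtain ⟨n, hn⟩ := pow_unbounded_of_one_lt (1 / ε ^ 2) (by norm_num : (1 : ℝ) < 5 / 4)
  obtain ⟨η, hη, hη1, hηε⟩ : ∃ η : ℝ, 0 < η ∧ η ≤ 1 ∧ 24 * η ≤ ε :=
    ⟨min 1 (ε / 24), by positivity, min_le_left _ _, by linarith [min_le_right 1 (ε / 24)]⟩
  set κ : ℝ := (Fintype.card W + 1) ^ 2 / η ^ Fintype.card W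
  have hκ : 1 ≤ κ :=
    (one_le_div (by positivity)).2 ((pow_le_one₀ hη.le hη1).trans (one_le_pow₀ (by simp)))
  refine ⟨(2 * κ) ^ n, one_le_pow₀ (by linarith), fun hfree t ht => ?_⟩
  have ht0 : 0 ≤ t := by linarith
  have hηt : 24 * (η * t) ≤ ε * t := by nlinarith
  have hpow : 1 ≤ ε ^ 2 * (5 / 4) ^ n := ((div_lt_iff₀' (by positivity)).1 hn).le
  have htt : t * t ≤ ε * t * (ε * t) * (5 / 4) ^ n := by nlinarith [mul_nonneg ht0 ht0]
  exact (hasSparsePairs_of_free hfree hη hη1).sparseDichotomy hη.le hκ ht n ht0 ht0 le_rfl le_rfl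
    hηt hηt htt

end Iteration

/-- Rödl's theorem (degree form): for every graph `H` and every `ε > 0` there exists
`δ > 0` such that every `H`-free graph `G` has a subset `X` with `|X| ≥ δ|G|` such that one
of `G[X]`, `Ḡ[X]` has maximum degree at most `εδ|G|`. -/
theorem stmt_9 {W : Type*} [Fintype W] (H : SimpleGraph W) (ε : ℝ) (hε : 0 < ε) :
    ∃ δ : ℝ, 0 < δ ∧
      ∀ (V : Type) [Fintype V] [DecidableEq V] (G : SimpleGraph V) [DecidableRel G.Adj],
        ¬ Nonempty (H ↪g G) →
        ∃ X : Finset V, δ * (Fintype.card V : ℝ) ≤ (X.card : ℝ) ∧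
          ((∀ v ∈ X, ((X.filter (G.Adj v)).card : ℝ) ≤ ε * δ * (Fintype.card V : ℝ)) ∨
           (∀ v ∈ X, ((X.filter (Gᶜ.Adj v)).card : ℝ) ≤ ε * δ * (Fintype.card V : ℝ))) := by
  obtain ⟨c, hc, hdich⟩ := exists_sparseDichotomy_of_free H hε
  refine ⟨c⁻¹, by positivity, fun V _ _ G _ hfree => ?_⟩
  simp only [← degreeIn_eq_card_filter, mul_assoc]
  set t : ℝ := c⁻¹ * Fintype.card V
  obtain ht1 | ht1 := le_total t 1
  · have htV : t ≤ (Finset.univ : Finset V).card :=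
      mul_le_of_le_one_left (Nat.cast_nonneg _) (inv_le_one_of_one_le₀ hc)
    obtain ⟨X, -, htX, hX⟩ := exists_subset_card_ge_degreeIn_lt G htV
    refine ⟨X, htX, .inl fun v hv => ?_⟩
    have hdeg : degreeIn G X v = 0 := Nat.cast_lt_one.1 ((hX v hv).trans_le ht1)
    rw [hdeg, Nat.cast_zero]
    positivity
  · have hct : c * t ≤ (Finset.univ : Finset V).card := (mul_inv_cancel_left₀ (by positivity) _).le
    obtain ⟨X, -, ⟨htX, hX⟩ | ⟨htX, hX⟩⟩ := hdich hfree t ht1 Finset.univ hct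
    exacts [⟨X, htX, .inl hX⟩, ⟨X, htX, .inr hX⟩]
end

section
/- Let H be a forest, let H₁ be the star-expansion of H, and let H₂ be the star-expansion of the complement H̄ of H. Then there exists a real number τ > 0 such that every graph G that is H₁-free, H₂-free, H̄₁-free and H̄₂-free satisfies max(α(G), ω(G)) ≥ |G|^τ; that is, {H₁, H₂, H̄₁, H̄₂} has the Erdős–Hajnal property. -/
open SimpleGraph

/-- The star-expansion of `H`: for each vertex `b` of `H`, add a new vertex `a_b` adjacent
to `b` only, and add one further vertex `v` adjacent to all of the `a_b` and nothing else. -/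
def starExpansion {W : Type*} (H : SimpleGraph W) : SimpleGraph (W ⊕ W ⊕ Unit) :=
  SimpleGraph.fromRel (fun x y =>
    match x, y with
    | Sum.inl b, Sum.inl b' => H.Adj b b'
    | Sum.inl b, Sum.inr (Sum.inl a) => b = a
    | Sum.inr (Sum.inl _), Sum.inr (Sum.inr _) => True
    | _, _ => False)

/-!
Write `κ` for the product of the stability number and the clique number. If `max(α, ω)` is smaller
than a small power of `|V|`, then a set `X` minimising `κ(X) / |X| ^ σ` satisfies
`κ(X) < |X| ^ σ`, and each of its subsets of linear size has almost the same stability and clique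
numbers as `X`. By Rödl's theorem such a set contains a set of linear size, again minimising, that
is sparse in `G` or in `Gᶜ`.

Inside a sparse minimising set there is a wide star-comb: a vertex `v`, a stable set of neighbours
of `v` (the teeth), and for each tooth a private block of its neighbours, all blocks having the same
size and containing no neighbour of `v`. Otherwise a stable set larger than the stability number
could be assembled from the stable sets of few linear pieces. Take a star-comb of `G` or of `Gᶜ`
with as many teeth as possible, pass to a minimising subset of the union of its blocks, colour each
vertex by its block, and repeat. As no wider star-comb exists, every colour class stays small
compared with the degrees, which keeps the iteration going.

Going back through the star-combs, each of them contributes a leaf to a rainbow copy of a subforest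
of `H` in `G` or in `Gᶜ`, where a copy is rainbow if no colouring found earlier gives two of its
vertices the same colour. Eventually one of the two copies is all of `H`, and together with the
teeth and the centre of the first star-comb, which is a star-comb of `G` or of `Gᶜ`, it forms one of
the four forbidden graphs.
-/

section General

lemma exists_min_ratio {V : Type*} (D : Finset V → ℝ) (p : ℝ) {U : Finset V} (hU : U.Nonempty) :
    ∃ X ⊆ U, X.Nonempty ∧
      ∀ Z ⊆ U, Z.Nonempty → (Z.card : ℝ) ^ p * D X ≤ (X.card : ℝ) ^ p * D Z := by
  obtain ⟨X, hX, hmin⟩ := Finset.exists_min_image (U.powerset.filter Finset.Nonempty)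
    (fun Z => D Z / (Z.card : ℝ) ^ p) ⟨U, by simp [hU]⟩
  simp only [Finset.mem_filter, Finset.mem_powerset, and_imp] at hX hmin
  refine ⟨X, hX.1, hX.2, fun Z hZ hZ0 => ?_⟩
  have hXp : (0 : ℝ) < (X.card : ℝ) ^ p :=
    Real.rpow_pos_of_pos (by exact_mod_cast hX.2.card_pos) _
  have hZp : (0 : ℝ) < (Z.card : ℝ) ^ p := Real.rpow_pos_of_pos (by exact_mod_cast hZ0.card_pos) _
  have h := hmin Z hZ hZ0
  rw [div_le_div_iff₀ hXp hZp] at h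
  linarith

lemma mul_div_rpow_le_of_rpow_mul_le {x u y σ σ' r : ℝ} (hu : 0 < u) (hy : 0 < y) (hux : u ≤ x)
    (hσ : σ < σ') (hr : σ ≤ r * (σ' - σ)) (h : y ^ σ * u ^ σ' ≤ x ^ σ * y ^ σ') :
    u * (u / x) ^ r ≤ y := by
  have hx : 0 < x := hu.trans_le hux
  have hpow : ((u / x) ^ r) ^ (σ' - σ) ≤ (y / u) ^ (σ' - σ) := by
    calc ((u / x) ^ r) ^ (σ' - σ) = (u / x) ^ (r * (σ' - σ)) :=
          (Real.rpow_mul (by positivity) _ _).symm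
      _ ≤ (u / x) ^ σ :=
          Real.rpow_le_rpow_of_exponent_ge (by positivity) ((div_le_one hx).2 hux) hr
      _ ≤ (y / u) ^ (σ' - σ) := by
          rw [Real.div_rpow hu.le hx.le, Real.div_rpow hy.le hu.le, Real.rpow_sub hy,
            Real.rpow_sub hu, div_div_div_eq, div_le_div_iff₀ (by positivity) (by positivity)]
          nlinarith [Real.rpow_pos_of_pos hu σ]
  have hle := (Real.rpow_le_rpow_iff (by positivity) (by positivity) (sub_pos.2 hσ)).1 hpow
  rw [le_div_iff₀ hu] at hle
  linarith

lemma exists_card_le_card_mul_card_fiber {α β : Type*} [DecidableEq β] {s : Finset α}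
    {t : Finset β} {f : α → β} (ht : t.Nonempty) (hf : ∀ a ∈ s, f a ∈ t) :
    ∃ y ∈ t, s.card ≤ t.card * (s.filter (f · = y)).card := by
  have ht0 : (0 : ℚ) < t.card := by exact_mod_cast ht.card_pos
  obtain ⟨y, hy, h⟩ := Finset.exists_le_card_fiber_of_nsmul_le_card_of_maps_to hf ht
    (b := (s.card / t.card : ℚ)) (by rw [nsmul_eq_mul, mul_div_cancel₀ _ ht0.ne'])
  rw [div_le_iff₀ ht0, mul_comm] at h
  exact ⟨y, hy, by exact_mod_cast h⟩

lemma card_le_two_mul_card_filter_le_s12 {ι : Type*} {s : Finset ι} {f : ι → ℕ} {k : ℕ} (hk : 0 < k)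
    (h : 2 * ∑ i ∈ s, f i ≤ s.card * k) : s.card ≤ 2 * (s.filter (f · ≤ k)).card := by
  have hbad : (s.filter (¬ f · ≤ k)).card * k ≤ ∑ i ∈ s, f i :=
    calc (s.filter (¬ f · ≤ k)).card * k ≤ ∑ i ∈ s.filter (¬ f · ≤ k), f i := by
          rw [← smul_eq_mul]
          exact Finset.card_nsmul_le_sum _ _ _ fun i hi => (not_le.1 (Finset.mem_filter.1 hi).2).le
      _ ≤ ∑ i ∈ s, f i := Finset.sum_le_sum_of_subset (Finset.filter_subset _ _)
  have hbad2 : 2 * (s.filter (¬ f · ≤ k)).card ≤ s.card :=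
    Nat.le_of_mul_le_mul_right (by linarith) hk
  have hsplit := Finset.card_filter_add_card_filter_not (s := s) (f · ≤ k)
  omega

lemma sum_offDiag_insert {α M : Type*} [DecidableEq α] [AddCommMonoid M] {x : α} {J : Finset α}
    (hx : x ∉ J) (f : α × α → M) : ∑ p ∈ (insert x J).offDiag, f p
      = ∑ p ∈ J.offDiag, f p + ∑ b ∈ J, (f (x, b) + f (b, x)) := by
  have hdisj : Disjoint (J.offDiag ∪ {x} ×ˢ J) (J ×ˢ {x}) := by
    rw [Finset.disjoint_left]
    grind
  rw [Finset.offDiag_insert hx, Finset.sum_union hdisj, Finset.sum_union (by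
    rw [Finset.disjoint_left]; grind), add_assoc, Finset.sum_add_distrib]
  simp

/-- The greedy colouring: each vertex receives a colour carrying at most an average share of the
weight towards the vertices coloured before. -/
lemma exists_coloring_sum_offDiag_le {α : Type*} (w : α × α → ℕ) {q : ℕ}
    (hq : 0 < q) (J : Finset α) : ∃ χ : α → Fin q,
      q * ∑ p ∈ J.offDiag with χ p.1 = χ p.2, w p ≤ ∑ p ∈ J.offDiag, w p := by
  classical
  have : NeZero q := ⟨hq.ne'⟩
  induction J using Finset.induction_on with
  | empty => exact ⟨fun _ => 0, by simp⟩
  | insert x J hx ih =>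
    obtain ⟨χ, hχ⟩ := ih
    obtain ⟨i, hi⟩ : ∃ i, q * ∑ b ∈ J with χ b = i, (w (x, b) + w (b, x))
        ≤ ∑ b ∈ J, (w (x, b) + w (b, x)) := by
      obtain ⟨i, -, hmin⟩ := Finset.exists_min_image Finset.univ
        (fun i : Fin q => ∑ b ∈ J with χ b = i, (w (x, b) + w (b, x))) Finset.univ_nonempty
      refine ⟨i, ?_⟩
      rw [← Finset.sum_fiberwise J χ]
      simpa using Finset.card_nsmul_le_sum _ _ _ hmin
    have hne : ∀ b ∈ J, b ≠ x := fun b hb h => hx (h ▸ hb)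
    refine ⟨Function.update χ x i, ?_⟩
    simp only [Finset.sum_filter, sum_offDiag_insert hx] at hχ hi ⊢
    have hold : ∑ p ∈ J.offDiag,
        (if Function.update χ x i p.1 = Function.update χ x i p.2 then w p else 0)
        = ∑ p ∈ J.offDiag, if χ p.1 = χ p.2 then w p else 0 := by
      refine Finset.sum_congr rfl fun p hp => ?_
      rw [Finset.mem_offDiag] at hp
      rw [Function.update_of_ne (hne _ hp.1), Function.update_of_ne (hne _ hp.2.1)]
    have hnew : ∑ b ∈ J, ((if Function.update χ x i x = Function.update χ x i b then w (x, b)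
          else 0) + if Function.update χ x i b = Function.update χ x i x then w (b, x) else 0)
        = ∑ b ∈ J, if χ b = i then w (x, b) + w (b, x) else 0 := by
      refine Finset.sum_congr rfl fun b hb => ?_
      rw [Function.update_self, Function.update_of_ne (hne b hb)]
      simp only [eq_comm (a := i)]
      split_ifs <;> rfl
    rw [hold, hnew, mul_add]
    exact add_le_add hχ hi

end General

section Basic

variable {V : Type*} {G : SimpleGraph V} {X Y I : Finset V}

open Classical in
/-- The largest cardinality of a stable subset of `X`. -/
noncomputable def indepNumOn (G : SimpleGraph V) (X : Finset V) : ℕ :=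
  (X.powerset.filter fun I : Finset V => G.IsIndepSet (I : Set V)).sup Finset.card

/-- The number `α · ω` of the subgraph induced on `X`. -/
noncomputable def kappaOn (G : SimpleGraph V) (X : Finset V) : ℕ :=
  indepNumOn G X * indepNumOn Gᶜ X

open Classical in
/-- The neighbours of `v` that lie in `X`. -/
noncomputable def neighborsIn (G : SimpleGraph V) (X : Finset V) (v : V) : Finset V :=
  X.filter (G.Adj v)

open Classical in
lemma mem_neighborsIn {v w : V} : w ∈ neighborsIn G X v ↔ w ∈ X ∧ G.Adj v w :=
  Finset.mem_filter

open Classical in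
lemma neighborsIn_subset (G : SimpleGraph V) (X : Finset V) (v : V) : neighborsIn G X v ⊆ X :=
  Finset.filter_subset _ _

open Classical in
lemma neighborsIn_mono (G : SimpleGraph V) (h : X ⊆ Y) (v : V) :
    neighborsIn G X v ⊆ neighborsIn G Y v :=
  Finset.filter_subset_filter _ h

open Classical in
lemma card_le_indepNumOn (h : I ⊆ X) (hI : G.IsIndepSet (I : Set V)) :
    I.card ≤ indepNumOn G X :=
  Finset.le_sup (f := Finset.card) (Finset.mem_filter.2 ⟨Finset.mem_powerset.2 h, hI⟩)

lemma exists_card_eq_indepNumOn (G : SimpleGraph V) (X : Finset V) :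
    ∃ I ⊆ X, G.IsIndepSet (I : Set V) ∧ I.card = indepNumOn G X := by
  classical
  obtain ⟨I, hI, h⟩ := Finset.exists_mem_eq_sup
    (X.powerset.filter fun I : Finset V => G.IsIndepSet (I : Set V)) ⟨∅, by simp [IsIndepSet]⟩
    Finset.card
  rw [Finset.mem_filter, Finset.mem_powerset] at hI
  exact ⟨I, hI.1, hI.2, h.symm⟩

lemma indepNumOn_mono (G : SimpleGraph V) (h : X ⊆ Y) : indepNumOn G X ≤ indepNumOn G Y := by
  obtain ⟨I, hI, hs, hc⟩ := exists_card_eq_indepNumOn G X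
  exact hc ▸ card_le_indepNumOn (hI.trans h) hs

lemma indepNumOn_pos (G : SimpleGraph V) (h : X.Nonempty) : 0 < indepNumOn G X := by
  obtain ⟨x, hx⟩ := h
  exact Nat.one_pos.trans_le (card_le_indepNumOn (I := {x}) (by simpa using hx) (by simp))

lemma kappaOn_pos (G : SimpleGraph V) (h : X.Nonempty) : 0 < kappaOn G X :=
  Nat.mul_pos (indepNumOn_pos G h) (indepNumOn_pos _ h)

lemma kappaOn_mono (G : SimpleGraph V) (h : X ⊆ Y) : kappaOn G X ≤ kappaOn G Y :=
  Nat.mul_le_mul (indepNumOn_mono G h) (indepNumOn_mono _ h)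

lemma kappaOn_compl (G : SimpleGraph V) (X : Finset V) : kappaOn Gᶜ X = kappaOn G X := by
  simp [kappaOn, mul_comm]

end Basic

section Critical

variable {V : Type*} {G O : SimpleGraph V} {σ σ' : ℝ} {X U Z : Finset V}

/-- `X` minimises `kappaOn G Z / |Z| ^ σ` among its subsets `Z`, so that subsets which are not much
smaller than `X` have almost the same stability and clique numbers. The inequality is multiplied
out in order to include `Z = ∅`. -/
structure Critical (G : SimpleGraph V) (σ : ℝ) (X : Finset V) : Prop where
  nonempty : X.Nonempty
  rpow_mul_kappaOn_le : ∀ Z ⊆ X, (Z.card : ℝ) ^ σ * kappaOn G X ≤ (X.card : ℝ) ^ σ * kappaOn G Z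

lemma Critical.compl (h : Critical G σ X) : Critical Gᶜ σ X :=
  ⟨h.1, fun Z hZ => by simpa only [kappaOn_compl] using h.2 Z hZ⟩

lemma Critical.of_eq_or (h : Critical G σ X) (hO : O = G ∨ O = Gᶜ) : Critical O σ X := by
  rcases hO with rfl | rfl
  exacts [h, h.compl]

lemma Critical.mono (h : Critical G σ X) (hσ : 0 < σ) (hσ' : σ ≤ σ') : Critical G σ' X := by
  refine ⟨h.1, fun Z hZ => ?_⟩
  rcases Z.eq_empty_or_nonempty with rfl | hZ0
  · rw [Finset.card_empty, Nat.cast_zero, Real.zero_rpow (by linarith), zero_mul]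
    positivity
  have hZpos : (0 : ℝ) < Z.card := by exact_mod_cast hZ0.card_pos
  have hXpos : (0 : ℝ) < X.card := by exact_mod_cast h.1.card_pos
  have hZX : (Z.card : ℝ) ≤ X.card := by exact_mod_cast Finset.card_le_card hZ
  rw [← sub_add_cancel σ' σ, Real.rpow_add hZpos, Real.rpow_add hXpos, mul_assoc, mul_assoc]
  exact mul_le_mul (Real.rpow_le_rpow hZpos.le hZX (by linarith)) (h.2 Z hZ) (by positivity)
    (by positivity)

lemma Critical.card_rpow_mul_indepNumOn_le (h : Critical G σ X) (hZ : Z ⊆ X) :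
    (Z.card : ℝ) ^ σ * indepNumOn G X ≤ (X.card : ℝ) ^ σ * indepNumOn G Z := by
  have hκ := h.2 Z hZ
  have hpos : (0 : ℝ) < indepNumOn Gᶜ X := by exact_mod_cast indepNumOn_pos _ h.1
  have hmono : (indepNumOn Gᶜ Z : ℝ) ≤ indepNumOn Gᶜ X := by exact_mod_cast indepNumOn_mono _ hZ
  simp only [kappaOn, Nat.cast_mul, ← mul_assoc] at hκ
  exact le_of_mul_le_mul_right (hκ.trans (by gcongr)) hpos

/-- A minimiser of `kappaOn G Z / |Z| ^ σ` over the nonempty subsets `Z` of `U` is critical. -/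
lemma exists_critical_subset (G : SimpleGraph V) (hσ : 0 < σ) (hU : U.Nonempty) :
    ∃ X ⊆ U, Critical G σ X ∧
      (U.card : ℝ) ^ σ * kappaOn G X ≤ (X.card : ℝ) ^ σ * kappaOn G U := by
  obtain ⟨X, hX, hX0, hmin⟩ := exists_min_ratio (fun Z => (kappaOn G Z : ℝ)) σ hU
  refine ⟨X, hX, ⟨hX0, fun Z hZ => ?_⟩, hmin U subset_rfl hU⟩
  rcases Z.eq_empty_or_nonempty with rfl | hZ0
  · rw [Finset.card_empty, Nat.cast_zero, Real.zero_rpow hσ.ne', zero_mul]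
    positivity
  · exact hmin Z (hZ.trans hX) hZ0

lemma Critical.exists_critical_subset (h : Critical G σ X) (hU : U ⊆ X) (hU0 : U.Nonempty)
    (hσ : 0 < σ) (hσ' : σ < σ') {r : ℝ} (hr : σ ≤ r * (σ' - σ)) :
    ∃ X' ⊆ U, Critical G σ' X' ∧ (U.card : ℝ) * ((U.card : ℝ) / X.card) ^ r ≤ X'.card := by
  obtain ⟨X', hX', hX'c, hle⟩ := _root_.exists_critical_subset G (hσ.trans hσ') hU0
  refine ⟨X', hX', hX'c, mul_div_rpow_le_of_rpow_mul_le (by exact_mod_cast hU0.card_pos)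
    (by exact_mod_cast hX'c.1.card_pos) (by exact_mod_cast Finset.card_le_card hU) hσ' hr ?_⟩
  have hκ : (0 : ℝ) < kappaOn G X := by exact_mod_cast kappaOn_pos G h.1
  have hκU : (kappaOn G U : ℝ) ≤ kappaOn G X := by exact_mod_cast kappaOn_mono G hU
  refine le_of_mul_le_mul_right ?_ hκ
  calc (X'.card : ℝ) ^ σ * (U.card : ℝ) ^ σ' * kappaOn G X
      = (U.card : ℝ) ^ σ' * ((X'.card : ℝ) ^ σ * kappaOn G X) := by ring
    _ ≤ (U.card : ℝ) ^ σ' * ((X.card : ℝ) ^ σ * kappaOn G X') :=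
        mul_le_mul_of_nonneg_left (h.2 X' (hX'.trans hU)) (by positivity)
    _ = (X.card : ℝ) ^ σ * ((U.card : ℝ) ^ σ' * kappaOn G X') := by ring
    _ ≤ (X.card : ℝ) ^ σ * ((X'.card : ℝ) ^ σ' * kappaOn G U) := by gcongr
    _ ≤ (X.card : ℝ) ^ σ * ((X'.card : ℝ) ^ σ' * kappaOn G X) := by gcongr
    _ = (X.card : ℝ) ^ σ * (X'.card : ℝ) ^ σ' * kappaOn G X := by ring

end Critical

section DisjointBlocks

variable {α β : Type*} {J I : Finset α} {P A : α → Finset β}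

lemma pairwiseDisjoint_update_insert [DecidableEq α] {x : α} {Q : Finset β} (hx : x ∉ J)
    (hP : (J : Set α).PairwiseDisjoint P) (hQ : ∀ b ∈ J, Disjoint Q (P b)) :
    ((insert x J : Finset α) : Set α).PairwiseDisjoint (Function.update P x Q) := by
  have hne : ∀ b ∈ J, b ≠ x := fun b hb h => hx (h ▸ hb)
  rw [Finset.coe_insert, Set.pairwiseDisjoint_insert_of_notMem (by simpa using hx)]
  refine ⟨fun b hb b' hb' h => ?_, fun b hb => ?_⟩
  · simpa only [Function.onFun, Function.update_of_ne (hne b hb),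
      Function.update_of_ne (hne b' hb')] using hP hb hb' h
  · simpa only [Function.update_self, Function.update_of_ne (hne b hb)] using hQ b hb

/-- A maximal subfamily containing disjoint blocks of size `k` leaves fewer than `k` points of each
set uncovered. -/
lemma exists_disjoint_blocks_card_sdiff_lt [DecidableEq β] {k : ℕ}
    (hA : ∀ a ∈ I, (A a).card < 2 * k) :
    ∃ J ⊆ I, ∃ P : α → Finset β, (∀ a ∈ J, P a ⊆ A a ∧ (P a).card = k) ∧
      (J : Set α).PairwiseDisjoint P ∧ ∀ a ∈ I, (A a \ J.biUnion P).card < k := by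
  classical
  obtain ⟨J, hJ, hmax⟩ := Finset.exists_max_image
    (I.powerset.filter fun J : Finset α => ∃ P : α → Finset β,
      (∀ a ∈ J, P a ⊆ A a ∧ (P a).card = k) ∧ (J : Set α).PairwiseDisjoint P)
    Finset.card ⟨∅, by simp⟩
  simp only [Finset.mem_filter, Finset.mem_powerset, and_imp, forall_exists_index] at hJ hmax
  obtain ⟨hJI, P, hP, hPd⟩ := hJ
  refine ⟨J, hJI, P, hP, hPd, fun a ha => ?_⟩
  by_contra! hcon
  by_cases haJ : a ∈ J
  · have hdisj : Disjoint (A a \ J.biUnion P) (P a) :=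
      Finset.sdiff_disjoint.mono_right (Finset.subset_biUnion_of_mem P haJ)
    have hcard := Finset.card_le_card
      (Finset.union_subset (Finset.sdiff_subset (t := J.biUnion P)) (hP a haJ).1)
    rw [Finset.card_union_of_disjoint hdisj, (hP a haJ).2] at hcard
    have := hA a ha
    omega
  · obtain ⟨Q, hQ, hQc⟩ := Finset.exists_subset_card_eq hcon
    have hQd : ∀ b ∈ J, Disjoint Q (P b) := fun b hb =>
      (Finset.sdiff_disjoint.mono_right (Finset.subset_biUnion_of_mem P hb)).mono_left hQ
    have hblocks : ∀ b ∈ insert a J,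
        Function.update P a Q b ⊆ A b ∧ (Function.update P a Q b).card = k := by
      intro b hb
      rcases eq_or_ne b a with rfl | hne
      · simpa using ⟨hQ.trans Finset.sdiff_subset, hQc⟩
      · simpa [hne] using hP b (Finset.mem_of_mem_insert_of_ne hb hne)
    have hle := hmax _ (Finset.insert_subset ha hJI) _ hblocks
      (pairwiseDisjoint_update_insert haJ hPd hQd)
    rw [Finset.card_insert_of_notMem haJ] at hle
    omega

/-- Colour greedily with eight colours, discard the half of `J` carrying the largest monochromatic
weight, and keep the largest colour class. -/
lemma exists_subset_sum_erase_le [DecidableEq α] (w : α × α → ℕ) {k : ℕ} (hk : 0 < k)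
    (hw : ∑ p ∈ J.offDiag, w p ≤ J.card * (2 * k)) :
    ∃ T ⊆ J, J.card ≤ 16 * T.card ∧ ∀ a ∈ T, 2 * ∑ b ∈ T.erase a, w (a, b) ≤ k := by
  obtain ⟨χ, hχ⟩ := exists_coloring_sum_offDiag_le w (q := 8) (by norm_num) J
  set load : α → ℕ := fun a => ∑ b ∈ J.erase a with χ b = χ a, w (a, b) with hload
  have hsum : ∑ a ∈ J, load a = ∑ p ∈ J.offDiag with χ p.1 = χ p.2, w p := by
    refine (Finset.sum_finset_product _ _ _ fun p => ?_).symm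
    simp only [Finset.mem_filter, Finset.mem_offDiag, Finset.mem_erase]
    tauto
  have hgood : J.card ≤ 2 * (J.filter (2 * load · ≤ k)).card := by
    refine card_le_two_mul_card_filter_le_s12 hk ?_
    rw [← Finset.mul_sum, hsum]
    linarith
  obtain ⟨i, -, hi⟩ := exists_card_le_card_mul_card_fiber (f := χ) Finset.univ_nonempty
    fun a (_ : a ∈ J.filter (2 * load · ≤ k)) => Finset.mem_univ _
  rw [Finset.card_univ, Fintype.card_fin] at hi
  refine ⟨(J.filter (2 * load · ≤ k)).filter (χ · = i),
    (Finset.filter_subset _ _).trans (Finset.filter_subset _ _), by omega, fun a ha => ?_⟩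
  simp only [Finset.mem_filter] at ha
  refine le_trans (Nat.mul_le_mul_left 2 (Finset.sum_le_sum_of_subset fun b hb => ?_)) ha.1.2
  simp only [Finset.mem_erase, Finset.mem_filter] at hb ⊢
  exact ⟨⟨hb.1, hb.2.1.1⟩, hb.2.2.trans ha.2.symm⟩

end DisjointBlocks

section Comb

variable {V : Type*} {G : SimpleGraph V} {I I' J B B' : Finset V} {c : ℝ}

/-- A comb of `G` between `I` and `B`: to each of the `teeth` in `I` is attached a `block` of
`width` neighbours in `B`, none of which is adjacent to another tooth. -/
structure Comb (G : SimpleGraph V) (I B : Finset V) where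
  teeth : Finset V
  block : V → Finset V
  width : ℕ
  teeth_subset : teeth ⊆ I
  block_subset : ∀ a ∈ teeth, block a ⊆ B
  card_block : ∀ a ∈ teeth, (block a).card = width
  adj : ∀ a ∈ teeth, ∀ b ∈ block a, G.Adj a b
  not_adj : ∀ a ∈ teeth, ∀ b ∈ block a, ∀ a' ∈ teeth, a' ≠ a → ¬ G.Adj a' b

/-- A comb regarded as a comb between larger sets. -/
def Comb.mono (C : Comb G I B) (hI : I ⊆ I') (hB : B ⊆ B') : Comb G I' B' where
  __ := C
  teeth_subset := C.teeth_subset.trans hI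
  block_subset a ha := (C.block_subset a ha).trans hB

/-- The comb whose only tooth is `a`, with all neighbours of `a` in its block. -/
noncomputable def Comb.single {a : V} (B : Finset V) (ha : a ∈ I) : Comb G I B where
  teeth := {a}
  block := neighborsIn G B
  width := (neighborsIn G B a).card
  teeth_subset := Finset.singleton_subset_iff.2 ha
  block_subset _ _ := neighborsIn_subset _ _ _
  card_block x hx := by rw [Finset.mem_singleton.1 hx]
  adj _ _ _ hb := (mem_neighborsIn.1 hb).2
  not_adj x hx _ _ a' ha' hne :=
    absurd ((Finset.mem_singleton.1 ha').trans (Finset.mem_singleton.1 hx).symm) hne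

lemma sum_offDiag_card_neighborsIn_le {P : V → Finset V} {d : ℕ} (hP : ∀ a ∈ J, P a ⊆ B)
    (hdisj : (J : Set V).PairwiseDisjoint P) (hdeg : ∀ a ∈ J, (neighborsIn G B a).card ≤ d) :
    ∑ p ∈ J.offDiag, (neighborsIn G (P p.1) p.2).card ≤ J.card * d := by
  classical
  calc ∑ p ∈ J.offDiag, (neighborsIn G (P p.1) p.2).card
      ≤ ∑ p ∈ J ×ˢ J, (neighborsIn G (P p.1) p.2).card :=
        Finset.sum_le_sum_of_subset (Finset.product_sdiff_diag J ▸ Finset.sdiff_subset)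
    _ = ∑ b ∈ J, ∑ a ∈ J, (neighborsIn G (P a) b).card := Finset.sum_product_right _ _ _
    _ ≤ J.card * d := by
        refine Finset.sum_le_card_nsmul _ _ _ fun b hb => ?_
        rw [← Finset.card_biUnion fun a ha a' ha' h =>
          (hdisj ha ha' h).mono (neighborsIn_subset _ _ _) (neighborsIn_subset _ _ _)]
        exact (Finset.card_le_card (Finset.biUnion_subset.2 fun a ha =>
          neighborsIn_mono G (hP a ha) b)).trans (hdeg b hb)

lemma exists_comb_of_disjoint_blocks {P : V → Finset V} {k : ℕ} (hk0 : 0 < k)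
    (hP : ∀ a ∈ J, P a ⊆ neighborsIn G B a) (hk : ∀ a ∈ J, (P a).card = k)
    (hdisj : (J : Set V).PairwiseDisjoint P)
    (hdeg : ∀ a ∈ J, (neighborsIn G B a).card ≤ 2 * k) :
    ∃ C : Comb G J B, J.card ≤ 16 * C.teeth.card ∧ k ≤ 2 * C.width := by
  classical
  obtain ⟨T, hTJ, hTcard, hT⟩ := exists_subset_sum_erase_le _ hk0
    (sum_offDiag_card_neighborsIn_le (fun a ha => (hP a ha).trans (neighborsIn_subset _ _ _))
      hdisj hdeg)
  have htrim : ∀ a ∈ T, ∃ Q ⊆ P a \ (T.erase a).biUnion (neighborsIn G (P a)),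
      Q.card = (k + 1) / 2 := by
    refine fun a ha => Finset.exists_subset_card_eq ?_
    have hsdiff := Finset.le_card_sdiff ((T.erase a).biUnion (neighborsIn G (P a))) (P a)
    have hload := (T.erase a).card_biUnion_le (t := neighborsIn G (P a))
    have := hT a ha
    have := hk a (hTJ ha)
    dsimp only at *
    omega
  choose! Q hQ hQcard using htrim
  have hQP : ∀ a ∈ T, Q a ⊆ neighborsIn G B a := fun a ha =>
    ((hQ a ha).trans Finset.sdiff_subset).trans (hP a (hTJ ha))
  refine ⟨⟨T, Q, (k + 1) / 2, hTJ, fun a ha => (hQP a ha).trans (neighborsIn_subset _ _ _), hQcard,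
    fun a ha b hb => (mem_neighborsIn.1 (hQP a ha hb)).2, fun a ha b hb a' ha' hne hadj => ?_⟩,
    hTcard, by dsimp only; omega⟩
  have hb' := Finset.mem_sdiff.1 (hQ a ha hb)
  exact hb'.2 (Finset.mem_biUnion.2
    ⟨a', Finset.mem_erase.2 ⟨hne, ha'⟩, mem_neighborsIn.2 ⟨hb'.1, hadj⟩⟩)

lemma exists_comb_and_residue {k : ℕ} (hk : 0 < k)
    (hB : ∀ a ∈ I, (neighborsIn G B a).card < 2 * k) :
    ∃ C : Comb G I B, ∃ R ⊆ B, k ≤ 2 * C.width ∧ B.card ≤ R.card + 16 * C.teeth.card * k ∧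
      ∀ a ∈ I, (neighborsIn G R a).card < k := by
  classical
  obtain ⟨J, hJ, P, hP, hdisj, hres⟩ := exists_disjoint_blocks_card_sdiff_lt hB
  obtain ⟨C, hC, hwidth⟩ := exists_comb_of_disjoint_blocks hk (fun a ha => (hP a ha).1)
    (fun a ha => (hP a ha).2) hdisj fun a ha => (hB a (hJ ha)).le
  refine ⟨C.mono hJ subset_rfl, B \ J.biUnion P, Finset.sdiff_subset, hwidth, ?_, fun a ha => ?_⟩
  · have hcard : (J.biUnion P).card ≤ J.card * k :=
      Finset.card_biUnion_le_card_mul _ _ _ fun a ha => (hP a ha).2.le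
    have := Finset.le_card_sdiff (J.biUnion P) B
    have := Nat.mul_le_mul_right k hC
    dsimp only [Comb.mono]
    omega
  · refine (Finset.card_le_card fun b hb => ?_).trans_lt (hres a ha)
    simp only [mem_neighborsIn, Finset.mem_sdiff] at hb ⊢
    exact ⟨⟨hb.1.1, hb.2⟩, hb.1.2⟩

/-- Remove combs at the dyadic scales `2 ^ (l - 1), …, 2, 1` one after another. -/
lemma card_le_sum_of_teeth_le {f : ℕ → ℝ}
    (hf : ∀ (l : ℕ) (C : Comb G I B'), 2 ^ l ≤ 2 * C.width →
      16 * (C.teeth.card : ℝ) * 2 ^ l ≤ f l)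
    (hI : ∀ b ∈ B', ∃ a ∈ I, G.Adj a b) (l : ℕ) {B : Finset V} (hB : B ⊆ B')
    (hdeg : ∀ a ∈ I, (neighborsIn G B a).card < 2 ^ l) :
    (B.card : ℝ) ≤ ∑ i ∈ Finset.range l, f i := by
  induction l generalizing B with
  | zero =>
    suffices B = ∅ by simp [this]
    refine Finset.eq_empty_of_forall_notMem fun b hb => ?_
    obtain ⟨a, ha, hab⟩ := hI b (hB hb)
    exact absurd (hdeg a ha) (by
      rw [pow_zero, not_lt]; exact Finset.card_pos.2 ⟨b, mem_neighborsIn.2 ⟨hb, hab⟩⟩)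
  | succ l ih =>
    obtain ⟨C, R, hR, hwidth, hcard, hRdeg⟩ := exists_comb_and_residue (k := 2 ^ l) (by positivity)
      fun a ha => (hdeg a ha).trans_eq (pow_succ' 2 l)
    have hRsum := ih (hR.trans hB) hRdeg
    have hteeth := hf l (C.mono subset_rfl hB) hwidth
    have hcard' : (B.card : ℝ) ≤ R.card + 16 * C.teeth.card * 2 ^ l := by exact_mod_cast hcard
    rw [Finset.sum_range_succ]
    exact hcard'.trans (add_le_add hRsum hteeth)

lemma mul_le_rpow_mul_rpow {x t M : ℝ} (hc : 0 < c) (hx : 0 < x) (ht : 0 ≤ t)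
    (h : x * t ^ (1 + c) ≤ M) : t * x ≤ M ^ (1 / (1 + c)) * x ^ (c / (1 + c)) := by
  have hroot : x ^ (1 / (1 + c)) * t ≤ M ^ (1 / (1 + c)) := by
    have := Real.rpow_le_rpow (by positivity) h (by positivity : 0 ≤ 1 / (1 + c))
    rwa [Real.mul_rpow hx.le (by positivity), ← Real.rpow_mul ht,
      mul_one_div_cancel (by positivity), Real.rpow_one] at this
  calc t * x = x ^ (1 / (1 + c)) * t * x ^ (c / (1 + c)) := by
        rw [mul_right_comm, ← Real.rpow_add hx, show 1 / (1 + c) + c / (1 + c) = 1 by field_simp,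
          Real.rpow_one, mul_comm]
    _ ≤ M ^ (1 / (1 + c)) * x ^ (c / (1 + c)) := by gcongr

/-- The proportion of `B` covered by the comb of `exists_comb`; it comes from the geometric sum of
ratio `2 ^ (c / (1 + c))` over the dyadic scales. -/
noncomputable def combConstant (c : ℝ) : ℝ := (2 ^ (c / (1 + c)) - 1) / 64

lemma combConstant_pos (hc : 0 < c) : 0 < combConstant c := by
  have : 1 < (2 : ℝ) ^ (c / (1 + c)) := Real.one_lt_rpow (by norm_num) (by positivity)
  rw [combConstant]
  linarith

lemma sum_range_two_pow_rpow_le (hc : 0 < c) {M : ℝ} {l : ℕ} (hl : 2 ^ l ≤ M) :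
    ∑ i ∈ Finset.range l, 16 * (M ^ (1 / (1 + c)) * ((2 : ℝ) ^ i) ^ (c / (1 + c)))
      ≤ M / (4 * combConstant c) := by
  set r : ℝ := 2 ^ (c / (1 + c)) with hr
  have hr1 : 1 < r := Real.one_lt_rpow (by norm_num) (by positivity)
  have hM : 0 < M := lt_of_lt_of_le (by positivity) hl
  have hpow : ∀ i : ℕ, ((2 : ℝ) ^ i) ^ (c / (1 + c)) = r ^ i := fun i =>
    (Real.rpow_pow_comm zero_le_two _ _).symm
  have hrl : r ^ l ≤ M ^ (c / (1 + c)) := by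
    rw [← hpow]
    exact Real.rpow_le_rpow (by positivity) hl (by positivity)
  have hexp : M ^ (1 / (1 + c)) * M ^ (c / (1 + c)) = M := by
    rw [← Real.rpow_add hM, ← add_div, div_self (by positivity), Real.rpow_one]
  have hr0 : 0 < r - 1 := sub_pos.2 hr1
  calc ∑ i ∈ Finset.range l, 16 * (M ^ (1 / (1 + c)) * ((2 : ℝ) ^ i) ^ (c / (1 + c)))
      = 16 * (M ^ (1 / (1 + c)) * ((r ^ l - 1) / (r - 1))) := by
        simp only [hpow, ← Finset.mul_sum, geom_sum_eq hr1.ne']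
    _ ≤ 16 * (M ^ (1 / (1 + c)) * (M ^ (c / (1 + c)) / (r - 1))) := by
        gcongr
        linarith
    _ = M / (4 * combConstant c) := by
        rw [← mul_div_assoc, hexp, combConstant, ← hr]
        field_simp
        norm_num

lemma exists_comb (hc : 0 < c) (hB : B.Nonempty) (hI : ∀ b ∈ B, ∃ a ∈ I, G.Adj a b) :
    ∃ C : Comb G I B, combConstant c * B.card ≤ C.width * (C.teeth.card : ℝ) ^ (1 + c) := by
  by_contra! hcon
  set M := 2 * (combConstant c * B.card) with hM
  have hdeg : ∀ a ∈ I, (neighborsIn G B a).card < combConstant c * B.card := fun a ha => by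
    simpa [Comb.single] using hcon (Comb.single B ha)
  obtain ⟨b, hb⟩ := hB
  obtain ⟨a, ha, hab⟩ := hI b hb
  have hM1 : 1 ≤ M / 2 := by
    have : 1 ≤ (neighborsIn G B a).card := Finset.card_pos.2 ⟨b, mem_neighborsIn.2 ⟨hb, hab⟩⟩
    have : (1 : ℝ) ≤ (neighborsIn G B a).card := by exact_mod_cast this
    linarith [hdeg a ha]
  obtain ⟨l, hlM, hMl⟩ := exists_nat_pow_near hM1 one_lt_two
  have hcard : (B.card : ℝ) ≤ M / (4 * combConstant c) := by
    refine (card_le_sum_of_teeth_le (G := G) (I := I) (B' := B)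
      (f := fun i => 16 * (M ^ (1 / (1 + c)) * ((2 : ℝ) ^ i) ^ (c / (1 + c)))) (fun i C hC => ?_)
      hI (l + 1) subset_rfl fun a ha => ?_).trans
      (sum_range_two_pow_rpow_le hc (by rw [pow_succ]; linarith))
    · rw [mul_assoc]
      refine mul_le_mul_of_nonneg_left (mul_le_rpow_mul_rpow hc (by positivity) (by positivity) ?_)
        (by norm_num)
      have hC' : (2 : ℝ) ^ i ≤ 2 * C.width := by exact_mod_cast hC
      calc (2 : ℝ) ^ i * (C.teeth.card : ℝ) ^ (1 + c)
          ≤ 2 * C.width * (C.teeth.card : ℝ) ^ (1 + c) := by gcongr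
        _ ≤ M := by linarith [hcon C]
    · have := (hdeg a ha).trans (show combConstant c * B.card < 2 ^ (l + 1) by linarith)
      exact_mod_cast this
  have hB : (0 : ℝ) < B.card := by exact_mod_cast Finset.card_pos.2 ⟨b, hb⟩
  rw [le_div_iff₀ (by linarith [combConstant_pos hc])] at hcard
  nlinarith [mul_pos (combConstant_pos hc) hB]

end Comb

section Embedding

variable {U V : Type*} {F : SimpleGraph U} {G : SimpleGraph V}

lemma exists_pairwise_disjoint_subsets [Fintype U] {X : Finset V} {q : ℕ}
    (h : Fintype.card U * q ≤ X.card) :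
    ∃ A : U → Finset V, (∀ u, A u ⊆ X ∧ (A u).card = q) ∧ Pairwise (Function.onFun Disjoint A) := by
  obtain ⟨e⟩ : Nonempty (U × Fin q ↪ X) := Function.Embedding.nonempty_of_card_le (by simpa using h)
  have hinj : ∀ {u w i j}, (e (u, i)).1 = (e (w, j)).1 → u = w ∧ i = j := fun h =>
    Prod.ext_iff.1 (e.injective (Subtype.ext h))
  refine ⟨fun u => Finset.univ.map ⟨fun i => (e (u, i)).1, fun i j h => (hinj h).2⟩,
    fun u => ⟨fun x hx => ?_, by simp⟩, fun u w huw => Finset.disjoint_left.2 fun x hx hx' => ?_⟩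
  · obtain ⟨i, -, rfl⟩ := Finset.mem_map.1 hx
    exact (e (u, i)).2
  · obtain ⟨i, -, rfl⟩ := Finset.mem_map.1 hx
    obtain ⟨j, -, hj⟩ := Finset.mem_map.1 hx'
    exact huw (hinj hj).1.symm

/-- On `S`, the map `φ` preserves adjacency and non-adjacency of distinct vertices of `F`. -/
def PreservesAdjOn (F : SimpleGraph U) (G : SimpleGraph V) (φ : U → V) (S : Finset U) : Prop :=
  ∀ u ∈ S, ∀ w ∈ S, u ≠ w → (G.Adj (φ u) (φ w) ↔ F.Adj u w)

lemma PreservesAdjOn.update_insert [DecidableEq U] {φ : U → V} {S : Finset U} {u₀ : U} {a : V}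
    (h : PreservesAdjOn F G φ S) (hu₀ : u₀ ∉ S)
    (ha : ∀ w ∈ S, (G.Adj a (φ w) ↔ F.Adj u₀ w)) :
    PreservesAdjOn F G (Function.update φ u₀ a) (insert u₀ S) := by
  have hne : ∀ w ∈ S, w ≠ u₀ := fun w hw h => hu₀ (h ▸ hw)
  intro u hu w hw huw
  rcases Finset.mem_insert.1 hu with rfl | huS <;> rcases Finset.mem_insert.1 hw with rfl | hwS
  · exact absurd rfl huw
  · simpa [hne w hwS] using ha w hwS
  · simpa [hne u huS, G.adj_comm, F.adj_comm] using ha u huS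
  · simpa [hne u huS, hne w hwS] using h u huS w hwS huw

lemma nonempty_embedding_of_preservesAdjOn [Fintype U] {φ : U → V} {A : U → Finset V}
    (h : PreservesAdjOn F G φ Finset.univ) (hφ : ∀ u, φ u ∈ A u)
    (hA : Pairwise (Function.onFun Disjoint A)) : Nonempty (F ↪g G) := by
  have hinj : Function.Injective φ := fun u w huw => by
    by_contra hne
    exact Finset.disjoint_left.1 (hA hne) (hφ u) (huw ▸ hφ w)
  refine ⟨⟨⟨φ, hinj⟩, fun {u w} => ?_⟩⟩
  rcases eq_or_ne u w with rfl | hne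
  · simp
  · exact h u (Finset.mem_univ _) w (Finset.mem_univ _) hne

end Embedding

section SparsePair

variable {U V : Type*} {F : SimpleGraph U} {G : SimpleGraph V} {X A B A₀ B₀ : Finset V} {d h s : ℕ}

/-- Disjoint subsets `A` and `B` of `X` such that, in one of `G` and `Gᶜ`, every vertex of `A` is
adjacent to at most `|B| / d` vertices of `B`. -/
structure SparsePair (G : SimpleGraph V) (d : ℕ) (X A B : Finset V) : Prop where
  left_subset : A ⊆ X
  right_subset : B ⊆ X
  disjoint : Disjoint A B
  sparse : ∃ O, (O = G ∨ O = Gᶜ) ∧ ∀ a ∈ A, (neighborsIn O B a).card * d ≤ B.card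

lemma le_two_mul_mul_div (hd : 0 < d) (hds : d ≤ s) : s ≤ 2 * d * (s / d) := by
  have := Nat.lt_div_mul_add (a := s) hd
  have := Nat.div_pos hds hd
  nlinarith

lemma exists_sparsePair_of_forall_exists_lt {S : Finset U} {A : U → Finset V}
    {O : U → SimpleGraph V} (hA₀ : A₀ ⊆ X) (hA₀0 : A₀.Nonempty) (hO : ∀ w, O w = G ∨ O w = Gᶜ)
    (hA : ∀ w ∈ S, A w ⊆ X ∧ (A w).card = s) (hdisj : ∀ w ∈ S, Disjoint A₀ (A w))
    (hbad : ∀ a ∈ A₀, ∃ w ∈ S, (neighborsIn (O w) (A w) a).card < s / d) :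
    ∃ w ∈ S, ∃ A₁, SparsePair G d X A₁ (A w) ∧ A₀.card ≤ S.card * A₁.card := by
  classical
  have : Nonempty U := ⟨(hbad _ hA₀0.choose_spec).choose⟩
  choose! g hg hgcard using hbad
  obtain ⟨w, hw, hcard⟩ := exists_card_le_card_mul_card_fiber ⟨_, hg _ hA₀0.choose_spec⟩ hg
  have hsub : A₀.filter (g · = w) ⊆ A₀ := Finset.filter_subset _ _
  refine ⟨w, hw, A₀.filter (g · = w), ⟨hsub.trans hA₀, (hA w hw).1, (hdisj w hw).mono_left hsub,
    O w, hO w, fun a ha => ?_⟩, hcard⟩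
  obtain ⟨haA, rfl⟩ := Finset.mem_filter.1 ha
  rw [(hA _ hw).2]
  exact (Nat.mul_le_mul_right d (hgcard a haA).le).trans (Nat.div_mul_le_self s d)

/-- The vertices of `F` are embedded one at a time: choosing the image of `u` cuts down the parts of
the remaining vertices by a factor at most `d`, unless the part of `u` contains a large set of
vertices that are all bad for the same remaining part. -/
lemma exists_preservesAdjOn_or_sparsePair [Nonempty V] (hd : 0 < d) (S : Finset U)
    {A : U → Finset V} (hS : S.card ≤ h) (hs : d ^ S.card ≤ s)
    (hA : ∀ u ∈ S, A u ⊆ X ∧ (A u).card = s) (hdisj : (S : Set U).PairwiseDisjoint A) :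
    (∃ φ : U → V, (∀ u ∈ S, φ u ∈ A u) ∧ PreservesAdjOn F G φ S) ∨
    ∃ A₀ B₀, SparsePair G d X A₀ B₀ ∧ s ≤ (2 * d) ^ S.card * B₀.card ∧
      B₀.card ≤ h * A₀.card := by
  classical
  induction S using Finset.induction_on generalizing A s with
  | empty => exact Or.inl ⟨fun _ => Classical.arbitrary V, by simp, by simp [PreservesAdjOn]⟩
  | insert u₀ S hu₀ ih =>
    have hu₀S := Finset.mem_insert_self u₀ S
    have hSins := Finset.subset_insert u₀ S
    rw [Finset.card_insert_of_notMem hu₀, pow_succ] at hs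
    rw [Finset.card_insert_of_notMem hu₀] at hS
    have hdpow : d ^ S.card ≤ s / d := (Nat.le_div_iff_mul_le hd).2 hs
    have hds : d ≤ s := (Nat.le_mul_of_pos_left d (by positivity)).trans hs
    let O : U → SimpleGraph V := fun w => if F.Adj u₀ w then G else Gᶜ
    have hO : ∀ w, O w = G ∨ O w = Gᶜ := fun w => by simp only [O]; split_ifs <;> simp
    by_cases hgood : ∃ a ∈ A u₀, ∀ w ∈ S, s / d ≤ (neighborsIn (O w) (A w) a).card
    · obtain ⟨a, ha, hgood⟩ := hgood
      choose! Q hQ hQcard using fun w hw => Finset.exists_subset_card_eq (hgood w hw)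
      have hQA : ∀ w ∈ S, Q w ⊆ A w := fun w hw => (hQ w hw).trans (neighborsIn_subset _ _ _)
      have hQdisj : (S : Set U).PairwiseDisjoint Q := fun u hu w hw huw =>
        (hdisj (hSins hu) (hSins hw) huw).mono (hQA u hu) (hQA w hw)
      rcases ih (by omega) hdpow (fun w hw => ⟨(hQA w hw).trans (hA w (hSins hw)).1, hQcard w hw⟩)
        hQdisj with ⟨φ, hφ, hφadj⟩ | ⟨A₀, B₀, hpair, hsB, hBA⟩
      · refine Or.inl ⟨Function.update φ u₀ a, fun u hu => ?_, hφadj.update_insert hu₀ ?_⟩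
        · rcases eq_or_ne u u₀ with rfl | hne
          · simpa using ha
          · have huS := Finset.mem_of_mem_insert_of_ne hu hne
            simpa [hne] using hQA u huS (hφ u huS)
        · intro w hw
          have hadj := mem_neighborsIn.1 (hQ w hw (hφ w hw))
          by_cases hF : F.Adj u₀ w <;> simp_all [O]
      · refine Or.inr ⟨A₀, B₀, hpair, ?_, hBA⟩
        rw [Finset.card_insert_of_notMem hu₀, pow_succ', mul_assoc]
        exact (le_two_mul_mul_div hd hds).trans (by gcongr)
    · push Not at hgood
      obtain ⟨w, hw, A₁, hpair, hcard⟩ := exists_sparsePair_of_forall_exists_lt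
        (hA u₀ hu₀S).1 (Finset.card_pos.1 (by rw [(hA u₀ hu₀S).2]; omega)) hO
        (fun w hw => hA w (hSins hw))
        (fun w hw => hdisj hu₀S (hSins hw) fun h => hu₀ (h ▸ hw)) hgood
      rw [(hA u₀ hu₀S).2] at hcard
      refine Or.inr ⟨A₁, A w, hpair, ?_, ?_⟩ <;> rw [(hA w (hSins hw)).2]
      · exact Nat.le_mul_of_pos_left _ (by positivity)
      · exact hcard.trans (Nat.mul_le_mul_right _ (by omega))

lemma exists_sparsePair_of_isEmpty_embedding [Fintype U] (hF : ¬ Nonempty (F ↪g G)) (hd : 0 < d)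
    (hs : d ^ Fintype.card U ≤ s) (hX : Fintype.card U * s ≤ X.card)
    (hX0 : X.Nonempty) : ∃ A₀ B₀, SparsePair G d X A₀ B₀ ∧
      s ≤ (2 * d) ^ Fintype.card U * B₀.card ∧ B₀.card ≤ Fintype.card U * A₀.card := by
  have : Nonempty V := ⟨hX0.choose⟩
  obtain ⟨A, hA, hdisj⟩ := exists_pairwise_disjoint_subsets hX
  rcases exists_preservesAdjOn_or_sparsePair (F := F) (G := G) hd Finset.univ le_rfl hs
    (fun u _ => hA u) fun u _ w _ huw => hdisj huw with ⟨φ, hφ, hφadj⟩ | hpair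
  · exact absurd (nonempty_embedding_of_preservesAdjOn hφadj (by simpa using hφ) hdisj) hF
  · exact hpair

lemma SparsePair.exists_subset_card_le (hp : SparsePair G (2 * h * d) X A₀ B₀) (hh : 0 < h)
    (hB : h ≤ B₀.card) (hBA : B₀.card ≤ h * A₀.card) :
    ∃ B, SparsePair G d X A₀ B ∧ B.card ≤ A₀.card ∧ B₀.card ≤ 2 * h * B.card := by
  obtain ⟨B, hBB₀, hBcard⟩ := Finset.exists_subset_card_eq (Nat.div_le_self B₀.card h)
  have hB₀ : B₀.card ≤ 2 * h * B.card := hBcard ▸ le_two_mul_mul_div hh hB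
  obtain ⟨O, hO, hsparse⟩ := hp.sparse
  refine ⟨B, ⟨hp.left_subset, hBB₀.trans hp.right_subset, hp.disjoint.mono_right hBB₀, O, hO,
    fun a ha => ?_⟩, hBcard ▸ Nat.div_le_of_le_mul hBA, hB₀⟩
  refine Nat.le_of_mul_le_mul_left (c := 2 * h) ?_ (by positivity)
  calc 2 * h * ((neighborsIn O B a).card * d)
      = (neighborsIn O B a).card * (2 * h * d) := by ring
    _ ≤ (neighborsIn O B₀ a).card * (2 * h * d) :=
        Nat.mul_le_mul_right _ (Finset.card_le_card (neighborsIn_mono O hBB₀ a))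
    _ ≤ 2 * h * B.card := (hsparse a ha).trans hB₀

/-- The ratio `|X| / |B|` in `exists_sparsePair`, up to a factor `D`, for `n`-vertex graphs. -/
def pairConstant (n D : ℕ) : ℕ := 4 * (n + 1) ^ 2 * (2 * (4 * (n + 1) * D)) ^ n * D

lemma exists_sparsePair [Fintype U] (hF : ¬ Nonempty (F ↪g G)) {D : ℕ} (hD : 0 < D)
    (hX : pairConstant (Fintype.card U) D ≤ X.card) :
    ∃ A B, SparsePair G (2 * D) X A B ∧ B.card ≤ A.card ∧ D ≤ B.card ∧
      D * X.card ≤ pairConstant (Fintype.card U) D * B.card := by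
  set n := Fintype.card U
  set d := 4 * (n + 1) * D with hd
  have hd0 : 0 < d := by positivity
  have hconst : pairConstant n D = 4 * (n + 1) * (2 * d) ^ n * D * (n + 1) := by
    rw [pairConstant, hd]
    ring
  have hs : 4 * (n + 1) * (2 * d) ^ n * D ≤ X.card / (n + 1) :=
    (Nat.le_div_iff_mul_le n.succ_pos).2 (hconst ▸ hX)
  have hn : n + 1 ≤ X.card :=
    (Nat.le_mul_of_pos_left (n + 1) (by positivity)).trans (hconst ▸ hX)
  have hpow : d ^ n ≤ X.card / (n + 1) :=
    calc d ^ n ≤ (2 * d) ^ n := Nat.pow_le_pow_left (by omega) n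
      _ ≤ 4 * (n + 1) * D * (2 * d) ^ n := Nat.le_mul_of_pos_left _ (by positivity)
      _ ≤ X.card / (n + 1) := by linarith
  obtain ⟨A, B₀, hp, hsB₀, hB₀A⟩ := exists_sparsePair_of_isEmpty_embedding hF hd0 hpow
    ((Nat.mul_le_mul_right _ n.le_succ).trans (Nat.mul_div_le X.card (n + 1)))
    (Finset.card_pos.1 (n.succ_pos.trans_le hn))
  have hB₀ : 4 * (n + 1) * D ≤ B₀.card := by
    refine Nat.le_of_mul_le_mul_left (c := (2 * d) ^ n) ?_ (by positivity)
    linarith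
  obtain ⟨B, hpB, hBA, hB₀B⟩ := SparsePair.exists_subset_card_le (h := n + 1) (d := 2 * D)
    (by convert hp using 1; rw [hd]; ring) n.succ_pos (by nlinarith)
    (hB₀A.trans (by gcongr; exact n.le_succ))
  refine ⟨A, B, hpB, hBA, by nlinarith, ?_⟩
  calc D * X.card ≤ D * (2 * (n + 1) * (X.card / (n + 1))) := by
        gcongr
        exact le_two_mul_mul_div n.succ_pos hn
    _ ≤ D * (2 * (n + 1) * ((2 * d) ^ n * (2 * (n + 1) * B.card))) := by
        gcongr
        exact hsB₀.trans (by gcongr)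
    _ = pairConstant n D * B.card := by
        rw [hconst]
        ring

end SparsePair

section Rodl

variable {U V : Type*} {F : SimpleGraph U} {G : SimpleGraph V} {X Y A B : Finset V}
  {D D' m p q : ℕ}

lemma sum_card_neighborsIn_comm (G : SimpleGraph V) (A B : Finset V) :
    ∑ a ∈ A, (neighborsIn G B a).card = ∑ b ∈ B, (neighborsIn G A b).card := by
  classical
  simpa only [Finset.bipartiteAbove, Finset.bipartiteBelow, neighborsIn, G.adj_comm] using
    Finset.sum_card_bipartiteAbove_eq_sum_card_bipartiteBelow (s := A) (t := B) G.Adj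

open Classical in
lemma card_neighborsIn_union (G : SimpleGraph V) (h : Disjoint A B) (v : V) :
    (neighborsIn G (A ∪ B) v).card = (neighborsIn G A v).card + (neighborsIn G B v).card := by
  rw [neighborsIn, Finset.filter_union]
  exact Finset.card_union_of_disjoint (Finset.disjoint_filter_filter h)

/-- A set of `p * m` vertices whose average degree is at most `2 * m`, as is the case for a union of
`p` blocks of size `m` with few edges between any two of them. -/
structure SparseBlocks (G : SimpleGraph V) (m p : ℕ) (Y : Finset V) : Prop where
  card_eq : Y.card = p * m
  sum_card_le : ∑ v ∈ Y, (neighborsIn G Y v).card ≤ 2 * p * m ^ 2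

open Classical in
lemma SparseBlocks.union (hY : SparseBlocks G m p Y) (hAY : Disjoint A Y) (hA : A.card = m)
    (hsparse : ∀ a ∈ A, 2 * (neighborsIn G Y a).card ≤ m) :
    SparseBlocks G m (p + 1) (A ∪ Y) where
  card_eq := by
    rw [Finset.card_union_of_disjoint hAY, hA, hY.card_eq]
    ring
  sum_card_le := by
    have hAA : ∑ a ∈ A, (neighborsIn G A a).card ≤ A.card * m := Finset.sum_le_card_nsmul _ _ _
      fun a _ => hA ▸ Finset.card_le_card (neighborsIn_subset G A a)
    have hAY' : ∑ a ∈ A, 2 * (neighborsIn G Y a).card ≤ A.card * m :=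
      Finset.sum_le_card_nsmul _ _ _ hsparse
    rw [hA] at hAA hAY'
    rw [← Finset.mul_sum] at hAY'
    simp only [card_neighborsIn_union G hAY]
    rw [Finset.sum_union hAY, Finset.sum_add_distrib, Finset.sum_add_distrib,
      sum_card_neighborsIn_comm G Y A]
    linarith [hY.sum_card_le]

/-- Inside `X` there are `p` sparse blocks for `G` or `q` sparse blocks for `Gᶜ`, of a common size
at least `|X| / D`. -/
def HasSparseBlocks (G : SimpleGraph V) (D p q : ℕ) (X : Finset V) : Prop :=
  ∃ m, 0 < m ∧ m ≤ X.card ∧ X.card ≤ D * m ∧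
    ∃ Y ⊆ X, SparseBlocks G m p Y ∨ SparseBlocks Gᶜ m q Y

lemma HasSparseBlocks.compl (h : HasSparseBlocks G D p q X) : HasSparseBlocks Gᶜ D q p X := by
  obtain ⟨m, hm, hmX, hXm, Y, hY, hsparse⟩ := h
  exact ⟨m, hm, hmX, hXm, Y, hY, by simpa only [compl_compl, or_comm] using hsparse⟩

lemma hasSparseBlocks_of_mul_eq_zero (hX : X.Nonempty) (hD : 0 < D) (hpq : p = 0 ∨ q = 0) :
    HasSparseBlocks G D p q X :=
  ⟨X.card, hX.card_pos, le_rfl, Nat.le_mul_of_pos_left _ hD, ∅, Finset.empty_subset X,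
    hpq.imp (fun h => ⟨by simp [h], by simp⟩) fun h => ⟨by simp [h], by simp⟩⟩

lemma HasSparseBlocks.insert (hD : 0 < D) (hA : A ⊆ X) (hB : B ⊆ X) (hAB : Disjoint A B)
    (hBA : B.card ≤ A.card) (hXB : D * X.card ≤ D' * B.card)
    (hsparse : ∀ a ∈ A, (neighborsIn G B a).card * (2 * D) ≤ B.card)
    (h : HasSparseBlocks G D p q B) : HasSparseBlocks G D' (p + 1) q X := by
  classical
  obtain ⟨m, hm, hmB, hBm, Y, hY, hblocks⟩ := h
  refine ⟨m, hm, hmB.trans (Finset.card_le_card hB), ?_, ?_⟩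
  · refine Nat.le_of_mul_le_mul_left (c := D) ?_ hD
    calc D * X.card ≤ D' * (D * m) := hXB.trans (Nat.mul_le_mul_left _ hBm)
      _ = D * (D' * m) := by ring
  rcases hblocks with hG | hG
  · obtain ⟨A', hA', hA'card⟩ := Finset.exists_subset_card_eq (hmB.trans hBA)
    refine ⟨A' ∪ Y, Finset.union_subset (hA'.trans hA) (hY.trans hB),
      Or.inl (hG.union (hAB.mono hA' hY) hA'card fun a ha => ?_)⟩
    refine Nat.le_of_mul_le_mul_left (c := D) ?_ hD
    calc D * (2 * (neighborsIn G Y a).card)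
        ≤ D * (2 * (neighborsIn G B a).card) := by gcongr; exact neighborsIn_mono G hY a
      _ = (neighborsIn G B a).card * (2 * D) := by ring
      _ ≤ D * m := (hsparse a (hA' ha)).trans hBm
  · exact ⟨Y, hY.trans hB, Or.inr hG⟩

/-- The ratio `|X| / m` in `hasSparseBlocks_of_isEmpty_embedding`, for forbidden graphs on `n`
vertices and `p + q` blocks. -/
def rodlConstant (n : ℕ) : ℕ → ℕ
  | 0 => 1
  | N + 1 => pairConstant n (rodlConstant n N)

lemma rodlConstant_pos (n N : ℕ) : 0 < rodlConstant n N := by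
  induction N with
  | zero => exact one_pos
  | succ N ih =>
    rw [rodlConstant, pairConstant]
    positivity

lemma hasSparseBlocks_of_isEmpty_embedding [Fintype U] (hF : ¬ Nonempty (F ↪g G)) (p q : ℕ)
    (hX : rodlConstant (Fintype.card U) (p + q) ≤ X.card) :
    HasSparseBlocks G (rodlConstant (Fintype.card U) (p + q)) p q X := by
  induction hN : p + q generalizing p q X with
  | zero =>
    exact hasSparseBlocks_of_mul_eq_zero (Finset.card_pos.1 ((rodlConstant_pos _ _).trans_le hX))
      (rodlConstant_pos _ _) (by omega)
  | succ N ih =>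
    rw [hN] at hX
    by_cases hpq : p = 0 ∨ q = 0
    · exact hasSparseBlocks_of_mul_eq_zero (Finset.card_pos.1 ((rodlConstant_pos _ _).trans_le hX))
        (rodlConstant_pos _ _) hpq
    obtain ⟨⟨p, rfl⟩, q, rfl⟩ : (∃ p', p = p' + 1) ∧ ∃ q', q = q' + 1 :=
      ⟨Nat.exists_eq_succ_of_ne_zero (by tauto), Nat.exists_eq_succ_of_ne_zero (by tauto)⟩
    have hN₁ : p + (q + 1) = N := by omega
    have hN₂ : p + 1 + q = N := by omega
    obtain ⟨A, B, ⟨hA, hB, hAB, O, rfl | rfl, hsparse⟩, hBA, hDB, hXB⟩ :=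
      exists_sparsePair hF (rodlConstant_pos _ _) hX
    · exact (ih p (q + 1) (hN₁ ▸ hDB) hN₁).insert (rodlConstant_pos _ _) hA hB hAB hBA hXB hsparse
    · rw [← compl_compl G]
      exact ((ih (p + 1) q (hN₂ ▸ hDB) hN₂).compl.insert (rodlConstant_pos _ _) hA hB hAB hBA hXB
        hsparse).compl

/-- Every vertex of `Y` has at most `ε * |Y|` neighbours in `Y`. -/
def IsSparse (G : SimpleGraph V) (ε : ℝ) (Y : Finset V) : Prop :=
  ∀ v ∈ Y, ((neighborsIn G Y v).card : ℝ) ≤ ε * Y.card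

lemma isSparse_singleton {ε : ℝ} (hε : 0 ≤ ε) (G : SimpleGraph V) (x : V) : IsSparse G ε {x} := by
  intro v hv
  have : neighborsIn G {x} v = ∅ := by
    ext w
    simp_all [mem_neighborsIn]
  simpa [this] using hε

lemma SparseBlocks.exists_isSparse {ε : ℝ} (hY : SparseBlocks G m p Y) (hm : 0 < m)
    (hε : 0 < ε) (hp : 8 ≤ p * ε) :
    ∃ Z ⊆ Y, Z.Nonempty ∧ m ≤ 2 * Z.card ∧ IsSparse G ε Z := by
  set Z := Y.filter fun v => (neighborsIn G Y v).card ≤ 4 * m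
  have hZY : Z ⊆ Y := Finset.filter_subset _ _
  have hp0 : 0 < p := by
    rw [Nat.pos_iff_ne_zero]
    rintro rfl
    norm_num at hp
  have hcard : p * m ≤ 2 * Z.card := by
    rw [← hY.card_eq]
    refine card_le_two_mul_card_filter_le_s12 (by positivity) ?_
    rw [hY.card_eq]
    linarith [hY.sum_card_le]
  have hmZ : m ≤ 2 * Z.card := (Nat.le_mul_of_pos_left m hp0).trans hcard
  refine ⟨Z, hZY, Finset.card_pos.1 (by omega), hmZ, fun v hv => ?_⟩
  have hdeg : (neighborsIn G Z v).card ≤ 4 * m :=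
    (Finset.card_le_card (neighborsIn_mono G hZY v)).trans (Finset.mem_filter.1 hv).2
  have hcardR : (p : ℝ) * m ≤ 2 * Z.card := by exact_mod_cast hcard
  calc ((neighborsIn G Z v).card : ℝ) ≤ 4 * m := by exact_mod_cast hdeg
    _ ≤ ε * (p * m / 2) := by nlinarith [(m.cast_nonneg : (0 : ℝ) ≤ m)]
    _ ≤ ε * Z.card := by gcongr; linarith

lemma HasSparseBlocks.exists_isSparse {ε : ℝ} (h : HasSparseBlocks G D p p X) (hε : 0 < ε)
    (hp : 8 ≤ p * ε) : ∃ Y ⊆ X, Y.Nonempty ∧ X.card ≤ 2 * D * Y.card ∧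
      ∃ O, (O = G ∨ O = Gᶜ) ∧ IsSparse O ε Y := by
  obtain ⟨m, hm, -, hXm, Y, hY, hblocks⟩ := h
  obtain ⟨O, hO, hblocks⟩ : ∃ O, (O = G ∨ O = Gᶜ) ∧ SparseBlocks O m p Y :=
    hblocks.elim (fun h => ⟨G, Or.inl rfl, h⟩) fun h => ⟨Gᶜ, Or.inr rfl, h⟩
  obtain ⟨Z, hZ, hZ0, hmZ, hsparse⟩ := hblocks.exists_isSparse hm hε hp
  exact ⟨Z, hZ.trans hY, hZ0, hXm.trans (by nlinarith), O, hO, hsparse⟩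

/-- Rödl's theorem. -/
lemma exists_isSparse_of_isEmpty_embedding {U : Type*} [Finite U] (F : SimpleGraph U) {ε : ℝ}
    (hε : 0 < ε) : ∃ D : ℕ, 0 < D ∧ ∀ {V : Type*} (G : SimpleGraph V), ¬ Nonempty (F ↪g G) →
      ∀ X : Finset V, X.Nonempty → ∃ Y ⊆ X, Y.Nonempty ∧ X.card ≤ D * Y.card ∧
        ∃ O, (O = G ∨ O = Gᶜ) ∧ IsSparse O ε Y := by
  have := Fintype.ofFinite U
  obtain ⟨p, hp⟩ := exists_nat_ge (8 / ε)
  rw [div_le_iff₀ hε] at hp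
  set D := rodlConstant (Fintype.card U) (p + p)
  refine ⟨2 * D, Nat.mul_pos two_pos (rodlConstant_pos _ _), fun G hF X hX => ?_⟩
  rcases le_total D X.card with hXD | hXD
  · exact (hasSparseBlocks_of_isEmpty_embedding hF p p hXD).exists_isSparse hε hp
  · obtain ⟨x, hx⟩ := hX
    exact ⟨{x}, by simpa using hx, by simp, by simp; omega, G, Or.inl rfl,
      isSparse_singleton hε.le G x⟩

end Rodl

section Colourings

variable {V : Type*} {C : Finset (V → V)} {A Y Z : Finset V} {z l : ℝ}

lemma exists_dense_subset_sum_le {ι : Type*} {Q : Finset ι} {a y : ι → ℝ} {m : ℝ}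
    (hy : ∀ x ∈ Q, y x ≤ z) (hm : 0 ≤ m) (hmz : m - z ≤ ∑ x ∈ Q, y x) :
    ∃ R ⊆ Q, m - z ≤ ∑ x ∈ R, y x ∧ ∑ x ∈ R, y x ≤ m ∧
      (∑ x ∈ R, y x) * ∑ x ∈ Q, a x ≤ (∑ x ∈ R, a x) * ∑ x ∈ Q, y x := by
  classical
  set g : ι → ℝ := fun x => a x * (∑ x ∈ Q, y x) - y x * ∑ x ∈ Q, a x with hg
  have hgsum : ∀ R : Finset ι,
      ∑ x ∈ R, g x = (∑ x ∈ R, a x) * (∑ x ∈ Q, y x) - (∑ x ∈ R, y x) * ∑ x ∈ Q, a x := by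
    simp [hg, Finset.sum_sub_distrib, Finset.sum_mul]
  obtain ⟨R, hR, hmin⟩ := Finset.exists_min_image
    (Q.powerset.filter fun R => m - z ≤ ∑ x ∈ R, y x ∧ 0 ≤ ∑ x ∈ R, g x) Finset.card
    ⟨Q, by simpa [hgsum, mul_comm] using hmz⟩
  simp only [Finset.mem_filter, Finset.mem_powerset, and_imp] at hR hmin
  obtain ⟨hRQ, hRm, hRg⟩ := hR
  refine ⟨R, hRQ, hRm, not_lt.1 fun hlt => ?_, by linarith [hgsum R]⟩
  have hR0 : R.Nonempty := Finset.nonempty_of_sum_ne_zero (hm.trans_lt hlt).ne'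
  have hR1 : (1 : ℝ) ≤ R.card := by exact_mod_cast hR0.card_pos
  obtain ⟨x, hx, hgx⟩ : ∃ x ∈ R, g x ≤ (∑ x ∈ R, g x) / R.card :=
    Finset.exists_le_of_sum_le hR0 (by
      rw [Finset.sum_const, nsmul_eq_mul, mul_div_cancel₀ _ (by positivity)])
  have hyR := Finset.add_sum_erase R y hx
  have hgR := Finset.add_sum_erase R g hx
  have hle := hmin (R.erase x) ((Finset.erase_subset _ _).trans hRQ)
    (by linarith [hy x (hRQ hx)]) (by linarith [div_le_self hRg hR1])
  exact absurd hle (not_le.2 (Finset.card_erase_lt_of_mem hx))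

open Classical in
/-- Each colour class of each colouring in `C` has at most `z * |Y|` members in `Y`. -/
def SmallClasses (C : Finset (V → V)) (z : ℝ) (Y : Finset V) : Prop :=
  ∀ c ∈ C, ∀ x, ((Y.filter (c · = x)).card : ℝ) ≤ z * Y.card

open Classical in
lemma SmallClasses.mono {z' : ℝ} (hC : SmallClasses C z Y) (hZ : Z ⊆ Y)
    (hz : z * Y.card ≤ z' * Z.card) : SmallClasses C z' Z := fun c hc x =>
  le_trans (by exact_mod_cast Finset.card_le_card (Finset.filter_subset_filter _ hZ))
    ((hC c hc x).trans hz)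

open Classical in
lemma exists_subset_separated_of_colouring (c : V → V) (hA : A ⊆ Y)
    (hc : ∀ x, ((Y.filter (c · = x)).card : ℝ) ≤ z * Y.card) (hz : 0 ≤ z) (hzl : 2 * z ≤ l)
    (hl : l ≤ 1) : ∃ A₁ ⊆ A, ∃ S ⊆ Y, (∀ a ∈ A₁, ∀ y ∈ Y, c a = c y → y ∈ S) ∧
      (S.card : ℝ) ≤ l * Y.card ∧ z * A.card ≤ A₁.card := by
  rcases Y.eq_empty_or_nonempty with rfl | hY
  · exact ⟨∅, by simp, ∅, by simp, by simp, by simp, by simp [Finset.subset_empty.1 hA]⟩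
  have hY0 : (0 : ℝ) < Y.card := by exact_mod_cast hY.card_pos
  have hfiber : ∀ B Q : Finset V, ∑ x ∈ Q, ((B.filter (c · = x)).card : ℝ)
      = (B.filter fun b => c b ∈ Q).card := fun B Q => by
    exact_mod_cast Finset.sum_card_fiberwise_eq_card_filter B Q c
  have hfull : ∀ B ⊆ Y, (B.filter fun b => c b ∈ Y.image c) = B := fun B hB =>
    Finset.filter_true_of_mem fun b hb => Finset.mem_image_of_mem c (hB hb)
  obtain ⟨R, -, hR, hRl, hdense⟩ := exists_dense_subset_sum_le (Q := Y.image c)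
    (y := fun x => ((Y.filter (c · = x)).card : ℝ)) (a := fun x => ((A.filter (c · = x)).card : ℝ))
    (z := z * Y.card) (m := l * Y.card) (fun x _ => hc x) (by nlinarith)
    (by rw [hfiber, hfull Y subset_rfl]; nlinarith)
  rw [hfiber, hfiber, hfiber, hfiber, hfull Y subset_rfl, hfull A hA] at hdense
  rw [hfiber] at hR hRl
  refine ⟨A.filter fun b => c b ∈ R, Finset.filter_subset _ _, Y.filter fun b => c b ∈ R,
    Finset.filter_subset _ _, fun a ha y hy hay => ?_, hRl, ?_⟩
  · exact Finset.mem_filter.2 ⟨hy, hay ▸ (Finset.mem_filter.1 ha).2⟩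
  · refine le_of_mul_le_mul_right (le_trans ?_ hdense) hY0
    rw [mul_right_comm]
    gcongr
    nlinarith

lemma SmallClasses.exists_subset_separated (hC : SmallClasses C z Y) (hA : A ⊆ Y) (hz : 0 ≤ z)
    (hzl : 2 * z ≤ l) (hl : l ≤ 1) : ∃ A₁ ⊆ A, ∃ S ⊆ Y,
      (∀ c ∈ C, ∀ a ∈ A₁, ∀ y ∈ Y, c a = c y → y ∈ S) ∧
      (S.card : ℝ) ≤ C.card * (l * Y.card) ∧ z ^ C.card * A.card ≤ A₁.card := by
  classical
  induction C using Finset.induction_on with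
  | empty => exact ⟨A, subset_rfl, ∅, by simp, by simp, by simp, by simp⟩
  | insert c C hc ih =>
    obtain ⟨A₁, hA₁, S₁, hS₁, hsep₁, hS₁card, hA₁card⟩ :=
      ih fun c hc => hC c (Finset.mem_insert_of_mem hc)
    obtain ⟨A₂, hA₂, S₂, hS₂, hsep₂, hS₂card, hA₂card⟩ := exists_subset_separated_of_colouring c
      (hA₁.trans hA) (hC c (Finset.mem_insert_self c C)) hz hzl hl
    refine ⟨A₂, hA₂.trans hA₁, S₁ ∪ S₂, Finset.union_subset hS₁ hS₂, fun d hd a ha y hy hay => ?_,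
      ?_, ?_⟩
    · rcases Finset.mem_insert.1 hd with rfl | hd
      · exact Finset.mem_union_right _ (hsep₂ a ha y hy hay)
      · exact Finset.mem_union_left _ (hsep₁ d hd a (hA₂ ha) y hy hay)
    · have : ((S₁ ∪ S₂).card : ℝ) ≤ S₁.card + S₂.card := by
        exact_mod_cast Finset.card_union_le _ _
      rw [Finset.card_insert_of_notMem hc]
      push_cast
      linarith
    · rw [Finset.card_insert_of_notMem hc, pow_succ', mul_assoc]
      exact (mul_le_mul_of_nonneg_left hA₁card hz).trans hA₂card

end Colourings

section StarComb

variable {V : Type*} {G : SimpleGraph V} {C : Finset (V → V)} {Y I J W E : Finset V}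
  {c z θ d s : ℝ}

/-- A comb in `X` whose teeth form a stable set of neighbours of a vertex, the `center`, that is not
adjacent to any member of a block, and such that no colouring in `C` gives a tooth and a member of a
block the same colour. -/
structure StarComb (G : SimpleGraph V) (C : Finset (V → V)) (X : Finset V) extends Comb G X X where
  center : V
  adj_center : ∀ a ∈ teeth, G.Adj center a
  stable : G.IsIndepSet (teeth : Set V)
  center_block : ∀ a ∈ teeth, ∀ b ∈ block a, center ≠ b ∧ ¬ G.Adj center b
  colour : ∀ c ∈ C, ∀ a ∈ teeth, ∀ a' ∈ teeth, ∀ b ∈ block a', c a ≠ c b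

/-- Every subset of `Y` containing a fraction `α` of `Y` has a vertex with at least `d * |Y|`
neighbours in that subset. -/
def LargeDegrees (G : SimpleGraph V) (α d : ℝ) (Y : Finset V) : Prop :=
  ∀ Z ⊆ Y, α * Y.card ≤ Z.card → ∃ v ∈ Z, d * Y.card ≤ (neighborsIn G Z v).card

/-- `J` is a stable set that, together with its neighbours in `Y`, lies in the subset `W` of `Y`. -/
structure StableCover (G : SimpleGraph V) (Y J W : Finset V) : Prop where
  subset_cover : J ⊆ W
  cover_subset : W ⊆ Y
  stable : G.IsIndepSet (J : Set V)
  neighbors_subset : ∀ a ∈ J, neighborsIn G Y a ⊆ W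

lemma StableCover.empty (G : SimpleGraph V) (Y : Finset V) : StableCover G Y ∅ ∅ :=
  ⟨subset_rfl, Finset.empty_subset Y, by simp [IsIndepSet], by simp⟩

open Classical in
lemma StableCover.union (h : StableCover G Y J W) (hI : I ⊆ Y \ W)
    (hIs : G.IsIndepSet (I : Set V)) (hIE : I ⊆ E) (hE : E ⊆ Y)
    (hnb : ∀ a ∈ I, neighborsIn G Y a ⊆ E) : StableCover G Y (J ∪ I) (W ∪ E) where
  subset_cover := Finset.union_subset_union h.subset_cover hIE
  cover_subset := Finset.union_subset h.cover_subset hE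
  stable := by
    have hcross : ∀ a ∈ J, ∀ b ∈ I, ¬ G.Adj a b := fun a ha b hb hab =>
      (Finset.mem_sdiff.1 (hI hb)).2
        (h.neighbors_subset a ha (mem_neighborsIn.2 ⟨(Finset.mem_sdiff.1 (hI hb)).1, hab⟩))
    intro a ha b hb hne hab
    rcases Finset.mem_union.1 ha with haJ | haI <;> rcases Finset.mem_union.1 hb with hbJ | hbI
    · exact h.stable haJ hbJ hne hab
    · exact hcross a haJ b hbI hab
    · exact hcross b hbJ a haI hab.symm
    · exact hIs haI hbI hne hab
  neighbors_subset a ha := (Finset.mem_union.1 ha).elim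
    (fun haJ => (h.neighbors_subset a haJ).trans Finset.subset_union_left)
    fun haI => (hnb a haI).trans Finset.subset_union_right

open Classical in
/-- `E` consists of the vertices that cannot be in a block of a star-comb with centre `v` and teeth
in `I`. -/
lemma exists_stable_neighbors_separated (hz : 0 < z) (hd : 0 < d) (hθ : θ ≤ 1)
    (hzθ : 8 * (C.card + 1) * z ≤ θ) (hY : IsSparse G z Y) (hC : SmallClasses C z Y)
    (hdeg : LargeDegrees G (1 / 2) d Y)
    (hs : ∀ A ⊆ Y, z ^ C.card * d * Y.card ≤ A.card → s ≤ indepNumOn G A)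
    (hW : (Y.card : ℝ) ≤ 2 * (Y \ W).card) :
    ∃ v ∈ Y, ∃ I ⊆ neighborsIn G (Y \ W) v, G.IsIndepSet (I : Set V) ∧ s ≤ I.card ∧
      ∃ E ⊆ Y, I ⊆ E ∧ (E.card : ℝ) ≤ θ * Y.card ∧
        ∀ b ∈ Y \ E, v ≠ b ∧ ¬ G.Adj v b ∧ ∀ c ∈ C, ∀ a ∈ I, c a ≠ c b := by
  obtain ⟨v, hv, hvd⟩ := hdeg (Y \ W) Finset.sdiff_subset (by linarith)
  have hvY : v ∈ Y := (Finset.mem_sdiff.1 hv).1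
  have hY0 : (0 : ℝ) < Y.card := by exact_mod_cast Finset.card_pos.2 ⟨v, hvY⟩
  have hC0 : (0 : ℝ) ≤ C.card := C.card.cast_nonneg
  have hz1 : 1 ≤ z * Y.card := by
    have h : (0 : ℝ) < (neighborsIn G Y v).card := (by positivity : 0 < d * Y.card).trans_le
      (hvd.trans (by exact_mod_cast Finset.card_le_card (neighborsIn_mono G Finset.sdiff_subset v)))
    exact le_trans (by exact_mod_cast Nat.cast_pos.1 h) (hY v hvY)
  obtain ⟨A, hA, S, hS, hsep, hScard, hAcard⟩ := hC.exists_subset_separated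
    (l := θ / (4 * (C.card + 1)))
    ((neighborsIn_subset G (Y \ W) v).trans Finset.sdiff_subset) hz.le
    (by rw [le_div_iff₀ (by positivity)]; linarith)
    (by rw [div_le_one (by positivity)]; linarith)
  obtain ⟨I, hIA, hI, hIcard⟩ := exists_card_eq_indepNumOn G A
  have hInb : I ⊆ neighborsIn G (Y \ W) v := hIA.trans hA
  refine ⟨v, hvY, I, hInb, hI, hIcard ▸ hs A (hA.trans ((neighborsIn_subset _ _ _).trans
    Finset.sdiff_subset)) (le_trans (by rw [mul_assoc]; gcongr) hAcard),
    insert v (S ∪ neighborsIn G Y v), Finset.insert_subset hvY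
      (Finset.union_subset hS (neighborsIn_subset G Y v)), ?_, ?_, fun b hb => ?_⟩
  · exact hInb.trans ((neighborsIn_mono G Finset.sdiff_subset v).trans
      (Finset.subset_union_right.trans (Finset.subset_insert _ _)))
  · have hE : (insert v (S ∪ neighborsIn G Y v)).card ≤ S.card + (neighborsIn G Y v).card + 1 :=
      (Finset.card_insert_le _ _).trans (Nat.add_le_add_right (Finset.card_union_le _ _) 1)
    have hE' : ((insert v (S ∪ neighborsIn G Y v)).card : ℝ)
        ≤ S.card + (neighborsIn G Y v).card + 1 := by exact_mod_cast hE
    have hS' : C.card * (θ / (4 * (C.card + 1)) * Y.card) ≤ θ / 4 * Y.card := by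
      rw [← mul_assoc]
      gcongr
      rw [mul_div_assoc', div_le_iff₀ (by positivity)]
      nlinarith [mul_nonneg hC0 hz.le]
    have hzθ' : 8 * z ≤ θ := by nlinarith
    nlinarith [hY v hvY]
  · obtain ⟨hbY, hbE⟩ := Finset.mem_sdiff.1 hb
    simp only [Finset.mem_insert, Finset.mem_union, mem_neighborsIn, hbY, true_and, not_or] at hbE
    exact ⟨fun h => hbE.1 h.symm, hbE.2.2, fun c hc a ha hab =>
      hbE.2.1 (hsep c hc a (hIA ha) b hbY hab)⟩

open Classical in
lemma StableCover.exists_extension (h : StableCover G Y J W) (hc : 0 < c) (hz : 0 < z) (hd : 0 < d)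
    (hθ : θ ≤ 1) (hzθ : 8 * (C.card + 1) * z ≤ θ) (hY : IsSparse G z Y) (hC : SmallClasses C z Y)
    (hdeg : LargeDegrees G (1 / 2) d Y)
    (hs : ∀ A ⊆ Y, z ^ C.card * d * Y.card ≤ A.card → s ≤ indepNumOn G A)
    (hW : (Y.card : ℝ) ≤ 2 * (Y \ W).card)
    (hno : ∀ S : StarComb G C Y,
      S.width * (S.teeth.card : ℝ) ^ (1 + c) < combConstant c * (θ * Y.card)) :
    ∃ J' W', StableCover G Y J' W' ∧ (W'.card : ℝ) ≤ W.card + 2 * θ * Y.card ∧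
      J.card + s ≤ J'.card := by
  obtain ⟨v, -, I, hIv, hI, hsI, E, hE, hIE, hEcard, hEsep⟩ :=
    exists_stable_neighbors_separated hz hd hθ hzθ hY hC hdeg hs hW
  have hIY : I ⊆ Y \ W := hIv.trans (neighborsIn_subset _ _ _)
  set B := (Y \ E).filter fun b => ∃ a ∈ I, G.Adj a b
  have hBE : B ⊆ Y \ E := Finset.filter_subset _ _
  have hBY : B ⊆ Y := hBE.trans Finset.sdiff_subset
  have hBcard : (B.card : ℝ) ≤ θ * Y.card := by
    rcases B.eq_empty_or_nonempty with hB0 | hB0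
    · rw [hB0, Finset.card_empty, Nat.cast_zero]
      exact (Nat.cast_nonneg _).trans hEcard
    obtain ⟨T, hT⟩ := exists_comb hc hB0 fun b hb => (Finset.mem_filter.1 hb).2
    have hTB : ∀ a ∈ T.teeth, ∀ b ∈ T.block a, b ∈ Y \ E := fun a ha b hb =>
      hBE (T.block_subset a ha hb)
    have := hno
      { T.mono (hIY.trans Finset.sdiff_subset) hBY with
        center := v
        adj_center := fun a ha => (mem_neighborsIn.1 (hIv (T.teeth_subset ha))).2
        stable := hI.mono (by exact_mod_cast T.teeth_subset)
        center_block := fun a ha b hb =>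
          ⟨(hEsep b (hTB a ha b hb)).1, (hEsep b (hTB a ha b hb)).2.1⟩
        colour := fun c hc a ha a' ha' b hb =>
          (hEsep b (hTB a' ha' b hb)).2.2 c hc a (T.teeth_subset ha) }
    exact (lt_of_mul_lt_mul_left (hT.trans_lt this) (combConstant_pos hc).le).le
  refine ⟨J ∪ I, W ∪ (B ∪ E), h.union hIY hI (hIE.trans Finset.subset_union_right)
    (Finset.union_subset hBY hE) fun a ha b hb => ?_, ?_, ?_⟩
  · obtain ⟨hbY, hab⟩ := mem_neighborsIn.1 hb
    by_cases hbE : b ∈ E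
    · exact Finset.mem_union_right _ hbE
    · exact Finset.mem_union_left _
        (Finset.mem_filter.2 ⟨Finset.mem_sdiff.2 ⟨hbY, hbE⟩, a, ha, hab⟩)
  · have : ((W ∪ (B ∪ E)).card : ℝ) ≤ W.card + (B.card + E.card) := by
      exact_mod_cast (Finset.card_union_le _ _).trans
        (Nat.add_le_add_left (Finset.card_union_le _ _) _)
    linarith
  · have hJI : Disjoint J I := Finset.disjoint_left.2 fun a haJ haI =>
      (Finset.mem_sdiff.1 (hIY haI)).2 (h.subset_cover haJ)
    rw [Finset.card_union_of_disjoint hJI]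
    push_cast
    linarith

lemma exists_stableCover_of_forall_starComb_lt (hc : 0 < c) (hz : 0 < z) (hd : 0 < d) (hθ : θ ≤ 1)
    (hzθ : 8 * (C.card + 1) * z ≤ θ) (hY : IsSparse G z Y) (hC : SmallClasses C z Y)
    (hdeg : LargeDegrees G (1 / 2) d Y)
    (hs : ∀ A ⊆ Y, z ^ C.card * d * Y.card ≤ A.card → s ≤ indepNumOn G A)
    (hno : ∀ S : StarComb G C Y,
      S.width * (S.teeth.card : ℝ) ^ (1 + c) < combConstant c * (θ * Y.card))
    (r : ℕ) (hr : 4 * θ * r ≤ 1) :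
    ∃ J W, StableCover G Y J W ∧ (W.card : ℝ) ≤ 2 * θ * r * Y.card ∧ r * s ≤ J.card := by
  classical
  have hθ0 : 0 < θ := lt_of_lt_of_le (by positivity) hzθ
  induction r with
  | zero => exact ⟨∅, ∅, StableCover.empty G Y, by simp, by simp⟩
  | succ r ih =>
    push_cast at hr ⊢
    obtain ⟨J, W, hJW, hW, hJ⟩ := ih (by linarith)
    have hWY : ((Y \ W).card : ℝ) + W.card = Y.card := by
      exact_mod_cast Finset.card_sdiff_add_card_eq_card hJW.cover_subset
    obtain ⟨J', W', hJW', hW', hJ'⟩ :=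
      hJW.exists_extension hc hz hd hθ hzθ hY hC hdeg hs
        (by nlinarith [(Nat.cast_nonneg _ : (0 : ℝ) ≤ Y.card)]) hno
    exact ⟨J', W', hJW', by linarith, by linarith⟩

lemma exists_starComb_of_largeDegrees (hc : 0 < c) (hz : 0 < z) (hd : 0 < d) (hθ : θ < 1 / 64)
    (hY0 : Y.Nonempty)
    (hzθ : 8 * (C.card + 1) * z ≤ θ) (hY : IsSparse G z Y) (hC : SmallClasses C z Y)
    (hdeg : LargeDegrees G (1 / 2) d Y)
    (hs : ∀ A ⊆ Y, z ^ C.card * d * Y.card ≤ A.card → √θ * indepNumOn G Y ≤ indepNumOn G A) :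
    ∃ S : StarComb G C Y,
      combConstant c * (θ * Y.card) ≤ S.width * (S.teeth.card : ℝ) ^ (1 + c) := by
  by_contra! hno
  have hθ0 : 0 < θ := lt_of_lt_of_le (by positivity) hzθ
  have hM : (0 : ℝ) < indepNumOn G Y := by exact_mod_cast indepNumOn_pos G hY0
  set r := ⌊1 / (4 * θ)⌋₊
  have hr : 4 * θ * r ≤ 1 := by
    have := Nat.floor_le (show 0 ≤ 1 / (4 * θ) by positivity)
    rw [le_div_iff₀ (by positivity)] at this
    linarith
  have hr' : 1 ≤ 8 * θ * r := by
    have := Nat.lt_floor_add_one (1 / (4 * θ))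
    rw [div_lt_iff₀ (by positivity)] at this
    nlinarith
  obtain ⟨J, W, hJW, -, hJ⟩ := exists_stableCover_of_forall_starComb_lt hc hz hd (by linarith) hzθ
    hY hC hdeg hs hno r hr
  have hJM : (J.card : ℝ) ≤ indepNumOn G Y := by
    exact_mod_cast card_le_indepNumOn (hJW.subset_cover.trans hJW.cover_subset) hJW.stable
  have hrθ : r * √θ ≤ 1 := le_of_mul_le_mul_right (by linarith) hM
  have hsqrt : √θ < 1 / 8 := by
    rw [Real.sqrt_lt' (by norm_num)]
    linarith
  have : 8 * θ * r < 1 := by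
    calc 8 * θ * r = 8 * √θ * (r * √θ) := by linear_combination -8 * r * Real.mul_self_sqrt hθ0.le
      _ ≤ 8 * √θ * 1 := by gcongr
      _ < 1 := by linarith
  linarith

end StarComb

section Regular

variable {V : Type*} {G : SimpleGraph V} {Y : Finset V} {e ε η K : ℝ}

lemma exists_subset_forall_half (D : Finset V → ℝ) (hY : Y.Nonempty) (he : 0 < e)
    (hε : ε * 2 ^ (1 + 1 / e) ≤ 1) (hD : ∀ Z, 0 < D Z) (hDY : D Y ≤ ε * Y.card) :
    ∃ Y' ⊆ Y, Y'.Nonempty ∧ ∃ z, 0 < z ∧ z ≤ ε ∧ z ^ e * Y.card ≤ Y'.card ∧ D Y' = z * Y'.card ∧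
      ∀ Z ⊆ Y', (Y'.card : ℝ) ≤ 2 * Z.card → z ^ 2 * Y'.card ≤ D Z := by
  obtain ⟨Y', hY'Y, hY'n, hmin⟩ := exists_min_ratio D (1 + 1 / e) hY
  have hY0 : (0 : ℝ) < Y.card := by exact_mod_cast hY.card_pos
  have hY'0 : (0 : ℝ) < Y'.card := by exact_mod_cast hY'n.card_pos
  have hle : (Y'.card : ℝ) ≤ Y.card := by exact_mod_cast Finset.card_le_card hY'Y
  have hε0 : 0 < ε := pos_of_mul_pos_left ((hD Y).trans_le hDY) hY0.le
  have hε1 : ε ≤ 1 := by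
    nlinarith [Real.one_le_rpow (one_le_two (α := ℝ)) (show 0 ≤ 1 + 1 / e by positivity)]
  obtain ⟨z, hz⟩ : ∃ z, D Y' = z * Y'.card := ⟨D Y' / Y'.card, by field_simp⟩
  have hz0 : 0 < z := pos_of_mul_pos_left (hz ▸ hD Y') hY'0.le
  have hratio : z * (Y.card : ℝ) ^ (1 / e) ≤ ε * (Y'.card : ℝ) ^ (1 / e) := by
    have h := (hmin Y subset_rfl hY).trans (mul_le_mul_of_nonneg_left hDY (by positivity))
    rw [hz, Real.rpow_add hY0, Real.rpow_add hY'0, Real.rpow_one, Real.rpow_one] at h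
    exact le_of_mul_le_mul_right (by linarith) (mul_pos hY0 hY'0)
  have hzε : z ≤ ε := le_of_mul_le_mul_right (hratio.trans (by gcongr))
    (show 0 < (Y.card : ℝ) ^ (1 / e) by positivity)
  refine ⟨Y', hY'Y, hY'n, z, hz0, hzε, ?_, hz, fun Z hZ hZY' => ?_⟩
  · refine (Real.rpow_le_rpow_iff (by positivity) hY'0.le (one_div_pos.2 he)).1 ?_
    rw [Real.mul_rpow (by positivity) hY0.le, ← Real.rpow_mul hz0.le, mul_one_div_cancel he.ne',
      Real.rpow_one]
    nlinarith [Real.rpow_pos_of_pos hY'0 (1 / e)]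
  · have hZ0 : (0 : ℝ) < Z.card := by linarith
    have h := hmin Z (hZ.trans hY'Y) (Finset.card_pos.1 (by exact_mod_cast hZ0))
    have h2 : (Y'.card : ℝ) ^ (1 + 1 / e) ≤ 2 ^ (1 + 1 / e) * (Z.card : ℝ) ^ (1 + 1 / e) := by
      rw [← Real.mul_rpow zero_le_two hZ0.le]
      gcongr
    have h3 : D Y' ≤ 2 ^ (1 + 1 / e) * D Z := by
      refine le_of_mul_le_mul_left (h.trans ?_)
        (show (0 : ℝ) < (Z.card : ℝ) ^ (1 + 1 / e) by positivity)
      nlinarith [hD Z]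
    calc z ^ 2 * Y'.card = z * D Y' := by rw [hz]; ring
      _ ≤ ε * (2 ^ (1 + 1 / e) * D Z) := mul_le_mul hzε h3 (hD Y').le hε0.le
      _ ≤ D Z := by nlinarith [hD Z]

/-- The largest number of neighbours in `Z` of a member of `Z`. -/
noncomputable def maxDegreeOn (G : SimpleGraph V) (Z : Finset V) : ℕ :=
  Z.sup fun v => (neighborsIn G Z v).card

lemma card_neighborsIn_le_maxDegreeOn {Z : Finset V} {v : V} (hv : v ∈ Z) :
    (neighborsIn G Z v).card ≤ maxDegreeOn G Z :=
  Finset.le_sup (f := fun v => (neighborsIn G Z v).card) hv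

lemma exists_card_neighborsIn_eq_maxDegreeOn (G : SimpleGraph V) {Z : Finset V}
    (hZ : Z.Nonempty) : ∃ v ∈ Z, maxDegreeOn G Z = (neighborsIn G Z v).card :=
  Finset.exists_mem_eq_sup Z hZ _

lemma exists_isSparse_largeDegrees_subset (hY0 : Y.Nonempty) (he : 0 < e) (he1 : e ≤ 1)
    (hη : 0 < η) (hηε : η ≤ ε) (hK : 1 ≤ K) (hε : ε * 2 ^ (1 + 1 / e) ≤ 1) (hY : IsSparse G ε Y)
    (hdeg : LargeDegrees G (η / 2) (η ^ K) Y) :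
    ∃ Y' ⊆ Y, Y'.Nonempty ∧ ∃ z, 0 < z ∧ z ≤ ε ∧ z ^ e * Y.card ≤ Y'.card ∧ IsSparse G z Y' ∧
      η * Y.card ≤ z * Y'.card ∧ LargeDegrees G (1 / 2) (z ^ (3 * K)) Y' := by
  have hYpos : (0 : ℝ) < Y.card := by exact_mod_cast hY0.card_pos
  obtain ⟨w, hw, hwY⟩ := exists_card_neighborsIn_eq_maxDegreeOn G hY0
  obtain ⟨Y', hY'Y, hY'n, z, hz, hzε, hsize, hDY', hhalf⟩ := exists_subset_forall_half
    (fun Z => max (maxDegreeOn G Z : ℝ) (η * Y.card)) hY0 he hε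
    (fun Z => lt_max_of_lt_right (by positivity))
    (max_le (hwY ▸ hY w hw) (mul_le_mul_of_nonneg_right hηε hYpos.le))
  have hηY' : η * Y.card ≤ z * Y'.card := hDY' ▸ le_max_right _ _
  have hY'Y' : (Y'.card : ℝ) ≤ Y.card := by exact_mod_cast Finset.card_le_card hY'Y
  have hz1 : z ≤ 1 := hzε.trans (by
    nlinarith [Real.one_le_rpow (one_le_two (α := ℝ)) (show 0 ≤ 1 + 1 / e by positivity)])
  refine ⟨Y', hY'Y, hY'n, z, hz, hzε, hsize, fun v hv => ?_, hηY', fun Z hZ hZc => ?_⟩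
  · rw [← hDY']
    exact le_max_of_le_left (by exact_mod_cast card_neighborsIn_le_maxDegreeOn hv)
  have hZ2 : (Y'.card : ℝ) ≤ 2 * Z.card := by linarith
  have hZ0 : Z.Nonempty := Finset.card_pos.1 (by
    have : (0 : ℝ) < Y'.card := by exact_mod_cast hY'n.card_pos
    exact_mod_cast (by linarith : (0 : ℝ) < Z.card))
  rcases le_max_iff.1 (hhalf Z hZ hZ2) with hmax | hηZ
  · obtain ⟨v, hv, hvZ⟩ := exists_card_neighborsIn_eq_maxDegreeOn G hZ0
    refine ⟨v, hv, le_trans ?_ (hvZ ▸ hmax)⟩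
    gcongr
    rw [← Real.rpow_natCast]
    exact Real.rpow_le_rpow_of_exponent_ge hz hz1 (by push_cast; linarith)
  · obtain ⟨v, hv, hvd⟩ := hdeg Z (hZ.trans hY'Y) (by nlinarith)
    refine ⟨v, hv, le_trans ?_ hvd⟩
    have hz3 : z ^ (3 : ℝ) ≤ η := by
      have hze : z ≤ z ^ e := by
        simpa using Real.rpow_le_rpow_of_exponent_ge hz hz1 he1
      refine le_of_mul_le_mul_right (le_trans ?_ hηZ) hYpos
      calc z ^ (3 : ℝ) * Y.card = z ^ 2 * (z * Y.card) := by norm_cast; ring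
        _ ≤ z ^ 2 * Y'.card := by gcongr; exact (by gcongr : z * (Y.card : ℝ) ≤ _).trans hsize
    rw [Real.rpow_mul hz.le]
    gcongr

end Regular

section StarCombWidth

variable {V : Type*} {G : SimpleGraph V} {C C' : Finset (V → V)} {X X' Y : Finset V}

/-- A star-comb for `G`, `C`, `X` regarded as one in a larger set for fewer colourings. -/
def StarComb.mono (S : StarComb G C X) (hX : X ⊆ X') (hC : C' ⊆ C) : StarComb G C' X' where
  toComb := S.toComb.mono hX hX
  center := S.center
  adj_center := S.adj_center
  stable := S.stable
  center_block := S.center_block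
  colour c hc := S.colour c (hC hc)

lemma StarComb.width_le (S : StarComb G C Y) {z : ℝ} (hY : IsSparse G z Y)
    (hS : S.teeth.Nonempty) : (S.width : ℝ) ≤ z * Y.card := by
  obtain ⟨a, ha⟩ := hS
  refine le_trans ?_ (hY a (S.teeth_subset ha))
  rw [← S.card_block a ha]
  exact_mod_cast Finset.card_le_card fun b hb =>
    mem_neighborsIn.2 ⟨S.block_subset a ha hb, S.adj a ha b hb⟩

lemma exists_rpow_le {a b : ℝ} (ha : 0 < a) (hb : 0 < b) :
    ∃ ε > 0, ∀ z : ℝ, 0 < z → z ≤ ε → z ^ a ≤ b := by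
  refine ⟨b ^ (1 / a), by positivity, fun z hz h => ?_⟩
  have := Real.rpow_le_rpow hz.le h ha.le
  rwa [← Real.rpow_mul hb.le, one_div_mul_cancel ha.ne', Real.rpow_one] at this

variable {c z t k y : ℝ}

lemma one_le_mul_sq_of_rpow_mul_le (hc : 0 < c) (hc1 : c ≤ 1) (hz0 : 0 < z) (hz1 : z ≤ 1)
    (ht : 1 ≤ t) (hy : 0 < y) (hkz : k ≤ z * y)
    (hw : z ^ (c / 8) * y ≤ k * t ^ (1 + c / 8)) : 1 ≤ z * t ^ 2 := by
  have ht0 : 0 < t := by linarith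
  have h : z ^ (c / 8) ≤ z * t ^ (1 + c / 8) := by
    refine le_of_mul_le_mul_right (hw.trans ?_) hy
    calc k * t ^ (1 + c / 8) ≤ z * y * t ^ (1 + c / 8) := by gcongr
      _ = z * t ^ (1 + c / 8) * y := by ring
  have hz : z ^ (1 - c / 8) * z ^ (c / 8) = z := by
    rw [← Real.rpow_add hz0]
    norm_num
  have h1 : 1 ≤ z ^ (1 - c / 8) * t ^ (1 + c / 8) := by
    refine le_of_mul_le_mul_right (le_of_eq_of_le (one_mul _) (h.trans_eq ?_))
      (Real.rpow_pos_of_pos hz0 (c / 8))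
    rw [mul_right_comm, hz]
  have h2 : z ^ (1 - c / 8) ≤ z ^ ((1 + c / 8) / 2) :=
    Real.rpow_le_rpow_of_exponent_ge hz0 hz1 (by linarith)
  have h3 : (z * t ^ 2) ^ ((1 + c / 8) / 2) = z ^ ((1 + c / 8) / 2) * t ^ (1 + c / 8) := by
    rw [Real.mul_rpow hz0.le (by positivity), ← Real.rpow_natCast, ← Real.rpow_mul ht0.le]
    ring_nf
  by_contra! hlt
  have h4 : (z * t ^ 2) ^ ((1 + c / 8) / 2) < 1 :=
    Real.rpow_lt_one (by positivity) hlt (by positivity)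
  nlinarith [Real.rpow_pos_of_pos ht0 (1 + c / 8)]

lemma le_mul_rpow_of_rpow_mul_le {y' : ℝ} (hc : 0 ≤ c) (hz0 : 0 < z) (ht : 1 ≤ t) (hk : 0 ≤ k)
    (hy : 0 ≤ y) (hzt : 1 ≤ z * t ^ 2) (hsize : z ^ (c / 8) * y ≤ y')
    (hw : z ^ (c / 8) * y' ≤ k * t ^ (1 + c / 8)) : y ≤ k * t ^ (1 + c) := by
  have ht0 : 0 < t := by linarith
  have h1 : 1 ≤ z ^ (c / 4) * t ^ (c / 2) := by
    have := Real.one_le_rpow hzt (show 0 ≤ c / 4 by positivity)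
    rwa [Real.mul_rpow hz0.le (by positivity), ← Real.rpow_natCast, ← Real.rpow_mul ht0.le,
      show ((2 : ℕ) : ℝ) * (c / 4) = c / 2 by push_cast; ring] at this
  have hz2 : z ^ (c / 4) = z ^ (c / 8) * z ^ (c / 8) := by
    rw [← Real.rpow_add hz0]
    ring_nf
  calc y ≤ z ^ (c / 4) * t ^ (c / 2) * y := le_mul_of_one_le_left hy h1
    _ = t ^ (c / 2) * (z ^ (c / 8) * (z ^ (c / 8) * y)) := by rw [hz2]; ring
    _ ≤ t ^ (c / 2) * (z ^ (c / 8) * y') := by gcongr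
    _ ≤ t ^ (c / 2) * (k * t ^ (1 + c / 8)) := by gcongr
    _ = k * t ^ (c / 2 + (1 + c / 8)) := by rw [Real.rpow_add ht0 (c / 2)]; ring
    _ ≤ k * t ^ (1 + c) :=
      mul_le_mul_of_nonneg_left (Real.rpow_le_rpow_of_exponent_le ht (by linarith)) hk

/-- The parameters `z` and `d` of a regular subset lose at most a factor `z ^ (j + 3 * K + 2)` in
size, which costs little stability number in a critical set. -/
lemma Critical.rpow_mul_indepNumOn_le {σ K b : ℝ} {A : Finset V} (h : Critical G σ X) (hAX : A ⊆ X)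
    (hσ : 0 < σ) (hz : 0 < z) (hz1 : z ≤ 1) (hK : K * σ ≤ b) (hA : z ^ K * X.card ≤ A.card) :
    z ^ b * indepNumOn G X ≤ indepNumOn G A := by
  have hX0 : (0 : ℝ) < X.card := by exact_mod_cast h.nonempty.card_pos
  have hpow : z ^ b * (X.card : ℝ) ^ σ ≤ (A.card : ℝ) ^ σ :=
    calc z ^ b * (X.card : ℝ) ^ σ ≤ z ^ (K * σ) * (X.card : ℝ) ^ σ :=
          mul_le_mul_of_nonneg_right (Real.rpow_le_rpow_of_exponent_ge hz hz1 hK) (by positivity)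
      _ = (z ^ K * X.card) ^ σ := by
          rw [Real.mul_rpow (by positivity) hX0.le, Real.rpow_mul hz.le]
      _ ≤ (A.card : ℝ) ^ σ := by gcongr
  refine le_of_mul_le_mul_left (le_trans ?_ (h.card_rpow_mul_indepNumOn_le hAX))
    (show 0 < (X.card : ℝ) ^ σ by positivity)
  calc (X.card : ℝ) ^ σ * (z ^ b * indepNumOn G X) = z ^ b * (X.card : ℝ) ^ σ * indepNumOn G X := by
        ring
    _ ≤ (A.card : ℝ) ^ σ * indepNumOn G X := by gcongr

lemma exists_starComb_of_isSparse_largeDegrees {j : ℕ} {σ K : ℝ} (hc : 0 < c) (hc1 : c ≤ 1)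
    (hz : 0 < z) (hz65 : z ^ (c / 16) ≤ 1 / 65) (hzκ : z ^ (c / 16) ≤ combConstant (c / 8))
    (hzj : z ^ (1 / 2 : ℝ) ≤ 1 / (8 * (j + 1))) (hσ : 0 < σ) (hσK : (j + 3 * K + 2) * σ ≤ c / 32)
    (hX : Critical G σ X) (hCj : C.card ≤ j) (hYX : Y ⊆ X) (hY0 : Y.Nonempty)
    (hXY : z ^ 2 * X.card ≤ Y.card) (hY : IsSparse G z Y) (hC : SmallClasses C z Y)
    (hdeg : LargeDegrees G (1 / 2) (z ^ (3 * K)) Y) :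
    ∃ S : StarComb G C Y, z ^ (c / 8) * Y.card ≤ S.width * (S.teeth.card : ℝ) ^ (1 + c / 8) := by
  have hz1 : z ≤ 1 := by
    by_contra! h
    linarith [Real.one_le_rpow h.le (show 0 ≤ c / 16 by positivity)]
  have hCj' : (C.card : ℝ) ≤ j := by exact_mod_cast hCj
  have hsqrt : √(z ^ (c / 16)) = z ^ (c / 32) := by
    rw [Real.sqrt_eq_rpow, ← Real.rpow_mul hz.le]
    ring_nf
  have hzθ : 8 * (C.card + 1) * z ≤ z ^ (c / 16) := by
    rw [le_div_iff₀ (by positivity)] at hzj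
    calc 8 * (C.card + 1) * z = z ^ (1 / 2 : ℝ) * (8 * (C.card + 1)) * z ^ (1 / 2 : ℝ) := by
          have : z ^ (1 / 2 : ℝ) * z ^ (1 / 2 : ℝ) = z := by
            rw [← Real.rpow_add hz, add_halves, Real.rpow_one]
          linear_combination (-8 * (C.card + 1)) * this
      _ ≤ z ^ (1 / 2 : ℝ) * (8 * (j + 1)) * z ^ (1 / 2 : ℝ) := by gcongr
      _ ≤ 1 * z ^ (c / 16) := mul_le_mul hzj
          (Real.rpow_le_rpow_of_exponent_ge hz hz1 (by linarith)) (by positivity) zero_le_one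
      _ = z ^ (c / 16) := one_mul _
  obtain ⟨S, hS⟩ := exists_starComb_of_largeDegrees (c := c / 8) (by positivity) hz
    (by positivity : 0 < z ^ (3 * K)) (θ := z ^ (c / 16)) (by linarith) hY0 hzθ hY hC hdeg
    fun A hAY hA => by
      rw [hsqrt]
      refine le_trans (by gcongr; exact indepNumOn_mono G hYX)
        (hX.rpow_mul_indepNumOn_le (hAY.trans hYX) hσ hz hz1 hσK (le_trans ?_ hA))
      calc z ^ (j + 3 * K + 2) * X.card = z ^ j * z ^ (3 * K) * (z ^ 2 * X.card) := by
            rw [Real.rpow_add hz, Real.rpow_add hz, Real.rpow_two, Real.rpow_natCast]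
            ring
        _ ≤ z ^ C.card * z ^ (3 * K) * Y.card := by
            gcongr ?_ * _ * ?_
            exact pow_le_pow_of_le_one hz.le hz1 hCj
  refine ⟨S, le_trans ?_ hS⟩
  calc z ^ (c / 8) * Y.card = z ^ (c / 16) * (z ^ (c / 16) * Y.card) := by
        rw [← mul_assoc, ← Real.rpow_add hz]
        ring_nf
    _ ≤ combConstant (c / 8) * (z ^ (c / 16) * Y.card) := by gcongr

lemma StarComb.width_bounds (S : StarComb G C Y) {n : ℝ} (hc : 0 < c) (hc1 : c ≤ 1) (hz : 0 < z)
    (hz1 : z ≤ 1) (hY0 : Y.Nonempty) (hY : IsSparse G z Y) (hn : 0 ≤ n)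
    (hsize : z ^ (c / 8) * n ≤ Y.card)
    (hw : z ^ (c / 8) * Y.card ≤ S.width * (S.teeth.card : ℝ) ^ (1 + c / 8)) :
    1 ≤ z * (S.teeth.card : ℝ) ^ 2 ∧ n ≤ S.width * (S.teeth.card : ℝ) ^ (1 + c) := by
  have hYpos : (0 : ℝ) < Y.card := by exact_mod_cast hY0.card_pos
  have hteeth : S.teeth.Nonempty := by
    rw [Finset.nonempty_iff_ne_empty]
    intro h
    rw [h, Finset.card_empty, Nat.cast_zero, Real.zero_rpow (by positivity), mul_zero] at hw
    exact absurd hw (not_le.2 (by positivity))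
  have ht : (1 : ℝ) ≤ S.teeth.card := by exact_mod_cast hteeth.card_pos
  have hzt := one_le_mul_sq_of_rpow_mul_le hc hc1 hz hz1 ht hYpos (S.width_le hY hteeth) hw
  exact ⟨hzt, le_mul_rpow_of_rpow_mul_le hc.le hz ht (Nat.cast_nonneg _) hn hzt hsize hw⟩

lemma exists_starComb_of_isSparse {K : ℝ} (hc : 0 < c) (hc1 : c ≤ 1) (hK : 1 ≤ K) (j : ℕ) :
    ∃ ε₀ > 0, ∃ σ₀ > 0, ∀ {V : Type*} {G : SimpleGraph V} {C : Finset (V → V)} {X Y : Finset V}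
      {σ η ε : ℝ}, C.card ≤ j → Y ⊆ X → Y.Nonempty → 0 < σ → σ ≤ σ₀ → Critical G σ X →
      0 < η → η ≤ ε → ε ≤ ε₀ → ε * X.card ≤ Y.card → IsSparse G ε Y → SmallClasses C η Y →
      LargeDegrees G (η / 2) (η ^ K) Y →
      ∃ S : StarComb G C Y, 1 ≤ ε * (S.teeth.card : ℝ) ^ 2 ∧
        (Y.card : ℝ) ≤ S.width * (S.teeth.card : ℝ) ^ (1 + c) := by
  obtain ⟨ε₁, hε₁, h₁⟩ := exists_rpow_le one_pos
    (show (0 : ℝ) < 1 / 2 ^ (1 + 1 / (c / 8)) by positivity)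
  obtain ⟨ε₂, hε₂, h₂⟩ := exists_rpow_le (show (0 : ℝ) < 1 / 2 by norm_num)
    (show (0 : ℝ) < 1 / (8 * (j + 1)) by positivity)
  have hκ := combConstant_pos (show 0 < c / 8 by positivity)
  obtain ⟨ε₃, hε₃, h₃⟩ := exists_rpow_le (show (0 : ℝ) < c / 16 by positivity)
    (show (0 : ℝ) < min (1 / 65) (combConstant (c / 8)) by positivity)
  refine ⟨min 1 (min ε₁ (min ε₂ ε₃)), by positivity, c / 32 / (j + 3 * K + 2), by positivity, ?_⟩
  intro V G C X Y σ η ε hCj hYX hY0 hσ hσ₀ hX hη hηε hε₀ hXY hY hC hdeg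
  simp only [le_min_iff] at hε₀ h₃
  obtain ⟨hε1, hεε₁, hεε₂, hεε₃⟩ := hε₀
  have hε := h₁ ε (hη.trans_le hηε) hεε₁
  rw [Real.rpow_one, le_div_iff₀ (by positivity)] at hε
  obtain ⟨Y', hY'Y, hY'0, z, hz, hzε, hsize, hY', hηY', hdeg'⟩ :=
    exists_isSparse_largeDegrees_subset hY0 (show 0 < c / 8 by positivity) (by linarith) hη hηε hK
      hε hY hdeg
  have hz1 := hzε.trans hε1
  have hXY' : z ^ 2 * X.card ≤ Y'.card :=
    calc z ^ 2 * X.card = z * (z * X.card) := by ring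
      _ ≤ z ^ (c / 8) * (ε * X.card) := by
        gcongr
        simpa using Real.rpow_le_rpow_of_exponent_ge hz hz1 (show c / 8 ≤ 1 by linarith)
      _ ≤ z ^ (c / 8) * Y.card := by gcongr
      _ ≤ Y'.card := hsize
  obtain ⟨h65, hκz⟩ := h₃ z hz (hzε.trans hεε₃)
  obtain ⟨S, hS⟩ := exists_starComb_of_isSparse_largeDegrees hc hc1 hz h65 hκz
    (h₂ z hz (hzε.trans hεε₂)) hσ (by rwa [le_div_iff₀' (by positivity)] at hσ₀) hX hCj
    (hY'Y.trans hYX) hY'0 hXY' hY' (hC.mono hY'Y hηY') hdeg'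
  obtain ⟨hzt, hwidth⟩ :=
    S.width_bounds hc hc1 hz hz1 hY'0 hY' (Nat.cast_nonneg Y.card) hsize hS
  exact ⟨S.mono hY'Y subset_rfl, hzt.trans (mul_le_mul_of_nonneg_right hzε (by positivity)), hwidth⟩

end StarCombWidth

section SparseCritical

variable {V : Type*} {G O : SimpleGraph V} {C : Finset (V → V)} {X X' : Finset V} {σ σ' c : ℝ}

lemma half_le_rpow_inv {D : ℕ} (hD : 0 < D) {x : ℝ} (hx : (D : ℝ)⁻¹ ≤ x) :
    1 / 2 ≤ x ^ (D : ℝ)⁻¹ := by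
  calc (1 / 2 : ℝ) = ((1 / 2 : ℝ) ^ D) ^ (D : ℝ)⁻¹ :=
        (Real.pow_rpow_inv_natCast (by norm_num) hD.ne').symm
    _ ≤ x ^ (D : ℝ)⁻¹ := by
        gcongr
        refine le_trans ?_ hx
        rw [one_div, inv_pow]
        gcongr
        exact_mod_cast Nat.lt_two_pow_self.le

lemma IsSparse.mono {ε ε' : ℝ} (h : IsSparse G ε X) (hX' : X' ⊆ X)
    (hε : ε * X.card ≤ ε' * X'.card) : IsSparse G ε' X' := fun v hv =>
  le_trans (by exact_mod_cast Finset.card_le_card (neighborsIn_mono G hX' v))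
    ((h v (hX' hv)).trans hε)

lemma exists_isSparse_critical {U : Type*} [Finite U] (F : SimpleGraph U) {ε : ℝ} (hε : 0 < ε)
    (hσ' : 0 < σ') : ∃ D : ℝ, 1 ≤ D ∧ ∃ σ > 0, ∀ {V : Type*} (G : SimpleGraph V),
      ¬ Nonempty (F ↪g G) → ∀ X, Critical G σ X → ∃ X' ⊆ X, Critical G σ' X' ∧
        (X.card : ℝ) ≤ D * X'.card ∧ ∃ O, (O = G ∨ O = Gᶜ) ∧ IsSparse O ε X' := by
  obtain ⟨D, hD, hsparse⟩ := exists_isSparse_of_isEmpty_embedding F (half_pos hε)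
  have hD1 : (1 : ℝ) ≤ D := by exact_mod_cast hD
  have hDinv : (D : ℝ)⁻¹ ≤ 1 := inv_le_one_of_one_le₀ hD1
  refine ⟨2 * D, by linarith, (D : ℝ)⁻¹ * σ' / 2, by positivity, fun {V} G hG X hX => ?_⟩
  obtain ⟨Y, hYX, hY0, hXY, O, hO, hY⟩ := hsparse G hG X hX.nonempty
  have hXY' : (X.card : ℝ) ≤ D * Y.card := by exact_mod_cast hXY
  have hXpos : (0 : ℝ) < X.card := by exact_mod_cast hX.nonempty.card_pos
  obtain ⟨X', hX', hcrit, hle⟩ := hX.exists_critical_subset hYX hY0 (σ' := σ') (r := (D : ℝ)⁻¹)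
    (by positivity) (by nlinarith) (by nlinarith [mul_pos (inv_pos.2 (hD1.trans_lt' one_pos)) hσ'])
  have hhalf := half_le_rpow_inv hD (x := (Y.card : ℝ) / X.card) (by
    rw [le_div_iff₀ hXpos, inv_mul_le_iff₀ (by positivity)]
    exact hXY')
  have hYX' : (Y.card : ℝ) ≤ 2 * X'.card := by
    nlinarith [mul_le_mul_of_nonneg_left hhalf (Nat.cast_nonneg (α := ℝ) Y.card)]
  exact ⟨X', hX'.trans hYX, hcrit, by nlinarith, O, hO, hY.mono hX' (by nlinarith)⟩

/-- On `X'` the map `f` sends each vertex to a tooth whose block contains it, so that `f` colours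
the vertices in the blocks of the star-comb by their block. -/
def IsBlockMap (S : StarComb G C X) (X' : Finset V) (f : V → V) : Prop :=
  ∀ b ∈ X', f b ∈ S.teeth ∧ b ∈ S.block (f b)

open Classical in
lemma exists_isBlockMap (S : StarComb G C X) :
    ∃ f, IsBlockMap S (S.teeth.biUnion S.block) f := by
  have h : ∀ b, ∃ a, b ∈ S.teeth.biUnion S.block → a ∈ S.teeth ∧ b ∈ S.block a := fun b => by
    by_cases hb : b ∈ S.teeth.biUnion S.block
    · obtain ⟨a, ha⟩ := Finset.mem_biUnion.1 hb
      exact ⟨a, fun _ => ha⟩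
    · exact ⟨b, fun h => absurd h hb⟩
  choose f hf using h
  exact ⟨f, hf⟩

open Classical in
lemma Comb.card_biUnion_block {I B : Finset V} (S : Comb G I B) :
    (S.teeth.biUnion S.block).card = S.teeth.card * S.width := by
  rw [Finset.card_biUnion, Finset.sum_congr rfl S.card_block, Finset.sum_const, smul_eq_mul]
  intro a ha a' ha' hne
  refine Finset.disjoint_left.2 fun b hb hb' => ?_
  exact S.not_adj a ha b hb a' ha' hne.symm (S.adj a' ha' b hb')

lemma StarComb.exists_critical_subset (S : StarComb O C X) (hX : Critical G σ X) (hσ : 0 < σ)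
    (hσ' : 2 * σ ≤ σ') (hw : (X.card : ℝ) ≤ S.width * (S.teeth.card : ℝ) ^ (1 + c))
    (hS : S.teeth.Nonempty) : ∃ X' ⊆ X, ∃ f, IsBlockMap S X' f ∧ Critical G σ' X' ∧
      (X.card : ℝ) ≤ (S.teeth.card : ℝ) ^ (2 * c) * X'.card ∧
      (S.width : ℝ) * S.teeth.card ≤ (S.teeth.card : ℝ) ^ c * X'.card := by
  classical
  obtain ⟨f, hf⟩ := exists_isBlockMap S
  have hcard := S.card_biUnion_block
  set U := S.teeth.biUnion S.block
  have hUX : U ⊆ X := Finset.biUnion_subset.2 S.block_subset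
  have hXpos : (0 : ℝ) < X.card := by exact_mod_cast hX.nonempty.card_pos
  have ht : (0 : ℝ) < S.teeth.card := by exact_mod_cast hS.card_pos
  have hXU : (X.card : ℝ) ≤ (S.teeth.card : ℝ) ^ c * U.card := by
    rw [hcard]
    rw [Real.rpow_add ht, Real.rpow_one] at hw
    push_cast
    linarith
  have hU0 : (0 : ℝ) < U.card := pos_of_mul_pos_right (hXpos.trans_le hXU) (by positivity)
  obtain ⟨X', hX'U, hcrit, hle⟩ := hX.exists_critical_subset hUX (r := 1) (σ' := σ')
    (Finset.card_pos.1 (by exact_mod_cast hU0)) hσ (by linarith) (by linarith)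
  rw [Real.rpow_one, mul_div_assoc', div_le_iff₀ hXpos] at hle
  have hUX' : (U.card : ℝ) ≤ (S.teeth.card : ℝ) ^ c * X'.card := by
    refine le_of_mul_le_mul_right ?_ hU0
    calc (U.card : ℝ) * U.card ≤ X'.card * X.card := hle
      _ ≤ X'.card * ((S.teeth.card : ℝ) ^ c * U.card) := by gcongr
      _ = _ := by ring
  refine ⟨X', hX'U.trans hUX, f, fun b hb => hf b (hX'U hb), hcrit, ?_, ?_⟩
  · rw [two_mul, Real.rpow_add ht, mul_assoc]
    exact hXU.trans (by gcongr)
  · rw [hcard] at hUX'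
    push_cast at hUX'
    linarith

end SparseCritical

section Tame

variable {V : Type*} {G O : SimpleGraph V} {C C' : Finset (V → V)} {X Y : Finset V}
  {α d δ σ σ' c c' K : ℝ} {t : ℕ}

/-- Some star-comb with `t` teeth in `G` or its complement is wide: its blocks have size at least
`|X| / t ^ (1 + c)`. -/
def HasComb (G : SimpleGraph V) (C : Finset (V → V)) (c : ℝ) (X : Finset V) (t : ℕ) : Prop :=
  ∃ O, (O = G ∨ O = Gᶜ) ∧ ∃ S : StarComb O C X, S.teeth.card = t ∧
    (X.card : ℝ) ≤ S.width * (t : ℝ) ^ (1 + c)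

lemma HasComb.le_card (h : HasComb G C c X t) : t ≤ X.card := by
  obtain ⟨O, -, S, rfl, -⟩ := h
  exact Finset.card_le_card S.teeth_subset

lemma HasComb.mono (h : HasComb G C' c' Y t) (hY : Y ⊆ X) (hC : C ⊆ C') (hc' : 0 ≤ c')
    (hc : c' ≤ c) (hXY : (X.card : ℝ) ≤ (t : ℝ) ^ (c - c') * Y.card) : HasComb G C c X t := by
  obtain ⟨O, hO, S, rfl, hw⟩ := h
  refine ⟨O, hO, S.mono hY hC, rfl, hXY.trans ?_⟩
  calc (S.teeth.card : ℝ) ^ (c - c') * Y.card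
      ≤ (S.teeth.card : ℝ) ^ (c - c') * (S.width * (S.teeth.card : ℝ) ^ (1 + c')) := by gcongr
    _ = S.width * ((S.teeth.card : ℝ) ^ (c - c') * (S.teeth.card : ℝ) ^ (1 + c')) := by ring
    _ = S.width * (S.teeth.card : ℝ) ^ (1 + c) := by
        rw [← Real.rpow_add_of_nonneg (Nat.cast_nonneg _) (by linarith) (by linarith)]
        ring_nf

/-- A critical set with small colour classes in which all large subsets have vertices of large
degree, in `G` and in its complement, and in which wide star-combs do not have many teeth. The
smaller `δ` is, the tamer the set. -/
structure Tame (G : SimpleGraph V) (C : Finset (V → V)) (X : Finset V) (δ σ c K : ℝ) : Prop where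
  critical : Critical G σ X
  smallClasses : SmallClasses C δ X
  largeDegrees : ∀ O, (O = G ∨ O = Gᶜ) → LargeDegrees O δ (δ ^ K) X
  card_teeth_le : ∀ t, HasComb G C c X t → δ ^ K * t ≤ 1

lemma Tame.mono (h : Tame G C X δ σ c K) (hσ : 0 < σ) (hσ' : σ ≤ σ') : Tame G C X δ σ' c K :=
  { h with critical := h.critical.mono hσ hσ' }

lemma LargeDegrees.mono {α' d' : ℝ} (h : LargeDegrees G α d X) (hY : Y ⊆ X)
    (hα : α * X.card ≤ α' * Y.card) (hd : d' * Y.card ≤ d * X.card) :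
    LargeDegrees G α' d' Y := fun Z hZ hZc => by
  obtain ⟨v, hv, hdeg⟩ := h Z (hZ.trans hY) (hα.trans hZc)
  exact ⟨v, hv, hd.trans hdeg⟩

lemma Tame.restrict {D : ℝ} (h : Tame G C X (δ ^ 2) σ c K) (hY : Y ⊆ X) (hYσ : Critical G σ' Y)
    (hXY : (X.card : ℝ) ≤ D * Y.card) (hδ : 0 < δ) (hδ1 : δ ≤ 1) (hδD : δ * D ≤ 1)
    (hD : 0 < D) (hδD' : δ * D ^ (2 / c) ≤ 1) (hK : 1 ≤ K) (hc' : 0 < c') (hc : 2 * c' ≤ c) :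
    Tame G C Y δ σ' c' (2 * K) := by
  have hc0 : 0 < c := by linarith
  have hpow : δ ^ (2 * K) = (δ ^ 2) ^ K := by rw [← Real.rpow_two, ← Real.rpow_mul hδ.le]
  have hδXY : δ ^ 2 * X.card ≤ δ * Y.card :=
    calc δ ^ 2 * X.card ≤ δ ^ 2 * (D * Y.card) := by gcongr
      _ = δ * (δ * D * Y.card) := by ring
      _ ≤ δ * (1 * Y.card) := by gcongr
      _ = δ * Y.card := by rw [one_mul]
  refine ⟨hYσ, h.smallClasses.mono hY hδXY, fun O hO => (h.largeDegrees O hO).mono hY hδXY ?_,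
    fun t ht => ?_⟩
  · rw [hpow]
    gcongr
  rcases le_total D ((t : ℝ) ^ (c / 2)) with hDt | hDt
  · rw [hpow]
    refine h.card_teeth_le t (ht.mono hY subset_rfl hc'.le (by linarith) (hXY.trans ?_))
    rcases t.eq_zero_or_pos with rfl | ht0
    · rw [Nat.cast_zero, Real.zero_rpow (by linarith)] at hDt
      exact absurd hDt (not_le.2 hD)
    have ht1 : (1 : ℝ) ≤ t := by exact_mod_cast ht0
    gcongr
    exact hDt.trans (Real.rpow_le_rpow_of_exponent_le ht1 (by linarith))
  · calc δ ^ (2 * K) * t = δ ^ (2 * K) * ((t : ℝ) ^ (c / 2)) ^ (2 / c) := by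
          rw [← Real.rpow_mul (Nat.cast_nonneg _), show c / 2 * (2 / c) = 1 by field_simp,
            Real.rpow_one]
      _ ≤ δ ^ (1 : ℝ) * D ^ (2 / c) := by
          gcongr ?_ * ?_
          · exact Real.rpow_le_rpow_of_exponent_ge hδ hδ1 (by linarith)
          · gcongr
      _ ≤ 1 := by rwa [Real.rpow_one]

end Tame

section Descent

variable {V : Type*} {G O : SimpleGraph V} {C : Finset (V → V)} {X X' : Finset V} {f : V → V}
  {c δ σ η K t : ℝ}

lemma Tame.exists_starComb (hc : 0 < c) (hc1 : c ≤ 1) (hK : 1 ≤ K) (j : ℕ) :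
    ∃ ε₀ > 0, ∃ σ₀ > 0, ∀ {V : Type*} {G O : SimpleGraph V} {C : Finset (V → V)} {X Y : Finset V}
      {σ η ε c₀ : ℝ}, C.card ≤ j → Tame G C X (η ^ 3) σ c₀ K → 0 < σ → σ ≤ σ₀ → 0 < η →
      η ≤ 1 / 2 → (O = G ∨ O = Gᶜ) → Y ⊆ X → Y.Nonempty → η ≤ ε → ε ≤ ε₀ →
      ε * X.card ≤ Y.card → IsSparse O ε Y →
      ∃ S : StarComb O C Y, 1 ≤ ε * (S.teeth.card : ℝ) ^ 2 ∧
        (Y.card : ℝ) ≤ S.width * (S.teeth.card : ℝ) ^ (1 + c) := by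
  obtain ⟨ε₀, hε₀, σ₀, hσ₀, hcomb⟩ :=
    exists_starComb_of_isSparse hc hc1 (show 1 ≤ 3 * K by linarith) j
  refine ⟨ε₀, hε₀, σ₀, hσ₀, fun {V G O C X Y σ η ε c₀} hCj hX hσ hσσ₀ hη hη2 hO hYX hY0 hηε hεε₀
    hXY hY => ?_⟩
  have hηXY : η * X.card ≤ Y.card := le_trans (by gcongr) hXY
  have hη3 : η ^ 3 * X.card ≤ η / 2 * Y.card :=
    calc η ^ 3 * X.card = η * η * (η * X.card) := by ring
      _ ≤ η * (1 / 2) * Y.card := by gcongr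
      _ = _ := by ring
  have hηK : η ^ (3 * K) = (η ^ 3) ^ K := by exact_mod_cast Real.rpow_mul hη.le 3 K
  refine hcomb hCj hYX hY0 hσ hσσ₀ (hX.critical.of_eq_or hO) hη hηε hεε₀ hXY hY
    (hX.smallClasses.mono hYX (hη3.trans ?_)) ((hX.largeDegrees O hO).mono hYX hη3 ?_)
  · gcongr
    linarith
  · rw [hηK]
    gcongr

lemma le_rpow_of_one_le_rpow_neg_mul_sq {s : ℝ} (hc : 0 < c) (ht : 0 < t) (hs : 0 ≤ s)
    (h : 1 ≤ t ^ (-(4 / c)) * s ^ 2) : t ≤ s ^ (c / 2) := by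
  rw [Real.rpow_neg ht.le, inv_mul_eq_div, le_div_iff₀ (by positivity), one_mul] at h
  calc t = (t ^ (4 / c)) ^ (c / 4) := by
        rw [← Real.rpow_mul ht.le, show 4 / c * (c / 4) = 1 by field_simp, Real.rpow_one]
    _ ≤ (s ^ 2) ^ (c / 4) := by gcongr
    _ = s ^ (c / 2) := by
        rw [← Real.rpow_two, ← Real.rpow_mul hs]
        ring_nf

/-- A sparse subset would contain a star-comb with more teeth than the widest one. -/
lemma Tame.exists_not_isSparse (hc : 0 < c) (hc1 : c ≤ 1) (hK : 1 ≤ K) (j : ℕ) :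
    ∃ ε₀ > (0 : ℝ), ∃ σ₀ > 0, ∀ {V : Type*} {G O : SimpleGraph V} {C : Finset (V → V)}
      {X Y : Finset V} {σ η c₀ : ℝ} {t : ℕ}, C.card ≤ j → Tame G C X (η ^ 3) σ c₀ K → 0 < σ →
      σ ≤ σ₀ → 0 < η → η ≤ 1 / 2 → (∀ t', HasComb G C c X t' → t' ≤ t) → 2 ≤ t → 1 ≤ ε₀ * t →
      η ≤ (t : ℝ) ^ (-(4 / c)) → (O = G ∨ O = Gᶜ) → Y ⊆ X → Y.Nonempty →
      (X.card : ℝ) ≤ t * Y.card → ¬ IsSparse O ((t : ℝ) ^ (-(4 / c))) Y := by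
  obtain ⟨ε₀, hε₀, σ₀, hσ₀, hcomb⟩ := Tame.exists_starComb (half_pos hc) (by linarith) hK j
  refine ⟨ε₀, hε₀, σ₀, hσ₀, fun {V G O C X Y σ η c₀ t} hCj hX hσ hσσ₀ hη hη2 hmax ht2 hεt hηt hO
    hYX hY0 hXY hY => ?_⟩
  have ht : (2 : ℝ) ≤ t := by exact_mod_cast ht2
  have ht0 : (0 : ℝ) < t := by linarith
  have htinv : (t : ℝ) ^ (-(4 / c)) ≤ (t : ℝ)⁻¹ := by
    rw [← Real.rpow_neg_one]
    refine Real.rpow_le_rpow_of_exponent_le (by linarith) (neg_le_neg ?_)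
    rw [le_div_iff₀ hc]
    linarith
  obtain ⟨S, hteeth, hwidth⟩ := hcomb hCj hX hσ hσσ₀ hη hη2 hO hYX hY0 hηt
    (htinv.trans (by rwa [inv_le_iff_one_le_mul₀ ht0]))
    ((mul_le_mul_of_nonneg_right htinv (Nat.cast_nonneg _)).trans (by
      rwa [inv_mul_le_iff₀ ht0])) hY
  have hts := le_rpow_of_one_le_rpow_neg_mul_sq hc ht0 (Nat.cast_nonneg _) hteeth
  have hcombY : HasComb G C (c / 2) Y S.teeth.card := ⟨O, hO, S, rfl, hwidth⟩
  have hle := hmax _ (hcombY.mono hYX subset_rfl (by linarith) (by linarith) (hXY.trans (by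
    rw [sub_half]
    gcongr)))
  have hle' : (S.teeth.card : ℝ) ^ (c / 2) ≤ (t : ℝ) ^ (c / 2) := by gcongr
  have hlt : (t : ℝ) ^ (c / 2) < (t : ℝ) ^ (1 : ℝ) :=
    Real.rpow_lt_rpow_of_exponent_lt (by linarith) (by linarith)
  rw [Real.rpow_one] at hlt
  linarith

open Classical in
lemma SmallClasses.insert_of_width_le {S : StarComb O C X} (hC : SmallClasses C δ X')
    (hf : IsBlockMap S X' f) (hw : (S.width : ℝ) ≤ δ * X'.card) :
    SmallClasses (insert f C) δ X' := by
  intro g hg x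
  rcases Finset.mem_insert.1 hg with rfl | hg
  · refine le_trans ?_ hw
    rcases (X'.filter (g · = x)).eq_empty_or_nonempty with h | ⟨y, hy⟩
    · simp [h]
    rw [Finset.mem_filter] at hy
    rw [← S.card_block x (hy.2 ▸ (hf y hy.1).1)]
    refine Nat.cast_le.2 (Finset.card_le_card fun z hz => ?_)
    rw [Finset.mem_filter] at hz
    exact hz.2 ▸ (hf z hz.1).2
  · exact hC g hg x

lemma mul_rpow_two_mul_le_one (hη : 0 < η) (hη1 : η ≤ 1) (ht : 0 ≤ t) (hc : 0 < c)
    (hcK : 6 * K * c ≤ 1) (h : (η ^ 3) ^ K * t ≤ 1) : η * t ^ (2 * c) ≤ 1 := by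
  calc η * t ^ (2 * c) = η ^ (1 : ℝ) * t ^ (2 * c) := by rw [Real.rpow_one]
    _ ≤ η ^ (6 * K * c) * t ^ (2 * c) :=
        mul_le_mul_of_nonneg_right (Real.rpow_le_rpow_of_exponent_ge hη hη1 hcK) (by positivity)
    _ = ((η ^ 3) ^ K * t) ^ (2 * c) := by
        rw [Real.mul_rpow (by positivity) ht, ← Real.rpow_natCast, ← Real.rpow_mul hη.le,
          ← Real.rpow_mul hη.le]
        push_cast
        ring_nf
    _ ≤ 1 := Real.rpow_le_one (by positivity) h (by positivity)

lemma max_rpow_mul_pow_four_le_one {K' : ℝ} (hη : 0 < η) (hη1 : η ≤ 1) (ht : 1 ≤ t) (hK : 1 ≤ K)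
    (hK' : 12 * K ≤ K') (h : (η ^ 3) ^ K * t ≤ 1) :
    (max η (t ^ (-(1 / 2) : ℝ))) ^ K' * t ^ 4 ≤ 1 := by
  have ht0 : 0 < t := by linarith
  rcases max_choice η (t ^ (-(1 / 2) : ℝ)) with hmax | hmax <;> rw [hmax]
  · calc η ^ K' * t ^ 4 ≤ η ^ (12 * K) * t ^ 4 :=
          mul_le_mul_of_nonneg_right (Real.rpow_le_rpow_of_exponent_ge hη hη1 hK') (by positivity)
      _ = ((η ^ 3) ^ K * t) ^ 4 := by
          rw [mul_pow, ← Real.rpow_natCast η 3, ← Real.rpow_mul hη.le,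
            ← Real.rpow_natCast (η ^ _) 4, ← Real.rpow_mul hη.le]
          push_cast
          ring_nf
      _ ≤ 1 := pow_le_one₀ (by positivity) h
  · rw [← Real.rpow_mul ht0.le, ← Real.rpow_natCast, ← Real.rpow_add ht0]
    exact Real.rpow_le_one_of_one_le_of_nonpos ht (by push_cast; linarith)

lemma LargeDegrees.of_rpow_neg_le {K' : ℝ} (hO : LargeDegrees O (η ^ 3) ((η ^ 3) ^ K) X)
    (hX' : X' ⊆ X) (hXX' : η * X.card ≤ X'.card) (hη : 0 < η) (hη1 : η ≤ 1) (ht : 0 < t)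
    (hc : 0 < c) (hc1 : c ≤ 8) (hK : 0 < K) (hK' : 24 / c * K ≤ K')
    (hηt : t ^ (-(4 / c)) ≤ η) :
    LargeDegrees O (max η (t ^ (-(1 / 2) : ℝ))) ((max η (t ^ (-(1 / 2) : ℝ))) ^ K') X' := by
  have hmax : max η (t ^ (-(1 / 2) : ℝ)) ≤ η ^ (c / 8) := by
    refine max_le ?_ ?_
    · simpa using Real.rpow_le_rpow_of_exponent_ge hη hη1 (show c / 8 ≤ 1 by linarith)
    · calc t ^ (-(1 / 2) : ℝ) = (t ^ (-(4 / c))) ^ (c / 8) := by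
            rw [← Real.rpow_mul ht.le]
            congr 1
            field_simp
            norm_num
        _ ≤ η ^ (c / 8) := by gcongr
  have hK'0 : 0 < K' := lt_of_lt_of_le (by positivity) hK'
  refine hO.mono hX' ?_ (mul_le_mul ?_ (by exact_mod_cast Finset.card_le_card hX')
    (by positivity) (by positivity))
  · calc η ^ 3 * X.card = η ^ 2 * (η * X.card) := by ring
      _ ≤ η * X'.card := by
          gcongr
          nlinarith
      _ ≤ _ := by
          gcongr
          exact le_max_left _ _
  · calc (max η (t ^ (-(1 / 2) : ℝ))) ^ K' ≤ (η ^ (c / 8)) ^ K' := by gcongr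
      _ = η ^ (c / 8 * K') := (Real.rpow_mul hη.le _ _).symm
      _ ≤ η ^ (3 * K) := by
          refine Real.rpow_le_rpow_of_exponent_ge hη hη1 ?_
          calc 3 * K = c / 8 * (24 / c * K) := by
                field_simp
                norm_num
            _ ≤ c / 8 * K' := by gcongr
      _ = (η ^ 3) ^ K := by exact_mod_cast Real.rpow_mul hη.le 3 K

lemma LargeDegrees.of_forall_not_isSparse {K' : ℝ}
    (hns : ∀ Y ⊆ X, Y.Nonempty → (X.card : ℝ) ≤ t * Y.card → ¬ IsSparse O (t ^ (-(4 / c))) Y)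
    (hX' : X' ⊆ X) (hX'0 : X'.Nonempty) (hXX' : (X.card : ℝ) ≤ t ^ (1 / 2 : ℝ) * X'.card)
    (ht : 1 ≤ t) (hK' : 8 / c + 1 ≤ K') :
    LargeDegrees O (t ^ (-(1 / 2) : ℝ)) ((t ^ (-(1 / 2) : ℝ)) ^ K') X' := by
  intro Y hY hYc
  have ht0 : 0 < t := by linarith
  have hX'pos : (0 : ℝ) < X'.card := by exact_mod_cast hX'0.card_pos
  have hY0 : (0 : ℝ) < Y.card := lt_of_lt_of_le (by positivity) hYc
  rw [Real.rpow_neg ht0.le, inv_mul_le_iff₀ (by positivity)] at hYc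
  by_contra! hsmall
  refine hns Y (hY.trans hX') (Finset.card_pos.1 (by exact_mod_cast hY0)) ?_ fun v hv =>
    (hsmall v hv).le.trans ?_
  · calc (X.card : ℝ) ≤ t ^ (1 / 2 : ℝ) * (t ^ (1 / 2 : ℝ) * Y.card) := hXX'.trans (by gcongr)
      _ = t * Y.card := by
          rw [← mul_assoc, ← Real.rpow_add ht0, add_halves, Real.rpow_one]
  · calc (t ^ (-(1 / 2) : ℝ)) ^ K' * X'.card
        ≤ (t ^ (-(1 / 2) : ℝ)) ^ K' * (t ^ (1 / 2 : ℝ) * Y.card) := by gcongr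
      _ = t ^ (-(1 / 2) * K' + 1 / 2) * Y.card := by
          rw [← Real.rpow_mul ht0.le, ← mul_assoc, ← Real.rpow_add ht0]
      _ ≤ t ^ (-(4 / c)) * Y.card := by
          gcongr
          have : 4 / c = 8 / c / 2 := by ring
          linarith

lemma HasComb.le_pow_four {t t' : ℕ} {C' : Finset (V → V)} (h : HasComb G C' (c / 2) X' t')
    (hX' : X' ⊆ X) (hC : C ⊆ C') (hc : 0 < c) (hmax : ∀ t', HasComb G C c X t' → t' ≤ t)
    (hXX' : (X.card : ℝ) ≤ (t : ℝ) ^ (2 * c) * X'.card) : t' ≤ t ^ 4 := by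
  by_contra! hlt
  have hpow : (t : ℝ) ^ (2 * c) ≤ (t' : ℝ) ^ (c / 2) :=
    calc (t : ℝ) ^ (2 * c) = ((t : ℝ) ^ 4) ^ (c / 2) := by
          rw [← Real.rpow_natCast, ← Real.rpow_mul (Nat.cast_nonneg _)]
          push_cast
          ring_nf
      _ ≤ (t' : ℝ) ^ (c / 2) := by
          gcongr
          exact_mod_cast hlt.le
  have hle := hmax t' (h.mono hX' hC (by linarith) (by linarith) (hXX'.trans (by
    rw [sub_half]
    gcongr)))
  exact absurd (hle.trans (Nat.le_self_pow (by norm_num) t)) (not_le.2 hlt)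

end Descent

section WidestStarComb

variable {V : Type*} {G O : SimpleGraph V} {C : Finset (V → V)} {X X' : Finset V} {f : V → V}
  {c η : ℝ}

open Classical in
lemma SmallClasses.insert_of_width_mul_le {S : StarComb O C X} {ζ : ℝ}
    (hC : SmallClasses C (η ^ 3) X) (hf : IsBlockMap S X' f) (hX' : X' ⊆ X) (hη : 0 < η)
    (hη1 : η ≤ 1) (ht : 2 ≤ S.teeth.card) (hc : c ≤ 1 / 2) (hXX' : η * X.card ≤ X'.card)
    (hw : (S.width : ℝ) * S.teeth.card ≤ (S.teeth.card : ℝ) ^ c * X'.card) (hηζ : η ≤ ζ)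
    (htζ : (S.teeth.card : ℝ) ^ (-(1 / 2) : ℝ) ≤ ζ) : SmallClasses (insert f C) ζ X' := by
  have ht' : (2 : ℝ) ≤ S.teeth.card := by exact_mod_cast ht
  have ht0 : (0 : ℝ) < S.teeth.card := by linarith
  refine (hC.mono hX' ?_).insert_of_width_le hf ?_
  · calc η ^ 3 * X.card = η ^ 2 * (η * X.card) := by ring
      _ ≤ ζ * X'.card := mul_le_mul (by nlinarith) hXX' (by positivity) (by linarith)
  · refine le_of_mul_le_mul_right (hw.trans ?_) ht0
    calc (S.teeth.card : ℝ) ^ c * X'.card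
        ≤ (S.teeth.card : ℝ) ^ (-(1 / 2) + 1 : ℝ) * X'.card := by
          gcongr
          · linarith
          · linarith
      _ = (S.teeth.card : ℝ) ^ (-(1 / 2) : ℝ) * X'.card * S.teeth.card := by
          rw [Real.rpow_add_one ht0.ne']
          ring
      _ ≤ ζ * X'.card * S.teeth.card := by gcongr

open Classical in
lemma Tame.exists_tame_blocks (hc : 0 < c) (hcK : 6 * K * c ≤ 1) (hK : 1 ≤ K) (j : ℕ) :
    ∃ ε₀ > (0 : ℝ), ∃ σ₀ > 0, ∀ {V : Type*} {G O : SimpleGraph V} {C : Finset (V → V)}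
      {X : Finset V} {σ σ' η : ℝ} {S : StarComb O C X}, C.card ≤ j → Tame G C X (η ^ 3) σ c K →
      0 < σ → σ ≤ σ₀ → 2 * σ ≤ σ' → 0 < η → η ≤ 1 / 2 → (O = G ∨ O = Gᶜ) →
      (X.card : ℝ) ≤ S.width * (S.teeth.card : ℝ) ^ (1 + c) →
      (∀ t, HasComb G C c X t → t ≤ S.teeth.card) → 2 ≤ S.teeth.card → 1 ≤ ε₀ * S.teeth.card →
      ∃ X' ⊆ X, ∃ f, IsBlockMap S X' f ∧
        Tame G (insert f C) X' (max η ((S.teeth.card : ℝ) ^ (-(1 / 2) : ℝ))) σ' (c / 2)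
          (32 / c * K) := by
  have hc6 : 6 * c ≤ 1 := by nlinarith
  obtain ⟨ε₀, hε₀, σ₀, hσ₀, hns⟩ := Tame.exists_not_isSparse hc (by linarith) hK j
  refine ⟨ε₀, hε₀, σ₀, hσ₀, fun {V G O C X σ σ' η S} hCj hX hσ hσσ₀ hσ' hη hη2 hO hw hmax ht2 hεt
    => ?_⟩
  obtain ⟨X', hX', f, hf, hcrit, hXX', hwX'⟩ := S.exists_critical_subset hX.critical hσ hσ' hw
    (Finset.card_pos.1 (by omega))
  refine ⟨X', hX', f, hf, ?_⟩
  have hηt := hX.card_teeth_le _ ⟨O, hO, S, rfl, hw⟩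
  set t := S.teeth.card
  have ht1 : (1 : ℝ) ≤ t := by exact_mod_cast one_le_two.trans ht2
  have hη1 : η ≤ 1 := by linarith
  have hηXX' : η * X.card ≤ X'.card :=
    calc η * X.card ≤ η * ((t : ℝ) ^ (2 * c) * X'.card) := by gcongr
      _ = η * (t : ℝ) ^ (2 * c) * X'.card := by ring
      _ ≤ X'.card := mul_le_of_le_one_left (by positivity)
          (mul_rpow_two_mul_le_one hη hη1 (by positivity) hc hcK hηt)
  have h1c : 6 ≤ 1 / c := by rwa [le_div_iff₀ hc]
  have hK' : 32 / c * K = 24 / c * K + 8 * (1 / c * K) := by ring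
  have hcK' : 1 / c ≤ 1 / c * K := le_mul_of_one_le_right (by positivity) hK
  refine ⟨hcrit, hX.smallClasses.insert_of_width_mul_le hf hX' hη hη1 ht2 (by linarith) hηXX' hwX'
    (le_max_left _ _) (le_max_right _ _), fun O' hO' => ?_, fun t' ht' => ?_⟩
  · rcases le_total ((t : ℝ) ^ (-(4 / c))) η with hηt' | hηt'
    · exact (hX.largeDegrees O' hO').of_rpow_neg_le hX' hηXX' hη hη1 (by positivity) hc
        (by linarith) (by linarith) (by rw [hK']; linarith [show 0 < 1 / c by positivity]) hηt'
    · rw [max_eq_right (hηt'.trans (Real.rpow_le_rpow_of_exponent_le ht1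
        (by linarith [show 4 / c = 4 * (1 / c) by ring])))]
      refine LargeDegrees.of_forall_not_isSparse (fun Y hY hY0 hXY => hns hCj hX hσ hσσ₀ hη hη2 hmax
        ht2 hεt hηt' hO' hY hY0 hXY) hX' hcrit.nonempty (hXX'.trans ?_) ht1 ?_
      · gcongr
        linarith
      · linarith [show 8 / c = 8 * (1 / c) by ring, show 24 / c * K = 24 * (1 / c * K) by ring]
  · have ht'4 : (t' : ℝ) ≤ (t : ℝ) ^ 4 := by
      exact_mod_cast ht'.le_pow_four hX' (Finset.subset_insert _ _) hc hmax hXX'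
    refine le_trans (by gcongr) (max_rpow_mul_pow_four_le_one hη hη1 ht1 hK ?_ hηt)
    calc 12 * K ≤ 32 * (1 / c) * K := by gcongr; linarith
      _ = 32 / c * K := by ring

end WidestStarComb

section TameDescent

variable {V : Type*} {G : SimpleGraph V} {C : Finset (V → V)} {X : Finset V} {c : ℝ} {t : ℕ}

open Classical in
lemma HasComb.exists_max (h : HasComb G C c X t) :
    ∃ t', t ≤ t' ∧ HasComb G C c X t' ∧ ∀ t'', HasComb G C c X t'' → t'' ≤ t' :=
  ⟨_, Nat.le_findGreatest h.le_card h, Nat.findGreatest_spec h.le_card h,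
    fun _ h'' => Nat.le_findGreatest h''.le_card h''⟩

open Classical in
lemma Tame.exists_tame_blocks_of_isSparse {K : ℝ} (hc : 0 < c) (hcK : 6 * K * c ≤ 1) (hK : 1 ≤ K)
    (j : ℕ) : ∃ ε₀ > 0, ∃ σ₀ > 0, ∀ {V : Type*} {G O : SimpleGraph V} {C : Finset (V → V)}
      {X : Finset V} {σ σ' η ε : ℝ}, C.card ≤ j → Tame G C X (η ^ 3) σ c K → 0 < σ → σ ≤ σ₀ →
      2 * σ ≤ σ' → 0 < η → η ≤ ε → ε ≤ ε₀ → (O = G ∨ O = Gᶜ) → IsSparse O ε X →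
      ∃ O', (O' = G ∨ O' = Gᶜ) ∧ ∃ S : StarComb O' C X, 1 ≤ ε * (S.teeth.card : ℝ) ^ 2 ∧
        ∃ X' ⊆ X, ∃ f, IsBlockMap S X' f ∧
          Tame G (insert f C) X' (max η ((S.teeth.card : ℝ) ^ (-(1 / 2) : ℝ))) σ' (c / 2)
            (32 / c * K) := by
  obtain ⟨ε₁, hε₁, σ₁, hσ₁, hcomb⟩ := Tame.exists_starComb hc (by nlinarith) hK j
  obtain ⟨ε₂, hε₂, σ₂, hσ₂, hblocks⟩ := Tame.exists_tame_blocks hc hcK hK j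
  refine ⟨min ε₁ (min (1 / 4) (ε₂ ^ 2)), by positivity, min σ₁ σ₂, by positivity,
    fun {V G O C X σ σ' η ε} hCj hX hσ hσσ₀ hσ' hη hηε hεε₀ hO hOX => ?_⟩
  simp only [le_min_iff] at hεε₀ hσσ₀
  obtain ⟨hεε₁, hε4, hεε₂⟩ := hεε₀
  have hε0 : 0 < ε := hη.trans_le hηε
  obtain ⟨S, hS, hSw⟩ := hcomb hCj hX hσ hσσ₀.1 hη (by linarith) hO subset_rfl
    hX.critical.nonempty hηε hεε₁ (mul_le_of_le_one_left (by positivity) (by linarith)) hOX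
  obtain ⟨t, hSt, ⟨O', hO', S', rfl, hw⟩, hmax⟩ :=
    HasComb.exists_max (t := S.teeth.card) ⟨O, hO, S, rfl, hSw⟩
  have hεt : 1 ≤ ε * (S'.teeth.card : ℝ) ^ 2 := hS.trans (by gcongr)
  have ht2 : (2 : ℝ) ≤ S'.teeth.card := by
    refine le_of_pow_le_pow_left₀ two_ne_zero (Nat.cast_nonneg _) ?_
    nlinarith [sq_nonneg (S'.teeth.card : ℝ)]
  have hε₂t : 1 ≤ ε₂ * S'.teeth.card := by
    refine le_of_pow_le_pow_left₀ two_ne_zero (by positivity) ?_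
    rw [one_pow, mul_pow]
    exact hεt.trans (by gcongr)
  exact ⟨O', hO', S', hεt, hblocks hCj hX hσ hσσ₀.2 hσ' hη (by linarith) hO' hw hmax
    (by exact_mod_cast ht2) hε₂t⟩

lemma exists_pow_six_eq {δ η₀ : ℝ} (hδ : 0 < δ) (hη₀ : 0 ≤ η₀) (hδη₀ : δ ≤ η₀ ^ 6) :
    ∃ η, 0 < η ∧ η ≤ η₀ ∧ (η ^ 3) ^ 2 = δ := by
  refine ⟨δ ^ (6 : ℝ)⁻¹, by positivity, ?_, ?_⟩
  · rw [Real.rpow_inv_le_iff_of_pos hδ.le hη₀ (by norm_num)]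
    exact_mod_cast hδη₀
  · rw [← pow_mul]
    exact_mod_cast Real.rpow_inv_natCast_pow hδ.le (n := 6) (by norm_num)

lemma rpow_neg_half_le {t δ : ℝ} (hδ : 0 < δ) (h : 1 ≤ δ ^ 4 * t ^ 2) (ht : 0 ≤ t) :
    t ^ (-(1 / 2) : ℝ) ≤ δ := by
  have ht0 : 0 < t := ht.lt_of_ne' (by rintro rfl; norm_num at h)
  have h1 : 1 ≤ δ ^ 2 * t := by
    refine le_of_pow_le_pow_left₀ two_ne_zero (by positivity) ?_
    linarith [show (δ ^ 2 * t) ^ 2 = δ ^ 4 * t ^ 2 by ring]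
  rw [Real.rpow_neg ht, ← Real.sqrt_eq_rpow, inv_le_comm₀ (by positivity) hδ]
  refine Real.le_sqrt_of_sq_le ?_
  rw [inv_pow, inv_le_iff_one_le_mul₀' (by positivity)]
  exact h1

lemma exists_isSparse_tame {U : Type*} [Finite U] (F : SimpleGraph U) {ε σ' c' K : ℝ}
    (hε : 0 < ε) (hσ' : 0 < σ') (hK : 1 ≤ K) (hc' : 0 < c') (hc : 2 * c' ≤ c) :
    ∃ σ > 0, ∃ δ₀ > 0, ∀ {V : Type*} {G : SimpleGraph V}, ¬ Nonempty (F ↪g G) →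
      ∀ {C : Finset (V → V)} {X : Finset V} {δ : ℝ}, 0 < δ → δ ≤ δ₀ → Tame G C X δ σ c K →
        ∃ X' ⊆ X, ∃ η > 0, η ≤ ε ∧ Tame G C X' (η ^ 3) σ' c' (2 * K) ∧
          ∃ O, (O = G ∨ O = Gᶜ) ∧ IsSparse O ε X' := by
  obtain ⟨D, hD, σ, hσ, hsparse⟩ := exists_isSparse_critical F hε hσ'
  have hD0 : 0 < D := by linarith
  refine ⟨σ, hσ, (min ε (min (1 / D) (1 / D ^ (2 / c)))) ^ 6, by positivity,
    fun {V G} hG {C X δ} hδ hδδ₀ hX => ?_⟩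
  obtain ⟨η, hη, hηle, rfl⟩ := exists_pow_six_eq hδ (by positivity) hδδ₀
  obtain ⟨hηε, hηD, hηD'⟩ : η ≤ ε ∧ η * D ≤ 1 ∧ η * D ^ (2 / c) ≤ 1 := by
    simpa only [le_min_iff, le_div_iff₀ hD0,
      le_div_iff₀ (show 0 < D ^ (2 / c) by positivity)] using hηle
  obtain ⟨X', hX', hcrit, hXX', O, hO, hOX'⟩ := hsparse G hG X hX.critical
  have hη1 : η ≤ 1 := (le_mul_of_one_le_right hη.le hD).trans hηD
  have hη3 : η ^ 3 ≤ η := pow_le_of_le_one hη.le hη1 three_ne_zero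
  exact ⟨X', hX', η, hη, hηε, hX.restrict hX' hcrit hXX' (by positivity) (hη3.trans hη1)
    (le_trans (by gcongr) hηD) hD0 (le_trans (by gcongr) hηD') hK hc' hc, O, hO, hOX'⟩

open Classical in
lemma Tame.exists_tame {U : Type*} [Finite U] (F : SimpleGraph U) {c₀ K : ℝ} (hc₀ : 0 < c₀)
    (hK : 1 ≤ K) (j : ℕ) : ∃ c > 0, ∃ K' ≥ 1, ∀ {σ' δ₁ : ℝ} (T : ℕ), 0 < σ' → 0 < δ₁ →
      ∃ σ > 0, ∃ δ₀ > 0, ∀ {V : Type*} {G : SimpleGraph V}, ¬ Nonempty (F ↪g G) →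
        ∀ {C : Finset (V → V)} {X : Finset V} {δ : ℝ}, C.card ≤ j → 0 < δ → δ ≤ δ₀ →
        Tame G C X δ σ c₀ K → ∃ O, (O = G ∨ O = Gᶜ) ∧ ∃ S : StarComb O C X, T ≤ S.teeth.card ∧
          ∃ X' ⊆ X, ∃ f, IsBlockMap S X' f ∧
            ∃ δ' > 0, δ' ≤ δ₁ ∧ Tame G (insert f C) X' δ' σ' c K' := by
  obtain ⟨c, hc, hcc₀, hcK⟩ : ∃ c > 0, c ≤ c₀ / 2 ∧ c ≤ 1 / (6 * (2 * K)) :=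
    ⟨min (c₀ / 2) (1 / (6 * (2 * K))), by positivity, min_le_left _ _, min_le_right _ _⟩
  rw [le_div_iff₀' (by positivity)] at hcc₀ hcK
  obtain ⟨ε₀, hε₀, σ₀, hσ₀, hstep⟩ :=
    Tame.exists_tame_blocks_of_isSparse hc hcK (by linarith) j
  refine ⟨c / 2, by positivity, 32 / c * (2 * K), ?_, fun {σ' δ₁} T hσ' hδ₁ => ?_⟩
  · rw [ge_iff_le, div_mul_eq_mul_div, one_le_div hc]
    nlinarith
  obtain ⟨ε, hε, hεε₀, hεT, hεδ₁, hεδ₁4⟩ :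
      ∃ ε > 0, ε ≤ ε₀ ∧ ε ≤ 1 / ((T : ℝ) + 1) ^ 2 ∧ ε ≤ δ₁ ∧ ε ≤ δ₁ ^ 4 :=
    ⟨min ε₀ (min (1 / ((T : ℝ) + 1) ^ 2) (min δ₁ (δ₁ ^ 4))), by positivity, by simp⟩
  obtain ⟨σ, hσ, δ₀, hδ₀, hsparse⟩ := exists_isSparse_tame F hε
    (show 0 < min σ₀ (σ' / 2) by positivity) hK hc hcc₀
  refine ⟨σ, hσ, δ₀, hδ₀, fun {V G} hG {C X δ} hCj hδ hδδ₀ hX => ?_⟩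
  obtain ⟨X₁, hX₁, η, hη, hηε, hX₁tame, O, hO, hOX₁⟩ := hsparse hG hδ hδδ₀ hX
  obtain ⟨O', hO', S, hS, X', hX', f, hf, htame⟩ := hstep (σ' := σ') hCj hX₁tame (by positivity)
    (min_le_left _ _) (by linarith [min_le_right σ₀ (σ' / 2)]) hη hηε hεε₀ hO hOX₁
  refine ⟨O', hO', S.mono hX₁ subset_rfl, ?_, X', hX'.trans hX₁, f, hf, _, by positivity,
    max_le (hηε.trans hεδ₁) (rpow_neg_half_le hδ₁ (hS.trans (by gcongr)) (by positivity)), htame⟩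
  have hT : ((T : ℝ) + 1) ^ 2 ≤ (S.teeth.card : ℝ) ^ 2 := by
    rw [le_div_iff₀ (by positivity)] at hεT
    exact le_of_mul_le_mul_left (hεT.trans hS) hε
  have := le_of_pow_le_pow_left₀ two_ne_zero (by positivity) hT
  exact_mod_cast (show (T : ℝ) ≤ S.teeth.card by linarith)

end TameDescent

section Rainbow

variable {V W : Type*} {G : SimpleGraph V} {H : SimpleGraph W} {C C' : Finset (V → V)}
  {X X' : Finset V} {S : StarComb G C X} {f : V → V} {A : Finset W} {φ : W → V} {u : W} {x a : V}

lemma IsBlockMap.adj_iff (hf : IsBlockMap S X' f) (hx : x ∈ X') (ha : a ∈ S.teeth) :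
    G.Adj a x ↔ f x = a := by
  obtain ⟨hfx, hxf⟩ := hf x hx
  refine ⟨fun hax => by_contra fun hne => S.not_adj _ hfx x hxf a ha (Ne.symm hne) hax, ?_⟩
  rintro rfl
  exact S.adj _ hfx x hxf

lemma IsBlockMap.tooth_ne (hf : IsBlockMap S X' f) (hx : x ∈ X') (ha : a ∈ S.teeth) : a ≠ x := by
  rintro rfl
  obtain ⟨hfx, hxf⟩ := hf a hx
  exact (S.center_block _ hfx a hxf).2 (S.adj_center a ha)

/-- The map `φ` embeds `H[A]` in `G[X]` as an induced subgraph on whose vertices every colouring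
in `C` is injective. -/
structure Rainbow (G : SimpleGraph V) (H : SimpleGraph W) (C : Finset (V → V)) (X : Finset V)
    (A : Finset W) (φ : W → V) : Prop where
  mem : ∀ w ∈ A, φ w ∈ X
  injOn : Set.InjOn φ A
  adj : ∀ w ∈ A, ∀ w' ∈ A, G.Adj (φ w) (φ w') ↔ H.Adj w w'
  colour : ∀ c ∈ C, Set.InjOn (c ∘ φ) A

lemma Rainbow.empty (G : SimpleGraph V) (H : SimpleGraph W) (C : Finset (V → V)) (X : Finset V)
    (φ : W → V) : Rainbow G H C X ∅ φ :=
  ⟨by simp, by simp, by simp, by simp⟩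

lemma Rainbow.mono (h : Rainbow G H C X A φ) (hX : X ⊆ X') (hC : C' ⊆ C) :
    Rainbow G H C' X' A φ :=
  ⟨fun w hw => hX (h.mem w hw), h.injOn, h.adj, fun c hc => h.colour c (hC hc)⟩

lemma Rainbow.compl (h : Rainbow G H C X A φ) : Rainbow Gᶜ Hᶜ C X A φ := by
  refine ⟨h.mem, h.injOn, fun w hw w' hw' => ?_, h.colour⟩
  rw [compl_adj, compl_adj, h.adj w hw w' hw', ne_eq, ne_eq, h.injOn.eq_iff hw hw']

open Classical in
lemma injOn_insert_comp_update (hu : u ∉ A) {g : V → V} (hg : Set.InjOn (g ∘ φ) A)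
    (ha : ∀ w ∈ A, g a ≠ g (φ w)) : Set.InjOn (g ∘ Function.update φ u a) (insert u A) := by
  have hcongr : Set.EqOn (g ∘ φ) (g ∘ Function.update φ u a) A := fun w hw => by
    rw [Function.comp_apply, Function.comp_apply,
      Function.update_of_ne (by rintro rfl; exact hu hw)]
  rw [Set.injOn_insert (by exact_mod_cast hu)]
  refine ⟨hg.congr hcongr, ?_⟩
  rintro ⟨w, hw, h⟩
  rw [← hcongr hw, Function.comp_apply, Function.comp_apply, Function.update_self] at h
  exact ha w hw h.symm

open Classical in
lemma Rainbow.update (h : Rainbow G H C X A φ) (hu : u ∉ A) (ha : a ∈ X)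
    (hadj : ∀ w ∈ A, G.Adj a (φ w) ↔ H.Adj u w) (hne : ∀ w ∈ A, a ≠ φ w)
    (hcol : ∀ c ∈ C, ∀ w ∈ A, c a ≠ c (φ w)) :
    Rainbow G H C X (insert u A) (Function.update φ u a) := by
  have hupd : ∀ w ∈ A, Function.update φ u a w = φ w := fun w hw =>
    Function.update_of_ne (by rintro rfl; exact hu hw) _ _
  refine ⟨?_, ?_, ?_, fun c hc => ?_⟩
  · simp only [Finset.forall_mem_insert, Function.update_self]
    exact ⟨ha, fun w hw => hupd w hw ▸ h.mem w hw⟩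
  · rw [Finset.coe_insert]
    exact injOn_insert_comp_update hu (g := id) h.injOn hne
  · simp only [Finset.forall_mem_insert, Function.update_self, SimpleGraph.irrefl, true_and]
    refine ⟨fun w hw => by rw [hupd w hw, hadj w hw], fun w hw => ⟨?_, fun w' hw' => ?_⟩⟩
    · rw [hupd w hw, G.adj_comm, H.adj_comm, hadj w hw]
    · rw [hupd w hw, hupd w' hw', h.adj w hw w' hw']
  · rw [Finset.coe_insert]
    exact injOn_insert_comp_update hu (h.colour c hc) (hcol c hc)

open Classical in
lemma Rainbow.exists_tooth (h : Rainbow G H (insert f C) X' A φ) (hf : IsBlockMap S X' f)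
    (hu : {w | w ∈ A ∧ H.Adj u w}.Subsingleton) (hA : A.card < S.teeth.card) :
    ∃ a ∈ S.teeth, ∀ w ∈ A, f (φ w) = a ↔ H.Adj u w := by
  by_cases hex : ∃ w ∈ A, H.Adj u w
  · obtain ⟨w, hw, huw⟩ := hex
    refine ⟨f (φ w), (hf _ (h.mem w hw)).1, fun w' hw' => ⟨fun heq => ?_, fun huw' => ?_⟩⟩
    · rwa [h.colour f (Finset.mem_insert_self _ _) hw' hw heq]
    · rw [hu ⟨hw, huw⟩ ⟨hw', huw'⟩]
  · push Not at hex
    obtain ⟨a, ha, hanot⟩ := Finset.exists_mem_notMem_of_card_lt_card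
      (Finset.card_image_le.trans_lt hA : (A.image (f ∘ φ)).card < _)
    refine ⟨a, ha, fun w hw => iff_of_false (fun heq => hanot ?_) (hex w hw)⟩
    exact Finset.mem_image.2 ⟨w, hw, heq⟩

open Classical in
lemma Rainbow.exists_insert (h : Rainbow G H (insert f C) X' A φ) (hf : IsBlockMap S X' f)
    (hX' : X' ⊆ X) (huA : u ∉ A) (hu : {w | w ∈ A ∧ H.Adj u w}.Subsingleton)
    (hA : A.card < S.teeth.card) : ∃ φ', Rainbow G H C X (insert u A) φ' := by
  obtain ⟨a, ha, hau⟩ := h.exists_tooth hf hu hA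
  refine ⟨_, (h.mono hX' (Finset.subset_insert _ _)).update huA (S.teeth_subset ha)
    (fun w hw => ?_) (fun w hw => hf.tooth_ne (h.mem w hw) ha) fun c hc w hw => ?_⟩
  · rw [hf.adj_iff (h.mem w hw) ha, hau w hw]
  · obtain ⟨hfw, hwf⟩ := hf _ (h.mem w hw)
    exact S.colour c hc a ha _ hfw _ hwf

lemma exists_subsingleton_adj_of_isAcyclic (hH : H.IsAcyclic) (hA : A.Nonempty) :
    ∃ u ∈ A, {w | w ∈ A ∧ H.Adj u w}.Subsingleton := by
  have hac := hH.induce (A : Set W)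
  have : Nonempty (A : Set W) := hA.to_subtype
  obtain ⟨u, v, p, hp, hmax⟩ := Walk.exists_isPath_forall_isPath_length_le_length
    (H.induce (A : Set W))
  have hsnd : ∀ w, (H.induce (A : Set W)).Adj u w → w = p.snd := fun w huw => by
    by_cases hw : w ∈ p.support
    · exact hac.eq_snd_of_adj_start hp huw hw
    · have := hmax _ _ (Walk.cons huw.symm p) (hp.cons hw)
      simp at this
  refine ⟨u, u.2, fun w hw w' hw' => ?_⟩
  exact congrArg Subtype.val ((hsnd ⟨w, hw.1⟩ hw.2).trans (hsnd ⟨w', hw'.1⟩ hw'.2).symm)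

end Rainbow

section RainbowForest

variable {V W : Type*} {G : SimpleGraph V} {H : SimpleGraph W}

lemma Tame.exists_rainbow {U : Type*} [Finite U] (F : SimpleGraph U) (hH : H.IsAcyclic)
    (A A' : Finset W) (c K : ℝ) (j : ℕ) (hc : 0 < c) (hK : 1 ≤ K) :
    ∃ σ > 0, ∃ δ₀ > 0, ∀ {V : Type*} {G : SimpleGraph V}, ¬ Nonempty (F ↪g G) →
      ∀ {C : Finset (V → V)} {X : Finset V} {δ : ℝ}, C.card ≤ j → 0 < δ → δ ≤ δ₀ →
        Tame G C X δ σ c K → (∃ φ, Rainbow G H C X A φ) ∨ ∃ φ, Rainbow Gᶜ H C X A' φ := by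
  classical
  induction hm : A.card + A'.card using Nat.strong_induction_on generalizing A A' c K j with
  | _ m ih =>
    subst hm
    rcases A.eq_empty_or_nonempty with rfl | hA
    · exact ⟨1, one_pos, 1, one_pos, fun {_ _} _ {_ _ _} _ _ _ hX =>
        Or.inl ⟨fun _ => hX.critical.nonempty.choose, .empty _ _ _ _ _⟩⟩
    rcases A'.eq_empty_or_nonempty with rfl | hA'
    · exact ⟨1, one_pos, 1, one_pos, fun {_ _} _ {_ _ _} _ _ _ hX =>
        Or.inr ⟨fun _ => hX.critical.nonempty.choose, .empty _ _ _ _ _⟩⟩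
    obtain ⟨u, hu, hleaf⟩ := exists_subsingleton_adj_of_isAcyclic hH hA
    obtain ⟨u', hu', hleaf'⟩ := exists_subsingleton_adj_of_isAcyclic hH hA'
    have hlt := Finset.card_erase_lt_of_mem hu
    have hlt' := Finset.card_erase_lt_of_mem hu'
    obtain ⟨c', hc', K', hK', hstep⟩ := Tame.exists_tame F hc hK j
    obtain ⟨σ₁, hσ₁, δ₁, hδ₁, h₁⟩ := ih _ (by omega) (A.erase u) A' c' K' (j + 1) hc' hK' rfl
    obtain ⟨σ₂, hσ₂, δ₂, hδ₂, h₂⟩ := ih _ (by omega) A (A'.erase u') c' K' (j + 1) hc' hK' rfl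
    obtain ⟨σ, hσ, δ₀, hδ₀, hσδ⟩ := hstep (A.card + A'.card) (lt_min hσ₁ hσ₂) (lt_min hδ₁ hδ₂)
    refine ⟨σ, hσ, δ₀, hδ₀, fun {V G} hG {C X δ} hC hδ hδδ₀ hX => ?_⟩
    obtain ⟨O, hO, S, hS, X', hX', f, hf, δ', hδ', hδ'le, htame⟩ := hσδ hG hC hδ hδδ₀ hX
    have hC' : (insert f C).card ≤ j + 1 := (Finset.card_insert_le _ _).trans (by omega)
    rw [le_min_iff] at hδ'le
    rcases hO with rfl | rfl
    · refine (h₁ hG hC' hδ' hδ'le.1 (htame.mono (lt_min hσ₁ hσ₂) (min_le_left _ _))).imp ?_ ?_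
      · rintro ⟨φ, hφ⟩
        rw [← Finset.insert_erase hu]
        exact hφ.exists_insert hf hX' (Finset.notMem_erase _ _)
          (hleaf.anti fun w hw => ⟨Finset.mem_of_mem_erase hw.1, hw.2⟩) (by omega)
      · exact fun ⟨φ, hφ⟩ => ⟨φ, hφ.mono hX' (Finset.subset_insert _ _)⟩
    · refine (h₂ hG hC' hδ' hδ'le.2 (htame.mono (lt_min hσ₁ hσ₂) (min_le_right _ _))).imp ?_ ?_
      · exact fun ⟨φ, hφ⟩ => ⟨φ, hφ.mono hX' (Finset.subset_insert _ _)⟩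
      · rintro ⟨φ, hφ⟩
        rw [← Finset.insert_erase hu']
        exact hφ.exists_insert hf hX' (Finset.notMem_erase _ _)
          (hleaf'.anti fun w hw => ⟨Finset.mem_of_mem_erase hw.1, hw.2⟩) (by omega)

variable {C : Finset (V → V)} {X X' : Finset V} {S : StarComb G C X} {f : V → V} {φ : W → V}

lemma IsBlockMap.injective_sumElim (hf : IsBlockMap S X' f) (hX' : ∀ w, φ w ∈ X')
    (hφ : Function.Injective (f ∘ φ)) :
    Function.Injective (Sum.elim φ (Sum.elim (f ∘ φ) fun _ : Unit => S.center)) := by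
  have hT : ∀ w, f (φ w) ∈ S.teeth := fun w => (hf _ (hX' w)).1
  have hcenter : ∀ w, S.center ≠ φ w := fun w => (S.center_block _ (hT w) _ (hf _ (hX' w)).2).1
  refine hφ.of_comp.sumElim (hφ.sumElim (Function.injective_of_subsingleton _)
    fun w _ => (S.adj_center _ (hT w)).ne') ?_
  rintro w (w' | -)
  · exact (hf.tooth_ne (hX' w) (hT w')).symm
  · exact (hcenter w).symm

lemma Rainbow.nonempty_starExpansion_embedding [Fintype W]
    (h : Rainbow G H {f} X' Finset.univ φ) (hf : IsBlockMap S X' f) :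
    Nonempty (starExpansion H ↪g G) := by
  have hX' : ∀ w, φ w ∈ X' := fun w => h.mem w (Finset.mem_univ w)
  have hT : ∀ w, f (φ w) ∈ S.teeth := fun w => (hf _ (hX' w)).1
  have hinj : Function.Injective (f ∘ φ) := by
    simpa using h.colour f (Finset.mem_singleton_self f)
  have hH : ∀ w w', G.Adj (φ w) (φ w') ↔ H.Adj w w' := fun w w' =>
    h.adj w (Finset.mem_univ w) w' (Finset.mem_univ w')
  have htooth : ∀ w w', G.Adj (f (φ w)) (φ w') ↔ w' = w := fun w w' => by
    rw [hf.adj_iff (hX' w') (hT w)]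
    exact hinj.eq_iff
  have hteeth : ∀ w w', ¬ G.Adj (f (φ w)) (f (φ w')) := fun w w' hadj =>
    S.stable (hT w) (hT w') hadj.ne hadj
  have hcenter : ∀ w, G.Adj S.center (f (φ w)) := fun w => S.adj_center _ (hT w)
  have hcenter' : ∀ w, ¬ G.Adj S.center (φ w) := fun w =>
    (S.center_block _ (hT w) _ (hf _ (hX' w)).2).2
  refine ⟨⟨⟨_, hf.injective_sumElim hX' hinj⟩, fun {x y} => ?_⟩⟩
  rcases x with w | w | _ <;> rcases y with w' | w' | _
  · simpa [starExpansion, hH, H.adj_comm w' w] using H.ne_of_adj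
  all_goals simp [starExpansion, htooth, hteeth, hcenter, hcenter', G.adj_comm (φ _) (f _),
    G.adj_comm _ S.center]

end RainbowForest

section MainArgument

variable {V W : Type*} {G : SimpleGraph V} {H : SimpleGraph W} {X : Finset V} {σ : ℝ}

lemma indepNumOn_le_alphaNum [Finite V] (G : SimpleGraph V) (X : Finset V) :
    indepNumOn G X ≤ alphaNum G := by
  obtain ⟨I, -, hI, hc⟩ := exists_card_eq_indepNumOn G X
  rw [← hc]
  exact IsClique.card_le_cliqueNum (tc := by rwa [isClique_compl])

lemma kappaOn_le_max_sq [Finite V] (G : SimpleGraph V) (X : Finset V) :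
    kappaOn G X ≤ max (alphaNum G) (omegaNum G) ^ 2 := by
  have hω : indepNumOn Gᶜ X ≤ omegaNum G := by
    simpa only [alphaNum, omegaNum, compl_compl] using indepNumOn_le_alphaNum Gᶜ X
  rw [sq]
  exact Nat.mul_le_mul ((indepNumOn_le_alphaNum G X).trans (le_max_left _ _))
    (hω.trans (le_max_right _ _))

lemma two_le_indepNumOn {a b : V} (ha : a ∈ X) (hb : b ∈ X) (hne : a ≠ b) (hab : ¬ G.Adj a b) :
    2 ≤ indepNumOn G X := by
  classical
  rw [← Finset.card_pair hne]
  exact card_le_indepNumOn (by simp [Finset.insert_subset_iff, ha, hb])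
    (by simp [IsIndepSet, Set.pairwise_insert, hab, G.adj_comm b a])

lemma two_le_kappaOn (G : SimpleGraph V) (h : 2 ≤ X.card) : 2 ≤ kappaOn G X := by
  obtain ⟨a, ha, b, hb, hne⟩ := Finset.one_lt_card.1 h
  by_cases hab : G.Adj a b
  · exact (two_le_indepNumOn ha hb hne (by simp [hab])).trans
      (Nat.le_mul_of_pos_left _ (indepNumOn_pos _ ⟨a, ha⟩))
  · exact (two_le_indepNumOn ha hb hne hab).trans
      (Nat.le_mul_of_pos_right _ (indepNumOn_pos _ ⟨a, ha⟩))

lemma indepNumOn_le_kappaOn {O : SimpleGraph V} (hO : O = G ∨ O = Gᶜ) (hX : X.Nonempty) :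
    indepNumOn O X ≤ kappaOn G X := by
  rcases hO with rfl | rfl
  · exact Nat.le_mul_of_pos_right _ (indepNumOn_pos _ hX)
  · exact Nat.le_mul_of_pos_left _ (indepNumOn_pos _ hX)

lemma exists_adj_of_indepNumOn_lt_card {Y : Finset V} (hY : Y ⊆ X)
    (h : indepNumOn G X < Y.card) : ∃ a ∈ Y, ∃ b ∈ Y, G.Adj a b := by
  by_contra! hY'
  exact h.not_ge (card_le_indepNumOn hY fun a ha b hb _ => hY' a ha b hb)

lemma Critical.tame {δ : ℝ} (hX : Critical G σ X) (hδ : δ ^ 4 * X.card ≤ 1)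
    (hκ : kappaOn G X < δ * X.card) : Tame G ∅ X δ σ 1 4 := by
  refine ⟨hX, by simp [SmallClasses], fun O hO Y hY hXY => ?_, fun t ht => ?_⟩
  · have hOY : (indepNumOn O X : ℝ) < Y.card :=
      ((Nat.cast_le.2 (indepNumOn_le_kappaOn hO hX.nonempty)).trans_lt hκ).trans_le hXY
    obtain ⟨a, ha, b, hb, hab⟩ := exists_adj_of_indepNumOn_lt_card hY (by exact_mod_cast hOY)
    have hpos : 0 < (neighborsIn O Y a).card := Finset.card_pos.2 ⟨b, mem_neighborsIn.2 ⟨hb, hab⟩⟩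
    rw [Real.rpow_ofNat]
    exact ⟨a, ha, hδ.trans (by exact_mod_cast hpos)⟩
  · rw [Real.rpow_ofNat]
    exact (mul_le_mul_of_nonneg_left (Nat.cast_le.2 ht.le_card)
      (Even.pow_nonneg (by decide) δ)).trans hδ

lemma exists_rpow_lt_two {A b : ℝ} (hA : 0 < A) (hb : 0 < b) : ∃ s > 0, s ≤ b ∧ A ^ s < 2 := by
  have hlim := (Real.continuousAt_const_rpow (b := 0) hA.ne').eventually_lt_const
    (show A ^ (0 : ℝ) < 2 by norm_num)
  obtain ⟨s, ⟨hs2, hs⟩, hs0⟩ :=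
    ((hlim.and (eventually_le_nhds hb)).filter_mono nhdsWithin_le_nhds |>.and
      (self_mem_nhdsWithin (s := Set.Ioi (0 : ℝ)))).exists
  exact ⟨s, hs0, hs, hs2⟩

lemma lt_card_of_kappaOn_lt {A s : ℝ} (hX : X.Nonempty) (hs : 0 < s) (hA : 0 < A) (hAs : A ^ s < 2)
    (hκ : kappaOn G X < (X.card : ℝ) ^ s) : A < X.card := by
  have hX2 : 2 ≤ X.card := by
    by_contra! hlt
    rw [show X.card = 1 by have := hX.card_pos; omega, Nat.cast_one, Real.one_rpow,
      Nat.cast_lt_one] at hκ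
    exact (kappaOn_pos G hX).ne' hκ
  have hκ2 : (2 : ℝ) ≤ kappaOn G X := by exact_mod_cast two_le_kappaOn G hX2
  exact (Real.rpow_lt_rpow_iff hA.le (Nat.cast_nonneg _) hs).1 (hAs.trans (hκ2.trans_lt hκ))

lemma exists_critical_kappaOn_lt [Fintype V] {s : ℝ} (hs : 0 < s)
    (hlt : ((max (alphaNum G) (omegaNum G) : ℕ) : ℝ) < (Fintype.card V : ℝ) ^ (s / 2)) :
    ∃ X, Critical G s X ∧ kappaOn G X < (X.card : ℝ) ^ s := by
  rcases isEmpty_or_nonempty V with hV | hV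
  · rw [Fintype.card_eq_zero, Nat.cast_zero, Real.zero_rpow (by positivity)] at hlt
    exact absurd hlt (not_lt.2 (Nat.cast_nonneg _))
  obtain ⟨X, -, hX, hXV⟩ := exists_critical_subset G hs (Finset.univ_nonempty (α := V))
  rw [Finset.card_univ] at hXV
  have hVs : 0 < (Fintype.card V : ℝ) ^ s := by positivity
  have hXs : 0 < (X.card : ℝ) ^ s :=
    Real.rpow_pos_of_pos (by exact_mod_cast hX.nonempty.card_pos) _
  have hκV : (kappaOn G Finset.univ : ℝ) < (Fintype.card V : ℝ) ^ s :=
    calc (kappaOn G Finset.univ : ℝ) ≤ ((max (alphaNum G) (omegaNum G) : ℕ) : ℝ) ^ 2 := by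
          exact_mod_cast kappaOn_le_max_sq G Finset.univ
      _ < ((Fintype.card V : ℝ) ^ (s / 2)) ^ 2 := by gcongr
      _ = (Fintype.card V : ℝ) ^ s := by
          rw [← Real.rpow_mul_natCast (Nat.cast_nonneg _), Nat.cast_ofNat,
            div_mul_cancel₀ _ two_ne_zero]
  refine ⟨X, hX, lt_of_mul_lt_mul_left (hXV.trans_lt ?_) hVs.le⟩
  rw [mul_comm ((Fintype.card V : ℝ) ^ s)]
  gcongr

lemma exists_tame_of_max_lt {δ₀ : ℝ} (hσ : 0 < σ) (hδ₀ : 0 < δ₀) :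
    ∃ τ > (0 : ℝ), ∀ {V : Type*} [Fintype V] {G : SimpleGraph V},
      ((max (alphaNum G) (omegaNum G) : ℕ) : ℝ) < (Fintype.card V : ℝ) ^ τ →
        ∃ X, ∃ δ > 0, δ ≤ δ₀ ∧ Tame G ∅ X δ σ 1 4 := by
  obtain ⟨s, hs, hsσ, hs2⟩ := exists_rpow_lt_two (show 0 < δ₀ ^ (-4 : ℝ) by positivity)
    (show 0 < min σ (3 / 4) by positivity)
  rw [le_min_iff] at hsσ
  refine ⟨s / 2, by positivity, fun {V _ G} hlt => ?_⟩
  obtain ⟨X, hX, hκ⟩ := exists_critical_kappaOn_lt hs hlt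
  have hx : (0 : ℝ) < X.card := by exact_mod_cast hX.nonempty.card_pos
  refine ⟨X, (X.card : ℝ) ^ (-4 : ℝ)⁻¹, by positivity, ?_, (hX.mono hs hsσ.1).tame ?_ ?_⟩
  · rw [Real.rpow_inv_le_iff_of_neg hx hδ₀ (by norm_num)]
    exact (lt_card_of_kappaOn_lt hX.nonempty hs (by positivity) hs2 hκ).le
  · rw [← Real.rpow_mul_natCast hx.le, ← Real.rpow_add_one hx.ne']
    norm_num
  · rw [← Real.rpow_add_one hx.ne']
    exact hκ.trans_le (Real.rpow_le_rpow_of_exponent_le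
      (by exact_mod_cast hX.nonempty.card_pos) (by linarith))

lemma exists_rainbow_of_tame [Fintype W] {U : Type*} [Finite U] (F : SimpleGraph U)
    (hH : H.IsAcyclic) : ∃ σ > 0, ∃ δ₀ > 0, ∀ {V : Type*} {G : SimpleGraph V},
      ¬ Nonempty (F ↪g G) → ∀ {X : Finset V} {δ : ℝ}, 0 < δ → δ ≤ δ₀ → Tame G ∅ X δ σ 1 4 →
        ∃ O, (O = G ∨ O = Gᶜ) ∧ ∃ S : StarComb O ∅ X, ∃ X' f φ, IsBlockMap S X' f ∧
          (Rainbow G H {f} X' Finset.univ φ ∨ Rainbow Gᶜ H {f} X' Finset.univ φ) := by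
  obtain ⟨c, hc, K, hK, hstep⟩ := Tame.exists_tame F one_pos (show (1 : ℝ) ≤ 4 by norm_num) 0
  obtain ⟨σ', hσ', δ₁, hδ₁, hrain⟩ :=
    Tame.exists_rainbow F hH Finset.univ Finset.univ c K 1 hc hK
  obtain ⟨σ, hσ, δ₀, hδ₀, hσδ⟩ := hstep 0 hσ' hδ₁
  refine ⟨σ, hσ, δ₀, hδ₀, fun {V G} hG {X δ} hδ hδδ₀ hX => ?_⟩
  obtain ⟨O, hO, S, -, X', -, f, hf, δ', hδ', hδ'δ₁, hX'⟩ := hσδ hG (by simp) hδ hδδ₀ hX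
  refine ⟨O, hO, S, X', f, ?_⟩
  obtain ⟨φ, hφ⟩ | ⟨φ, hφ⟩ := hrain hG (by simp) hδ' hδ'δ₁ hX'
  exacts [⟨φ, hf, Or.inl hφ⟩, ⟨φ, hf, Or.inr hφ⟩]

lemma nonempty_compl_embedding {U : Type*} {F : SimpleGraph U} (h : Nonempty (F ↪g Gᶜ)) :
    Nonempty (Fᶜ ↪g G) := by
  obtain ⟨e⟩ := h
  exact ⟨by simpa using Embedding.complEquiv e⟩

lemma IsBlockMap.nonempty_starExpansion_embedding [Fintype W] {O : SimpleGraph V}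
    {C : Finset (V → V)} {S : StarComb O C X} {X' : Finset V} {f : V → V} {φ : W → V}
    (hf : IsBlockMap S X' f) (hO : O = G ∨ O = Gᶜ)
    (h : Rainbow G H {f} X' Finset.univ φ ∨ Rainbow Gᶜ H {f} X' Finset.univ φ) :
    Nonempty (starExpansion H ↪g G) ∨ Nonempty (starExpansion Hᶜ ↪g G) ∨
      Nonempty ((starExpansion H)ᶜ ↪g G) ∨ Nonempty ((starExpansion Hᶜ)ᶜ ↪g G) := by
  rcases hO with rfl | rfl <;> rcases h with h | h
  · exact .inl (h.nonempty_starExpansion_embedding hf)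
  · have h' := h.compl
    rw [compl_compl] at h'
    exact .inr (.inl (h'.nonempty_starExpansion_embedding hf))
  · have h' := nonempty_compl_embedding (h.compl.nonempty_starExpansion_embedding hf)
    exact .inr (.inr (.inr h'))
  · exact .inr (.inr (.inl (nonempty_compl_embedding (h.nonempty_starExpansion_embedding hf))))

end MainArgument

/-- For a forest `H`, with `H₁` the star-expansion of `H` and `H₂` the star-expansion of
`H̄`, the set `{H₁, H₂, H̄₁, H̄₂}` has the Erdős–Hajnal property. -/
theorem stmt_12 {W : Type*} [Fintype W] (H : SimpleGraph W) (hH : H.IsAcyclic) :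
    ∃ τ : ℝ, 0 < τ ∧
      ∀ (V : Type) [Fintype V] (G : SimpleGraph V),
        ¬ Nonempty (starExpansion H ↪g G) →
        ¬ Nonempty (starExpansion Hᶜ ↪g G) →
        ¬ Nonempty ((starExpansion H)ᶜ ↪g G) →
        ¬ Nonempty ((starExpansion Hᶜ)ᶜ ↪g G) →
        (Fintype.card V : ℝ) ^ τ ≤ ((max (alphaNum G) (omegaNum G) : ℕ) : ℝ) := by
  obtain ⟨σ, hσ, δ₀, hδ₀, hrainbow⟩ := exists_rainbow_of_tame (starExpansion H) hH
  obtain ⟨τ, hτ, htame⟩ := exists_tame_of_max_lt hσ hδ₀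
  refine ⟨τ, hτ, fun V _ G h₁ h₂ h₃ h₄ => ?_⟩
  by_contra! hlt
  obtain ⟨X, δ, hδ, hδδ₀, hX⟩ := htame hlt
  obtain ⟨O, hO, S, X', f, φ, hf, hφ⟩ := hrainbow h₁ hδ hδδ₀ hX
  have hcopy := hf.nonempty_starExpansion_embedding hO hφ
  tauto
end
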